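/- arXiv:1711.02504 — 2 statements merged into one kernel-verified Lean document; each statement's English description precedes it below -/
import Mathlib

section
/- Let (p_n) be a sequence of integers with p_n ≥ 2 for all n and p_n → ∞, let (κ_n) be a sequence in (0,∞), and for each n let θ_{n0} be a unit vector in ℝ^{p_n}. For each n let X_{n1},…,X_{nn} be i.i.d. with distribution FvML_{p_n}(θ_{n0},κ_n), and define X̄_n := (1/n) Σ_{i=1}^{n} X_{ni}, the Watson statistic W_n := n(p_n−1) X̄_n'(I − θ_{n0}θ_{n0}')X̄_n / (1 − (1/n) Σ_{i=1}^{n} (X_{ni}'θ_{n0})²), W̃_n := (W_n − (p_n−1))/√(2(p_n−1)), and Z_n := √n (X̄_n'θ_{n0} − e₁(p_n,κ_n))/√(ẽ₂(p_n,κ_n)). Then the law of the pair (W̃_n, Z_n) ∈ ℝ² under the n-fold product of FvML_{p_n}(θ_{n0},κ_n) converges weakly, as n → ∞, to the standard bivariate normal distribution (the product of two standard Gaussian measures on ℝ). -/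
open MeasureTheory Metric intervalIntegral Filter ProbabilityTheory
open scoped RealInnerProductSpace

/-- The surface-area measure on the unit sphere of `ℝ^p`. -/
noncomputable def sphereSurface (p : ℕ) :
    Measure (sphere (0 : EuclideanSpace ℝ (Fin p)) 1) :=
  (volume : Measure (EuclideanSpace ℝ (Fin p))).toSphere

/-- The Fisher–von Mises–Langevin distribution `FvML_p(θ,κ)`: the probability measure on
the unit sphere with density `x ↦ exp(κ x'θ) / ∫ exp(κ y'θ) dσ(y)` with respect to the
surface-area measure `σ`. -/
noncomputable def fvml (p : ℕ) (θ : EuclideanSpace ℝ (Fin p)) (κ : ℝ) :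
    Measure (sphere (0 : EuclideanSpace ℝ (Fin p)) 1) :=
  (sphereSurface p).withDensity fun x =>
    ENNReal.ofReal (Real.exp (κ * ⟪(x : EuclideanSpace ℝ (Fin p)), θ⟫) /
      ∫ y : sphere (0 : EuclideanSpace ℝ (Fin p)) 1,
        Real.exp (κ * ⟪(y : EuclideanSpace ℝ (Fin p)), θ⟫) ∂(sphereSurface p))

/-- `mInt p κ ℓ = ∫_{-1}^1 u^ℓ (1-u²)^{(p-3)/2} exp(κ u) du`. -/
noncomputable def mInt (p : ℕ) (κ : ℝ) (ℓ : ℕ) : ℝ :=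
  ∫ u in (-1 : ℝ)..1, u ^ ℓ * (1 - u ^ 2) ^ (((p : ℝ) - 3) / 2) * Real.exp (κ * u)

/-- `e₁(p,κ) = E[U]` under `FvML_p(θ,κ)`. -/
noncomputable def e1 (p : ℕ) (κ : ℝ) : ℝ := mInt p κ 1 / mInt p κ 0

/-- `e₂(p,κ) = E[U²]` under `FvML_p(θ,κ)`. -/
noncomputable def e2 (p : ℕ) (κ : ℝ) : ℝ := mInt p κ 2 / mInt p κ 0

/-- `ẽ₂(p,κ) = Var[U]` under `FvML_p(θ,κ)`. -/
noncomputable def etilde2 (p : ℕ) (κ : ℝ) : ℝ := e2 p κ - (e1 p κ) ^ 2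

/-!
Write `X_i = U_i θ + √(1 - U_i²) S_i` with `U_i` the latitude and `S_i` uniform on the unit sphere
of the hyperplane `θᗮ`. The pairs `(U_i, S_i)` are independent with independent coordinates, and
`S_i = Y_i / ‖Y_i‖` for a standard Gaussian vector `Y_i` of `θᗮ`.

With `V_i = √(1 - U_i²)`, the Watson statistic is `(p - 1) ‖∑ V_i S_i‖² / ∑ V_i²`. Since `‖Y_i‖²`
concentrates around `p - 1`, it is close to `‖∑ V_i Y_i‖² / ∑ V_i²`: given the latitudes, the
standardized difference has second moment at most `16 / (p - 1) + 2 ∑ V_i⁴ / (∑ V_i²)²`. The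
replacement is a chi-square variable with `p - 1` degrees of freedom whatever the latitudes are,
so it is independent of them, and hence of `Z`; once standardized it is asymptotically normal.

What remains concerns the latitudes only: a central limit theorem for `Z` and the smallness of
`∑ V_i⁴ / (∑ V_i²)²`, uniformly in `p` and `κ`. Both follow from moment bounds whose constants do
not depend on the parameters, which hold because the density `(1 - u²)^((p-3)/2) exp(κ u)` of the
latitude is log-concave.
-/

/-- A continuous nonnegative weight on the line whose ratios `f (x + s) / f x` decrease in `x`.
For positive `f` this is concavity of `log f`; the product form also allows zeros. -/
structure IsLogConcaveWeight (f : ℝ → ℝ) : Prop where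
  continuous : Continuous f
  nonneg : ∀ x, 0 ≤ f x
  add_mul_le : ∀ ⦃x y s⦄, y ≤ x → 0 ≤ s → f (x + s) * f y ≤ f x * f (y + s)

lemma integral_integral_det_mul_det {f g h k : ℝ → ℝ} (hf : Continuous f) (hg : Continuous g)
    (hh : Continuous h) (hk : Continuous k) (a b : ℝ) :
    ∫ x in a..b, ∫ y in a..b, (f x * g y - g x * f y) * (h x * k y - k x * h y) =
      2 * ((∫ x in a..b, f x * h x) * (∫ x in a..b, g x * k x) -
        (∫ x in a..b, f x * k x) * ∫ x in a..b, g x * h x) := by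
  have expand : ∀ x y, (f x * g y - g x * f y) * (h x * k y - k x * h y) =
      (f x * h x * (g y * k y) - f x * k x * (g y * h y)) -
        (g x * h x * (f y * k y) - g x * k x * (f y * h y)) := fun x y => by ring
  have int : ∀ {φ : ℝ → ℝ}, Continuous φ → IntervalIntegrable φ volume a b :=
    fun hφ => hφ.intervalIntegrable a b
  have inner : ∀ x, ∫ y in a..b, (f x * g y - g x * f y) * (h x * k y - k x * h y) =
      (f x * h x * (∫ y in a..b, g y * k y) - f x * k x * ∫ y in a..b, g y * h y) -
        (g x * h x * (∫ y in a..b, f y * k y) - g x * k x * ∫ y in a..b, f y * h y) := by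
    intro x
    simp only [expand]
    rw [intervalIntegral.integral_sub (int (by fun_prop)) (int (by fun_prop)),
      intervalIntegral.integral_sub (int (by fun_prop)) (int (by fun_prop)),
      intervalIntegral.integral_sub (int (by fun_prop)) (int (by fun_prop))]
    simp only [intervalIntegral.integral_const_mul]
  simp only [inner]
  rw [intervalIntegral.integral_sub (int (by fun_prop)) (int (by fun_prop)),
    intervalIntegral.integral_sub (int (by fun_prop)) (int (by fun_prop)),
    intervalIntegral.integral_sub (int (by fun_prop)) (int (by fun_prop))]
  simp only [intervalIntegral.integral_mul_const]
  ring

lemma integral_mul_integral_le_of_det_mul_det_nonpos {f g h k : ℝ → ℝ} (hf : Continuous f)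
    (hg : Continuous g) (hh : Continuous h) (hk : Continuous k) {a b : ℝ} (hab : a ≤ b)
    (hle : ∀ x ∈ Set.Icc a b, ∀ y ∈ Set.Icc a b,
      (f x * g y - g x * f y) * (h x * k y - k x * h y) ≤ 0) :
    (∫ x in a..b, f x * h x) * (∫ x in a..b, g x * k x) ≤
      (∫ x in a..b, f x * k x) * ∫ x in a..b, g x * h x := by
  have hint : ∫ x in a..b, ∫ y in a..b, -((f x * g y - g x * f y) * (h x * k y - k x * h y)) ≥ 0 :=
    intervalIntegral.integral_nonneg hab fun x hx =>
      intervalIntegral.integral_nonneg hab fun y hy => neg_nonneg.2 (hle x hx y hy)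
  simp only [intervalIntegral.integral_neg, integral_integral_det_mul_det hf hg hh hk] at hint
  linarith

lemma sq_integral_id_mul_le {f : ℝ → ℝ} (hf : Continuous f) (h0 : ∀ x, 0 ≤ f x) {a b : ℝ}
    (hab : a ≤ b) :
    (∫ x in a..b, x * f x) ^ 2 ≤ (∫ x in a..b, x ^ 2 * f x) * ∫ x in a..b, f x := by
  have h := integral_mul_integral_le_of_det_mul_det_nonpos (f := fun x => x * f x) (g := f)
    (h := fun _ => 1) (k := fun x => x) (by fun_prop) hf (by fun_prop) (by fun_prop) hab
    fun x _ y _ => by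
      have := mul_nonneg (mul_nonneg (h0 x) (h0 y)) (sq_nonneg (x - y))
      linarith
  have hsq : ∀ x, x * f x * x = x ^ 2 * f x := fun x => by ring
  simp only [mul_one, hsq] at h
  simp only [mul_comm (f _) _] at h
  rw [sq]
  exact h

namespace IsLogConcaveWeight

variable {f g : ℝ → ℝ}

lemma comp_const_add (hf : IsLogConcaveWeight f) (c : ℝ) :
    IsLogConcaveWeight fun x => f (c + x) where
  continuous := hf.continuous.comp (by fun_prop)
  nonneg _ := hf.nonneg _
  add_mul_le x y s hyx hs := by
    simpa only [add_assoc] using hf.add_mul_le (add_le_add_right hyx c) hs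

lemma comp_const_sub (hf : IsLogConcaveWeight f) (c : ℝ) :
    IsLogConcaveWeight fun x => f (c - x) where
  continuous := hf.continuous.comp (by fun_prop)
  nonneg _ := hf.nonneg _
  add_mul_le x y s hyx hs := by
    have h := hf.add_mul_le (x := c - (y + s)) (y := c - (x + s)) (by linarith) hs
    rw [show c - (y + s) + s = c - y by ring, show c - (x + s) + s = c - x by ring] at h
    linarith

lemma mul (hf : IsLogConcaveWeight f) (hg : IsLogConcaveWeight g) :
    IsLogConcaveWeight fun x => f x * g x where
  continuous := hf.continuous.mul hg.continuous
  nonneg x := mul_nonneg (hf.nonneg x) (hg.nonneg x)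
  add_mul_le x y s hyx hs := by
    have h := mul_le_mul (hf.add_mul_le hyx hs) (hg.add_mul_le hyx hs)
      (mul_nonneg (hg.nonneg _) (hg.nonneg _)) (mul_nonneg (hf.nonneg _) (hf.nonneg _))
    simpa only [mul_mul_mul_comm] using h

lemma rpow_const (hf : IsLogConcaveWeight f) {r : ℝ} (hr : 0 ≤ r) :
    IsLogConcaveWeight fun x => f x ^ r where
  continuous := hf.continuous.rpow_const fun _ => Or.inr hr
  nonneg x := Real.rpow_nonneg (hf.nonneg x) r
  add_mul_le x y s hyx hs := by
    simp only [← Real.mul_rpow (hf.nonneg _) (hf.nonneg _)]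
    exact Real.rpow_le_rpow (mul_nonneg (hf.nonneg _) (hf.nonneg _)) (hf.add_mul_le hyx hs) hr

lemma exp_const_mul (κ : ℝ) : IsLogConcaveWeight fun x => Real.exp (κ * x) where
  continuous := by fun_prop
  nonneg _ := (Real.exp_pos _).le
  add_mul_le x y s _ _ := by
    simp only [← Real.exp_add]
    exact (congrArg Real.exp (by ring)).le

lemma max_one_sub_sq_zero : IsLogConcaveWeight fun x => max (1 - x ^ 2) 0 where
  continuous := by fun_prop
  nonneg _ := le_max_right _ _
  add_mul_le x y s hyx hs := by
    rcases le_or_gt (1 - (x + s) ^ 2) 0 with h | hxs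
    · rw [max_eq_right h, zero_mul]
      positivity
    rcases le_or_gt (1 - y ^ 2) 0 with h | hy
    · rw [max_eq_right h, mul_zero]
      positivity
    rw [max_eq_left hxs.le, max_eq_left hy.le]
    have hy1 : |y| < 1 := (sq_lt_one_iff_abs_lt_one y).1 (by linarith)
    have hxs1 : |x + s| < 1 := (sq_lt_one_iff_abs_lt_one _).1 (by linarith)
    rw [abs_lt] at hy1 hxs1
    have hx : 0 ≤ (1 - x) * (1 + x) := mul_nonneg (by linarith) (by linarith)
    have hys : 0 ≤ (1 - (y + s)) * (1 + (y + s)) := mul_nonneg (by linarith) (by linarith)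
    have hgap : 0 ≤ s * (x - y) := mul_nonneg hs (by linarith)
    have hfactor : (1 - x ^ 2) * (1 - (y + s) ^ 2) - (1 - (x + s) ^ 2) * (1 - y ^ 2) =
        s * (x - y) * (2 + x * (y + s) + (x + s) * y) := by ring
    have hsum : 0 ≤ 2 + x * (y + s) + (x + s) * y := by nlinarith [hx, hys]
    refine le_trans ?_ (mul_le_mul (le_max_left _ _) (le_max_left _ _) (by linarith)
      (le_max_right _ _))
    linarith [hfactor, mul_nonneg hgap hsum]

lemma integral_tail_mul_le (hf : IsLogConcaveWeight f) {x y L : ℝ} (hyx : y ≤ x) (hxL : x ≤ L) :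
    (∫ t in x..L, f t) * f y ≤ f x * ∫ t in y..L, f t := by
  have int := fun a b => hf.continuous.intervalIntegrable (μ := volume) a b
  have shift : ∀ z, ∫ t in z..z + (L - x), f t = ∫ s in (0 : ℝ)..L - x, f (z + s) := fun z => by
    rw [intervalIntegral.integral_comp_add_left (fun t => f t) z, add_zero]
  calc (∫ t in x..L, f t) * f y = ∫ s in (0 : ℝ)..L - x, f (x + s) * f y := by
        rw [intervalIntegral.integral_mul_const, ← shift, add_sub_cancel]
    _ ≤ ∫ s in (0 : ℝ)..L - x, f x * f (y + s) := by
        have hcont := hf.continuous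
        exact intervalIntegral.integral_mono_on (by linarith)
          (Continuous.intervalIntegrable (by fun_prop) _ _)
          (Continuous.intervalIntegrable (by fun_prop) _ _) fun s hs => hf.add_mul_le hyx hs.1
    _ = f x * ∫ t in y..y + (L - x), f t := by rw [intervalIntegral.integral_const_mul, shift]
    _ ≤ f x * ∫ t in y..L, f t := by
        refine mul_le_mul_of_nonneg_left ?_ (hf.nonneg x)
        exact intervalIntegral.integral_mono_interval le_rfl (by linarith) (by linarith)
          (ae_of_all _ hf.nonneg) (int _ _)

end IsLogConcaveWeight

lemma integral_pow_succ_mul_eq_integral_tail {f : ℝ → ℝ} (hf : Continuous f) (k : ℕ) (L : ℝ) :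
    ∫ x in (0 : ℝ)..L, x ^ (k + 1) * f x =
      (k + 1) * ∫ x in (0 : ℝ)..L, x ^ k * ∫ t in x..L, f t := by
  have htail : ∀ x, HasDerivAt (fun x => -∫ t in x..L, f t) (f x) x := fun x =>
    ((intervalIntegral.integral_hasDerivAt_left (hf.intervalIntegrable x L)
      (hf.stronglyMeasurableAtFilter _ _) hf.continuousAt).neg).congr_deriv (neg_neg _)
  have hpow : ∀ x : ℝ, HasDerivAt (fun x => x ^ (k + 1)) ((k + 1) * x ^ k) x := fun x => by
    simpa using hasDerivAt_pow (k + 1) x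
  rw [intervalIntegral.integral_mul_deriv_eq_deriv_mul (fun x _ => hpow x) (fun x _ => htail x)
    (Continuous.intervalIntegrable (by fun_prop) _ _) (hf.intervalIntegrable _ _)]
  simp [mul_assoc]

namespace IsLogConcaveWeight

variable {f : ℝ → ℝ}

lemma integral_pow_succ_mul_integral_le (hf : IsLogConcaveWeight f) (k : ℕ) {L : ℝ} (hL : 0 ≤ L) :
    (∫ x in (0 : ℝ)..L, x ^ (k + 1) * f x) * (∫ x in (0 : ℝ)..L, f x) ≤
      (k + 1) * ((∫ x in (0 : ℝ)..L, x ^ k * f x) * ∫ x in (0 : ℝ)..L, x * f x) := by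
  have hcont := hf.continuous
  let T : ℝ → ℝ := fun x => ∫ t in x..L, f t
  have hT : Continuous T := by
    have hsymm : T = fun x => -∫ t in L..x, f t :=
      funext fun x => intervalIntegral.integral_symm L x
    rw [hsymm]
    exact (intervalIntegral.continuous_primitive
      (fun a b => hcont.intervalIntegrable (μ := volume) a b) L).neg
  have htail : ∀ {x y}, y ≤ x → x ≤ L → T x * f y ≤ f x * T y := hf.integral_tail_mul_le
  have hcomp := integral_mul_integral_le_of_det_mul_det_nonpos (h := fun x => x ^ k)
    (k := fun _ => 1) hT hcont (by fun_prop) (by fun_prop) hL fun x hx y hy => by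
      simp only [mul_one, one_mul]
      rcases le_total y x with hyx | hxy
      · exact mul_nonpos_of_nonpos_of_nonneg (by linarith [htail hyx hx.2])
          (sub_nonneg.2 (pow_le_pow_left₀ hy.1 hyx k))
      · exact mul_nonpos_of_nonneg_of_nonpos (by linarith [htail hxy hy.2])
          (sub_nonpos.2 (pow_le_pow_left₀ hx.1 hxy k))
  have hM1 : ∫ x in (0 : ℝ)..L, x * f x = ∫ x in (0 : ℝ)..L, T x := by
    simpa using integral_pow_succ_mul_eq_integral_tail hcont 0 L
  simp only [mul_one, mul_comm _ (_ ^ _)] at hcomp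
  rw [integral_pow_succ_mul_eq_integral_tail hcont, hM1, mul_assoc,
    mul_comm (∫ x in _.._, _ ^ k * f x)]
  exact mul_le_mul_of_nonneg_left hcomp (by positivity)

lemma integral_pow_four_mul_integral_le (hf : IsLogConcaveWeight f) {L : ℝ} (hL : 0 ≤ L) :
    (∫ x in (0 : ℝ)..L, x ^ 4 * f x) * (∫ x in (0 : ℝ)..L, f x) ≤
      12 * (∫ x in (0 : ℝ)..L, x ^ 2 * f x) ^ 2 := by
  have h3 := hf.integral_pow_succ_mul_integral_le 3 hL
  have h2 := hf.integral_pow_succ_mul_integral_le 2 hL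
  have hCS := sq_integral_id_mul_le hf.continuous hf.nonneg hL
  have nonneg : ∀ k, 0 ≤ ∫ x in (0 : ℝ)..L, x ^ k * f x := fun k =>
    intervalIntegral.integral_nonneg hL fun x hx => mul_nonneg (pow_nonneg hx.1 k) (hf.nonneg x)
  have n0 := nonneg 0
  have n1 := nonneg 1
  have n2 := nonneg 2
  norm_num at h3 h2 n0 n1
  set M0 := ∫ x in (0 : ℝ)..L, f x
  set M1 := ∫ x in (0 : ℝ)..L, x * f x
  set M2 := ∫ x in (0 : ℝ)..L, x ^ 2 * f x
  set M3 := ∫ x in (0 : ℝ)..L, x ^ 3 * f x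
  set M4 := ∫ x in (0 : ℝ)..L, x ^ 4 * f x
  rcases n0.eq_or_lt with h0 | h0
  · rw [← h0, mul_zero]
    positivity
  have hchain : M4 * M0 * M0 ≤ 12 * M2 ^ 2 * M0 :=
    calc M4 * M0 * M0 ≤ 4 * (M3 * M1) * M0 := by gcongr
      _ = 4 * (M3 * M0) * M1 := by ring
      _ ≤ 4 * (3 * (M2 * M1)) * M1 := by gcongr
      _ = 12 * M2 * M1 ^ 2 := by ring
      _ ≤ 12 * M2 * (M2 * M0) := by gcongr
      _ = 12 * M2 ^ 2 * M0 := by ring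
  exact le_of_mul_le_mul_right hchain h0

lemma integral_sub_pow_four_right_mul_le (hf : IsLogConcaveWeight f) {c b : ℝ} (hcb : c ≤ b) :
    (∫ x in c..b, (x - c) ^ 4 * f x) * (∫ x in c..b, f x) ≤
      12 * (∫ x in c..b, (x - c) ^ 2 * f x) ^ 2 := by
  have h := (hf.comp_const_add c).integral_pow_four_mul_integral_le (sub_nonneg.2 hcb)
  have shift : ∀ k : ℕ, ∫ x in (0 : ℝ)..b - c, x ^ k * f (c + x) =
      ∫ x in c..b, (x - c) ^ k * f x := fun k => by
    simpa using intervalIntegral.integral_comp_add_left (fun x => (x - c) ^ k * f x) c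
      (a := 0) (b := b - c)
  have h0 := shift 0
  simp only [pow_zero, one_mul] at h0
  rwa [shift, shift, h0] at h

lemma integral_sub_pow_four_left_mul_le (hf : IsLogConcaveWeight f) {a c : ℝ} (hac : a ≤ c) :
    (∫ x in a..c, (x - c) ^ 4 * f x) * (∫ x in a..c, f x) ≤
      12 * (∫ x in a..c, (x - c) ^ 2 * f x) ^ 2 := by
  have h := (hf.comp_const_sub 0).integral_sub_pow_four_right_mul_le (neg_le_neg hac)
  have reflect : ∀ k : ℕ, Even k → ∫ x in -c..-a, (x - -c) ^ k * f (0 - x) =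
      ∫ x in a..c, (x - c) ^ k * f x := fun k hk => by
    rw [← intervalIntegral.integral_comp_neg]
    refine intervalIntegral.integral_congr fun x _ => ?_
    simp only [zero_sub, neg_neg]
    rw [← hk.neg_pow]
    ring_nf
  have h0 := reflect 0 (by decide)
  simp only [pow_zero, one_mul] at h0
  rwa [reflect 4 (by decide), reflect 2 (by decide), h0] at h

end IsLogConcaveWeight

lemma exists_integral_eq_half {f : ℝ → ℝ} (hf : Continuous f) (h0 : ∀ x, 0 ≤ f x) {a b : ℝ}
    (hab : a ≤ b) :
    ∃ c ∈ Set.Icc a b, ∫ x in a..c, f x = (∫ x in a..b, f x) / 2 ∧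
      ∫ x in c..b, f x = (∫ x in a..b, f x) / 2 := by
  have int := fun a b => hf.intervalIntegrable (μ := volume) a b
  have hM : 0 ≤ ∫ x in a..b, f x := intervalIntegral.integral_nonneg hab fun x _ => h0 x
  obtain ⟨c, hc, hhalf⟩ := intermediate_value_Icc hab
    (intervalIntegral.continuous_primitive int a).continuousOn
    (show (∫ x in a..b, f x) / 2 ∈ Set.Icc (∫ x in a..a, f x) (∫ x in a..b, f x) by
      rw [intervalIntegral.integral_same]
      constructor <;> linarith)
  refine ⟨c, hc, hhalf, ?_⟩
  have hadd := intervalIntegral.integral_add_adjacent_intervals (int a c) (int c b)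
  linarith

lemma sq_sub_median_mul_integral_le {f : ℝ → ℝ} (hf : Continuous f) (h0 : ∀ x, 0 ≤ f x)
    {a b c : ℝ} (hc : c ∈ Set.Icc a b) (hleft : ∫ x in a..c, f x = (∫ x in a..b, f x) / 2)
    (hright : ∫ x in c..b, f x = (∫ x in a..b, f x) / 2) (e : ℝ) :
    (c - e) ^ 2 * (∫ x in a..b, f x) ≤ 2 * ∫ x in a..b, (x - e) ^ 2 * f x := by
  have int : ∀ a b, IntervalIntegrable (fun x => (x - e) ^ 2 * f x) volume a b :=
    fun a b => Continuous.intervalIntegrable (by fun_prop) a b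
  have beyond : ∀ a' b', a' ≤ b' → (∀ x ∈ Set.Icc a' b', (c - e) ^ 2 ≤ (x - e) ^ 2) →
      (c - e) ^ 2 * (∫ x in a'..b', f x) ≤ ∫ x in a'..b', (x - e) ^ 2 * f x := by
    intro a' b' hab' hle
    rw [← intervalIntegral.integral_const_mul]
    exact intervalIntegral.integral_mono_on hab' (Continuous.intervalIntegrable (by fun_prop) _ _)
      (int _ _) fun x hx => mul_le_mul_of_nonneg_right (hle x hx) (h0 x)
  have nonneg : ∀ a' b', a' ≤ b' → 0 ≤ ∫ x in a'..b', (x - e) ^ 2 * f x := fun a' b' hab' =>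
    intervalIntegral.integral_nonneg hab' fun x _ => mul_nonneg (sq_nonneg _) (h0 x)
  have hadd := intervalIntegral.integral_add_adjacent_intervals (int a c) (int c b)
  rcases le_total e c with hec | hce
  · have h := beyond c b hc.2 fun x hx => by
      have := hx.1
      gcongr
    rw [hright] at h
    linarith [nonneg a c hc.1]
  · have h := beyond a c hc.1 fun x hx => by
      nlinarith [hx.2]
    rw [hleft] at h
    linarith [nonneg c b hc.2]

lemma IsLogConcaveWeight.integral_sub_median_pow_four_mul_le {f : ℝ → ℝ}
    (hf : IsLogConcaveWeight f) {a b c : ℝ} (hc : c ∈ Set.Icc a b)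
    (hleft : ∫ x in a..c, f x = (∫ x in a..b, f x) / 2)
    (hright : ∫ x in c..b, f x = (∫ x in a..b, f x) / 2) :
    (∫ x in a..b, (x - c) ^ 4 * f x) * (∫ x in a..b, f x) ≤
      24 * (∫ x in a..b, (x - c) ^ 2 * f x) ^ 2 := by
  have hcont := hf.continuous
  have split : ∀ k : ℕ, (∫ x in a..c, (x - c) ^ k * f x) + ∫ x in c..b, (x - c) ^ k * f x =
      ∫ x in a..b, (x - c) ^ k * f x := fun k =>
    intervalIntegral.integral_add_adjacent_intervals
      (Continuous.intervalIntegrable (by fun_prop) _ _)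
      (Continuous.intervalIntegrable (by fun_prop) _ _)
  have nonneg : ∀ a' b', a' ≤ b' → 0 ≤ ∫ x in a'..b', (x - c) ^ 2 * f x := fun a' b' hab' =>
    intervalIntegral.integral_nonneg hab' fun x _ => mul_nonneg (sq_nonneg _) (hf.nonneg x)
  have hl := hf.integral_sub_pow_four_left_mul_le hc.1
  have hr := hf.integral_sub_pow_four_right_mul_le hc.2
  rw [hleft] at hl
  rw [hright] at hr
  have hcross := mul_nonneg (nonneg a c hc.1) (nonneg c b hc.2)
  rw [← split 4, ← split 2]
  linarith

lemma integral_sub_pow_mul_le_of_even {f : ℝ → ℝ} (hf : Continuous f) (h0 : ∀ x, 0 ≤ f x)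
    {a b : ℝ} (hab : a ≤ b) {k : ℕ} (hk : Even k) (c e : ℝ) :
    ∫ x in a..b, (x - c) ^ k * f x ≤
      2 ^ (k - 1) * ((∫ x in a..b, (x - e) ^ k * f x) + (e - c) ^ k * ∫ x in a..b, f x) := by
  rw [← intervalIntegral.integral_const_mul, ← intervalIntegral.integral_add
    (Continuous.intervalIntegrable (by fun_prop) _ _)
    (Continuous.intervalIntegrable (by fun_prop) _ _), ← intervalIntegral.integral_const_mul]
  refine intervalIntegral.integral_mono_on hab (Continuous.intervalIntegrable (by fun_prop) _ _)
    (Continuous.intervalIntegrable (by fun_prop) _ _) fun x _ => ?_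
  rw [← add_mul, ← mul_assoc, ← sub_add_sub_cancel x e c]
  exact mul_le_mul_of_nonneg_right hk.add_pow_le (h0 x)

/-- Half of the mass lies on either side of a median `c`, so `(c - e) ^ 2` is at most twice the
second moment about `e`; hence moments may be compared about `c`, one side at a time. -/
lemma IsLogConcaveWeight.integral_sub_pow_four_mul_le {f : ℝ → ℝ} (hf : IsLogConcaveWeight f)
    {a b : ℝ} (hab : a ≤ b) (e : ℝ) :
    (∫ x in a..b, (x - e) ^ 4 * f x) * (∫ x in a..b, f x) ≤
      6944 * (∫ x in a..b, (x - e) ^ 2 * f x) ^ 2 := by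
  have hcont := hf.continuous
  obtain ⟨c, hc, hleft, hright⟩ := exists_integral_eq_half hcont hf.nonneg hab
  have hmedian := sq_sub_median_mul_integral_le hcont hf.nonneg hc hleft hright e
  have hfour := hf.integral_sub_median_pow_four_mul_le hc hleft hright
  have nonneg : ∀ c, 0 ≤ ∫ x in a..b, (x - c) ^ 2 * f x := fun c =>
    intervalIntegral.integral_nonneg hab fun x _ => mul_nonneg (sq_nonneg _) (hf.nonneg x)
  have hM : 0 ≤ ∫ x in a..b, f x := intervalIntegral.integral_nonneg hab fun x _ => hf.nonneg x
  have recenter_two := integral_sub_pow_mul_le_of_even hcont hf.nonneg hab even_two c e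
  have recenter_four := integral_sub_pow_mul_le_of_even hcont hf.nonneg hab (by decide : Even 4) e c
  rw [← neg_sub c e, neg_sq] at recenter_two
  norm_num at recenter_two recenter_four
  set M := ∫ x in a..b, f x
  set S := ∫ x in a..b, (x - e) ^ 2 * f x
  have hSc : ∫ x in a..b, (x - c) ^ 2 * f x ≤ 6 * S := by linarith
  calc _ ≤ 8 * ((∫ x in a..b, (x - c) ^ 4 * f x) + (c - e) ^ 4 * M) * M := by gcongr
    _ = 8 * ((∫ x in a..b, (x - c) ^ 4 * f x) * M) + 8 * ((c - e) ^ 2 * M) ^ 2 := by ring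
    _ ≤ 8 * (24 * (∫ x in a..b, (x - c) ^ 2 * f x) ^ 2) + 8 * (2 * S) ^ 2 := by gcongr
    _ ≤ 8 * (24 * (6 * S) ^ 2) + 8 * (2 * S) ^ 2 := by
        gcongr
        exact nonneg c
    _ = 6944 * S ^ 2 := by ring

/-- The weight `(1 - u²)^((p-3)/2) exp (κ u)` of `mInt`, with `1 - u²` truncated at `0` so that
for `p ≥ 3` it is log-concave on the whole line. -/
noncomputable def fvmlWeight (p : ℕ) (κ u : ℝ) : ℝ :=
  max (1 - u ^ 2) 0 ^ (((p : ℝ) - 3) / 2) * Real.exp (κ * u)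

lemma one_sub_sq_nonneg_of_mem_Icc {u : ℝ} (hu : u ∈ Set.Icc (-1 : ℝ) 1) : 0 ≤ 1 - u ^ 2 := by
  nlinarith [hu.1, hu.2]

lemma fvmlWeight_of_mem_Icc (p : ℕ) (κ : ℝ) {u : ℝ} (hu : u ∈ Set.Icc (-1 : ℝ) 1) :
    fvmlWeight p κ u = (1 - u ^ 2) ^ (((p : ℝ) - 3) / 2) * Real.exp (κ * u) := by
  rw [fvmlWeight, max_eq_left (one_sub_sq_nonneg_of_mem_Icc hu)]

lemma fvmlWeight_eq_mul_exp (p : ℕ) (κ u : ℝ) :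
    fvmlWeight p κ u = fvmlWeight p 0 u * Real.exp (κ * u) := by
  simp only [fvmlWeight, zero_mul, Real.exp_zero, mul_one]

lemma fvmlWeight_pos (p : ℕ) (κ : ℝ) {u : ℝ} (hu : u ∈ Set.Ioo (-1 : ℝ) 1) :
    0 < fvmlWeight p κ u := by
  have hu2 : 0 < 1 - u ^ 2 := by nlinarith [hu.1, hu.2]
  rw [fvmlWeight, max_eq_left hu2.le]
  positivity

lemma isLogConcaveWeight_fvmlWeight {p : ℕ} (hp : 3 ≤ p) (κ : ℝ) :
    IsLogConcaveWeight (fvmlWeight p κ) := by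
  have hp' : (3 : ℝ) ≤ p := by exact_mod_cast hp
  exact (IsLogConcaveWeight.max_one_sub_sq_zero.rpow_const (by linarith)).mul
    (IsLogConcaveWeight.exp_const_mul κ)

lemma mInt_eq_integral_fvmlWeight (p : ℕ) (κ : ℝ) (l : ℕ) :
    mInt p κ l = ∫ u in (-1 : ℝ)..1, u ^ l * fvmlWeight p κ u := by
  refine intervalIntegral.integral_congr fun u hu => ?_
  rw [Set.uIcc_of_le (by norm_num)] at hu
  simp only [fvmlWeight_of_mem_Icc p κ hu, mul_assoc]

lemma mInt_zero_eq (p : ℕ) (κ : ℝ) : mInt p κ 0 = ∫ u in (-1 : ℝ)..1, fvmlWeight p κ u := by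
  simp only [mInt_eq_integral_fvmlWeight, pow_zero, one_mul]

section Moments

variable {p : ℕ} (hp : 3 ≤ p) (κ : ℝ)
include hp

lemma mInt_zero_pos : 0 < mInt p κ 0 := by
  rw [mInt_zero_eq]
  exact intervalIntegral_pos_of_pos_on
    ((isLogConcaveWeight_fvmlWeight hp κ).continuous.intervalIntegrable _ _)
    (fun u hu => fvmlWeight_pos p κ hu) (by norm_num)

lemma integral_sub_e1_mul_fvmlWeight :
    ∫ u in (-1 : ℝ)..1, (u - e1 p κ) * fvmlWeight p κ u = 0 := by
  have hcont := (isLogConcaveWeight_fvmlWeight hp κ).continuous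
  have expand : ∫ u in (-1 : ℝ)..1, (u - e1 p κ) * fvmlWeight p κ u =
      mInt p κ 1 - e1 p κ * mInt p κ 0 := by
    simp only [mInt_eq_integral_fvmlWeight, sub_mul, pow_one, pow_zero, one_mul]
    rw [intervalIntegral.integral_sub (Continuous.intervalIntegrable (by fun_prop) _ _)
      (Continuous.intervalIntegrable (by fun_prop) _ _), intervalIntegral.integral_const_mul]
  rw [expand, e1, div_mul_cancel₀ _ (mInt_zero_pos hp κ).ne', sub_self]

lemma integral_sub_e1_sq_mul_fvmlWeight :
    ∫ u in (-1 : ℝ)..1, (u - e1 p κ) ^ 2 * fvmlWeight p κ u = etilde2 p κ * mInt p κ 0 := by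
  have hcont := (isLogConcaveWeight_fvmlWeight hp κ).continuous
  have h0 := mInt_zero_pos hp κ
  have expand : ∫ u in (-1 : ℝ)..1, (u - e1 p κ) ^ 2 * fvmlWeight p κ u =
      mInt p κ 2 - 2 * e1 p κ * mInt p κ 1 + e1 p κ ^ 2 * mInt p κ 0 := by
    simp only [mInt_eq_integral_fvmlWeight]
    rw [← intervalIntegral.integral_const_mul, ← intervalIntegral.integral_const_mul,
      ← intervalIntegral.integral_sub, ← intervalIntegral.integral_add]
    · congr 1 with u
      ring
    all_goals exact Continuous.intervalIntegrable (by fun_prop) _ _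
  rw [expand, etilde2, e2, e1]
  field_simp
  ring

lemma etilde2_pos : 0 < etilde2 p κ := by
  have hcont := (isLogConcaveWeight_fvmlWeight hp κ).continuous
  obtain ⟨c, hc, hne⟩ : ∃ c ∈ Set.Ioo (-1 : ℝ) 1, c ≠ e1 p κ :=
    (Set.Ioo_infinite (by norm_num)).exists_notMem_finset {e1 p κ} |>.imp fun c hc =>
      ⟨hc.1, by simpa using hc.2⟩
  have hpos : 0 < ∫ u in (-1 : ℝ)..1, (u - e1 p κ) ^ 2 * fvmlWeight p κ u :=
    intervalIntegral.integral_pos (by norm_num) (by fun_prop)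
      (fun u _ => mul_nonneg (sq_nonneg _) ((isLogConcaveWeight_fvmlWeight hp κ).nonneg u))
      ⟨c, Set.Ioo_subset_Icc_self hc,
        mul_pos (even_two.pow_pos (sub_ne_zero.2 hne)) (fvmlWeight_pos p κ hc)⟩
  rw [integral_sub_e1_sq_mul_fvmlWeight hp] at hpos
  exact pos_of_mul_pos_left hpos (mInt_zero_pos hp κ).le

lemma integral_sub_e1_pow_four_mul_fvmlWeight_le :
    ∫ u in (-1 : ℝ)..1, (u - e1 p κ) ^ 4 * fvmlWeight p κ u ≤
      6944 * etilde2 p κ ^ 2 * mInt p κ 0 := by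
  have h := (isLogConcaveWeight_fvmlWeight hp κ).integral_sub_pow_four_mul_le
    (show (-1 : ℝ) ≤ 1 by norm_num) (e1 p κ)
  rw [← mInt_zero_eq, integral_sub_e1_sq_mul_fvmlWeight hp] at h
  refine le_of_mul_le_mul_right (h.trans_eq ?_) (mInt_zero_pos hp κ)
  ring

end Moments

/-- Integrate the derivative of `(1 - u²)^a exp (κ u)`, which vanishes at `±1`. -/
lemma integral_mul_one_sub_sq_rpow_mul_exp {a : ℝ} (ha : 1 ≤ a) (κ : ℝ) :
    2 * a * ∫ u in (-1 : ℝ)..1, u * ((1 - u ^ 2) ^ (a - 1) * Real.exp (κ * u)) =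
      κ * ∫ u in (-1 : ℝ)..1, (1 - u ^ 2) ^ a * Real.exp (κ * u) := by
  have cont : ∀ {r : ℝ}, 0 ≤ r → Continuous fun u : ℝ => (1 - u ^ 2) ^ r := fun hr =>
    Continuous.rpow_const (by fun_prop) fun _ => Or.inr hr
  have c1 := cont (sub_nonneg.2 ha)
  have c2 := cont (by linarith : 0 ≤ a)
  have hderiv : ∀ u : ℝ, HasDerivAt (fun u : ℝ => (1 - u ^ 2) ^ a * Real.exp (κ * u))
      (κ * ((1 - u ^ 2) ^ a * Real.exp (κ * u)) -
        2 * a * (u * ((1 - u ^ 2) ^ (a - 1) * Real.exp (κ * u)))) u := fun u => by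
    have hbase : HasDerivAt (fun u : ℝ => 1 - u ^ 2) (-(2 * u)) u := by
      simpa using (hasDerivAt_pow 2 u).const_sub 1
    have hexp : HasDerivAt (fun u : ℝ => Real.exp (κ * u)) (Real.exp (κ * u) * κ) u := by
      simpa using ((hasDerivAt_id u).const_mul κ).exp
    exact ((hbase.rpow_const (Or.inr ha)).mul hexp).congr_deriv (by ring)
  have hint := intervalIntegral.integral_eq_sub_of_hasDerivAt (a := -1) (b := 1)
    (fun u _ => hderiv u) (Continuous.intervalIntegrable (by fun_prop) _ _)
  rw [intervalIntegral.integral_sub (Continuous.intervalIntegrable (by fun_prop) _ _)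
    (Continuous.intervalIntegrable (by fun_prop) _ _), intervalIntegral.integral_const_mul,
    intervalIntegral.integral_const_mul] at hint
  norm_num [Real.zero_rpow (by linarith : a ≠ 0)] at hint
  linarith

lemma integral_mul_one_sub_sq_pow_mul_fvmlWeight {p : ℕ} (hp : 3 ≤ p) (κ : ℝ) (k : ℕ) :
    (p - 1 + 2 * k) * ∫ u in (-1 : ℝ)..1, u * ((1 - u ^ 2) ^ k * fvmlWeight p κ u) =
      κ * ∫ u in (-1 : ℝ)..1, (1 - u ^ 2) ^ (k + 1) * fvmlWeight p κ u := by
  have hp' : (3 : ℝ) ≤ p := by exact_mod_cast hp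
  have absorb : ∀ (j : ℕ), ∀ u ∈ Set.Icc (-1 : ℝ) 1, (1 - u ^ 2) ^ j * fvmlWeight p κ u =
      (1 - u ^ 2) ^ (((p : ℝ) - 3) / 2 + j) * Real.exp (κ * u) := fun j u hu => by
    rw [fvmlWeight_of_mem_Icc p κ hu, ← mul_assoc, add_comm, Real.rpow_add_of_nonneg
      (one_sub_sq_nonneg_of_mem_Icc hu) (Nat.cast_nonneg j) (by linarith), Real.rpow_natCast]
  have h := integral_mul_one_sub_sq_rpow_mul_exp (a := ((p : ℝ) - 3) / 2 + (k + 1 : ℕ))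
    (by push_cast; linarith [Nat.cast_nonneg (α := ℝ) k]) κ
  have hIcc := Set.uIcc_of_le (show (-1 : ℝ) ≤ 1 by norm_num)
  rw [show ((p : ℝ) - 3) / 2 + (k + 1 : ℕ) - 1 = (p - 3) / 2 + k by push_cast; ring] at h
  rw [intervalIntegral.integral_congr fun u hu => absorb (k + 1) u (hIcc ▸ hu), ← h,
    intervalIntegral.integral_congr fun u hu => congrArg (u * ·) (absorb k u (hIcc ▸ hu))]
  congr 1
  push_cast
  ring

lemma integral_integral_nonpos_of_add_neg_nonpos {F : ℝ → ℝ → ℝ}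
    (hF : Continuous (Function.uncurry F)) (hle : ∀ x y, F x y + F (-x) (-y) ≤ 0) {a : ℝ}
    (ha : 0 ≤ a) : ∫ x in -a..a, ∫ y in -a..a, F x y ≤ 0 := by
  have hneg : Continuous (Function.uncurry fun x y => F (-x) (-y)) :=
    hF.comp (continuous_neg.prodMap continuous_neg)
  have inner_cont : ∀ {G : ℝ → ℝ → ℝ}, Continuous (Function.uncurry G) →
      IntervalIntegrable (fun x => ∫ y in -a..a, G x y) volume (-a) a := fun hG =>
    (continuous_parametric_intervalIntegral_of_continuous' hG _ _).intervalIntegrable _ _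
  have cont_right : ∀ {G : ℝ → ℝ → ℝ}, Continuous (Function.uncurry G) → ∀ x,
      IntervalIntegrable (fun y => G x y) volume (-a) a := fun hG x =>
    (hG.comp (Continuous.prodMk_right x)).intervalIntegrable _ _
  have hreflect : ∫ x in -a..a, ∫ y in -a..a, F (-x) (-y) = ∫ x in -a..a, ∫ y in -a..a, F x y := by
    simp only [intervalIntegral.integral_comp_neg, neg_neg]
    rw [intervalIntegral.integral_comp_neg fun x => ∫ y in -a..a, F x y, neg_neg]
  have hsum : ∫ x in -a..a, ∫ y in -a..a, -(F x y + F (-x) (-y)) ≥ 0 :=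
    intervalIntegral.integral_nonneg (by linarith) fun x _ =>
      intervalIntegral.integral_nonneg (by linarith) fun y _ => neg_nonneg.2 (hle x y)
  simp only [intervalIntegral.integral_neg, intervalIntegral.integral_add (cont_right hF _)
    (cont_right hneg _)] at hsum
  rw [intervalIntegral.integral_add (inner_cont hF) (inner_cont hneg), hreflect] at hsum
  linarith

section Variance

variable {p : ℕ} (hp : 3 ≤ p) (κ : ℝ)
include hp

/-- `u` and `1 - u²` have covariance of the sign opposite to `κ`: reflecting both points of an
independent pair turns the covariance integrand into one of constant sign. -/
lemma mul_covariance_fvmlWeight_nonpos :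
    κ * ((∫ u in (-1 : ℝ)..1, u * ((1 - u ^ 2) * fvmlWeight p κ u)) * mInt p κ 0) ≤
      κ * ((∫ u in (-1 : ℝ)..1, u * fvmlWeight p κ u) *
        ∫ u in (-1 : ℝ)..1, (1 - u ^ 2) * fvmlWeight p κ u) := by
  have hw := isLogConcaveWeight_fvmlWeight hp
  have hcont := (hw κ).continuous
  have heven : ∀ u, fvmlWeight p 0 (-u) = fvmlWeight p 0 u := fun u => by simp [fvmlWeight]
  have hdet := integral_integral_det_mul_det (f := fun u => u * fvmlWeight p κ u)
    (g := fvmlWeight p κ) (h := fun u => κ * (1 - u ^ 2)) (k := fun _ => 1)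
    (by fun_prop) hcont (by fun_prop) (by fun_prop) (-1) 1
  have hsign := integral_integral_nonpos_of_add_neg_nonpos (a := 1)
    (F := fun x y => (x * fvmlWeight p κ x * fvmlWeight p κ y -
      fvmlWeight p κ x * (y * fvmlWeight p κ y)) * (κ * (1 - x ^ 2) * 1 - 1 * (κ * (1 - y ^ 2))))
    (by fun_prop) (fun x y => ?_) zero_le_one
  · rw [hdet] at hsign
    have hB : ∀ u, u * fvmlWeight p κ u * (κ * (1 - u ^ 2)) =
        κ * (u * ((1 - u ^ 2) * fvmlWeight p κ u)) := fun u => by ring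
    have hV : ∀ u, fvmlWeight p κ u * (κ * (1 - u ^ 2)) =
        κ * ((1 - u ^ 2) * fvmlWeight p κ u) := fun u => by ring
    simp only [hB, hV, mul_one, intervalIntegral.integral_const_mul, ← mInt_zero_eq] at hsign
    linarith
  · have hexp : ∀ c, Real.exp (κ * (c * x)) * Real.exp (κ * (c * y)) =
        Real.exp (c * (κ * (x + y))) := fun c => by rw [← Real.exp_add]; ring_nf
    have hpos := hexp 1
    have hneg := hexp (-1)
    simp only [one_mul, neg_one_mul] at hpos hneg
    have hfactor : 0 ≤ (κ * (x + y)) * (Real.exp (κ * (x + y)) - Real.exp (-(κ * (x + y)))) := by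
      rcases le_total 0 (κ * (x + y)) with hz | hz
      · exact mul_nonneg hz (sub_nonneg.2 (Real.exp_le_exp.2 (by linarith)))
      · exact mul_nonneg_of_nonpos_of_nonpos hz (sub_nonpos.2 (Real.exp_le_exp.2 (by linarith)))
    have h := mul_nonneg (mul_nonneg (sq_nonneg (x - y))
      (mul_nonneg ((hw 0).nonneg x) ((hw 0).nonneg y))) hfactor
    rw [← hpos, ← hneg] at h
    simp only [fvmlWeight_eq_mul_exp p κ, heven]
    nlinarith only [h]

lemma continuous_integral_one_sub_sq_pow_mul_fvmlWeight (k : ℕ) :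
    Continuous fun κ => ∫ u in (-1 : ℝ)..1, (1 - u ^ 2) ^ k * fvmlWeight p κ u := by
  have hcont := (isLogConcaveWeight_fvmlWeight hp 0).continuous
  have htilt : Continuous (Function.uncurry fun κ u : ℝ =>
      (1 - u ^ 2) ^ k * (fvmlWeight p 0 u * Real.exp (κ * u))) := by fun_prop
  simp only [← fvmlWeight_eq_mul_exp] at htilt
  exact continuous_parametric_intervalIntegral_of_continuous' htilt _ _

lemma integral_one_sub_sq_sq_mul_fvmlWeight_le :
    (∫ u in (-1 : ℝ)..1, (1 - u ^ 2) ^ 2 * fvmlWeight p κ u) * mInt p κ 0 ≤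
      3 * (∫ u in (-1 : ℝ)..1, (1 - u ^ 2) * fvmlWeight p κ u) ^ 2 := by
  have hp' : (3 : ℝ) ≤ p := by exact_mod_cast hp
  have hcontV := continuous_integral_one_sub_sq_pow_mul_fvmlWeight hp
  have hM := hcontV 0
  have hV := hcontV 1
  simp only [pow_zero, one_mul, ← mInt_zero_eq, pow_one] at hM hV
  refine (dense_compl_singleton (0 : ℝ)).induction (fun κ hκ => ?_)
    (isClosed_le ((hcontV 2).mul hM) (continuous_const.mul (hV.pow 2))) κ
  have hcov := mul_covariance_fvmlWeight_nonpos hp κ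
  have stein0 := integral_mul_one_sub_sq_pow_mul_fvmlWeight hp κ 0
  have stein1 := integral_mul_one_sub_sq_pow_mul_fvmlWeight hp κ 1
  norm_num at stein0 stein1
  set M := mInt p κ 0
  set A := ∫ u in (-1 : ℝ)..1, u * fvmlWeight p κ u
  set V := ∫ u in (-1 : ℝ)..1, (1 - u ^ 2) * fvmlWeight p κ u
  set B := ∫ u in (-1 : ℝ)..1, u * ((1 - u ^ 2) * fvmlWeight p κ u)
  set Q := ∫ u in (-1 : ℝ)..1, (1 - u ^ 2) ^ 2 * fvmlWeight p κ u
  have hAV : 0 ≤ κ * (A * V) := by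
    refine nonneg_of_mul_nonneg_right (a := (p : ℝ) - 1) ?_ (by linarith)
    calc (0 : ℝ) ≤ (κ * V) ^ 2 := sq_nonneg _
      _ = (p - 1) * (κ * (A * V)) := by rw [sq]; nth_rw 1 [← stein0]; ring
  refine le_of_mul_le_mul_left ?_ (even_two.pow_pos hκ)
  calc κ ^ 2 * (Q * M) = (p - 1 + 2) * (κ * (B * M)) := by linear_combination -κ * M * stein1
    _ ≤ (p - 1 + 2) * (κ * (A * V)) := mul_le_mul_of_nonneg_left hcov (by linarith)
    _ ≤ 3 * (p - 1) * (κ * (A * V)) := mul_le_mul_of_nonneg_right (by linarith) hAV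
    _ = κ ^ 2 * (3 * V ^ 2) := by linear_combination 3 * κ * V * stein0

end Variance

section SphericalCoordinates

lemma exists_lintegral_direction_mul_radial {E : Type*} [NormedAddCommGroup E] [NormedSpace ℝ E]
    [FiniteDimensional ℝ E] [Nontrivial E] [MeasurableSpace E] [BorelSpace E] (μ : Measure E)
    [μ.IsAddHaarMeasure] {g : ℝ → ENNReal} (hg : Measurable g) :
    ∃ C : ENNReal, ∀ H : E → ENNReal, Measurable H →
      ∫⁻ x, H (‖x‖⁻¹ • x) * g ‖x‖ ∂μ = C * ∫⁻ s : sphere (0 : E) 1, H s ∂μ.toSphere := by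
  refine ⟨∫⁻ r : Set.Ioi (0 : ℝ), g r ∂(Measure.volumeIoiPow (Module.finrank ℝ E - 1)),
    fun H hH => ?_⟩
  have remove_zero : ∫⁻ x, H (‖x‖⁻¹ • x) * g ‖x‖ ∂μ =
      ∫⁻ x : ({(0 : E)}ᶜ : Set E), H (‖(x : E)‖⁻¹ • (x : E)) * g ‖(x : E)‖ ∂(μ.comap (↑)) := by
    rw [lintegral_subtype_comap (measurableSet_singleton _).compl
      fun x => H (‖x‖⁻¹ • x) * g ‖x‖, restrict_compl_singleton]
  have polar := μ.measurePreserving_homeomorphUnitSphereProd.lintegral_comp_emb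
    (homeomorphUnitSphereProd E).measurableEmbedding (fun z => H (z.1 : E) * g (z.2 : ℝ))
  simp only [homeomorphUnitSphereProd_apply_fst_coe,
    homeomorphUnitSphereProd_apply_snd_coe] at polar
  rw [remove_zero, polar, lintegral_prod_mul (f := fun s : sphere (0 : E) 1 => H (s : E))
    (g := fun r : Set.Ioi (0 : ℝ) => g (r : ℝ)) (by fun_prop) (by fun_prop), mul_comm]

lemma one_sub_sq_pos_of_mem_Ioo {u : ℝ} (hu : u ∈ Set.Ioo (-1 : ℝ) 1) : 0 < 1 - u ^ 2 := by
  nlinarith [hu.1, hu.2]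

lemma hasDerivAt_div_sqrt_one_sub_sq {u : ℝ} (hu : u ∈ Set.Ioo (-1 : ℝ) 1) :
    HasDerivAt (fun u => u / √(1 - u ^ 2)) (1 / √(1 - u ^ 2) ^ 3) u := by
  have hpos := one_sub_sq_pos_of_mem_Ioo hu
  have hroot : 0 < √(1 - u ^ 2) := Real.sqrt_pos.2 hpos
  have hinner : HasDerivAt (fun u : ℝ => 1 - u ^ 2) (-(2 * u)) u := by
    simpa using (hasDerivAt_pow 2 u).const_sub 1
  refine ((hasDerivAt_id u).fun_div (hinner.sqrt hpos.ne') hroot.ne').congr_deriv ?_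
  rw [id_eq]
  field_simp
  linear_combination Real.sq_sqrt hpos.le

lemma lintegral_comp_mul_div_sqrt_one_sub_sq {r : ℝ} (hr : 0 < r) (k : ℝ → ENNReal) :
    ∫⁻ u in Set.Ioo (-1 : ℝ) 1,
      ENNReal.ofReal (r / √(1 - u ^ 2) ^ 3) * k (r * (u / √(1 - u ^ 2))) = ∫⁻ t, k t := by
  let e : OpenPartialHomeomorph ℝ ℝ := OpenPartialHomeomorph.univUnitBall
  have hball : e.target = Set.Ioo (-1) 1 := by
    simp [e, OpenPartialHomeomorph.univUnitBall, Real.ball_eq_Ioo]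
  have he : (fun u => r * (u / √(1 - u ^ 2))) = (fun t => r * t) ∘ e.symm := by
    ext u
    simp [e, OpenPartialHomeomorph.univUnitBall, div_eq_inv_mul]
  have hinj : Set.InjOn (fun u => r * (u / √(1 - u ^ 2))) (Set.Ioo (-1) 1) := by
    rw [he, ← hball]
    exact (mul_right_injective₀ hr.ne').injOn.comp e.symm.injOn (Set.mapsTo_univ _ _)
  have himage : (fun u => r * (u / √(1 - u ^ 2))) '' Set.Ioo (-1) 1 = Set.univ := by
    have hsymm : e.symm '' e.target = Set.univ := e.symm_image_target_eq_source
    rw [he, Set.image_comp, ← hball, hsymm, Set.image_univ,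
      (mul_left_surjective₀ hr.ne').range_eq]
  rw [← setLIntegral_univ k, ← himage, lintegral_image_eq_lintegral_abs_deriv_mul measurableSet_Ioo
    (fun u hu => ((hasDerivAt_div_sqrt_one_sub_sq hu).const_mul r).hasDerivWithinAt) hinj]
  refine setLIntegral_congr_fun measurableSet_Ioo fun u hu => ?_
  have hroot : 0 < √(1 - u ^ 2) := Real.sqrt_pos.2 (one_sub_sq_pos_of_mem_Ioo hu)
  rw [mul_one_div, abs_of_pos (by positivity)]

lemma lintegral_eq_mul_lintegral_comp_smul {F : Type*} [NormedAddCommGroup F] [NormedSpace ℝ F]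
    [FiniteDimensional ℝ F] [MeasurableSpace F] [BorelSpace F] (μ : Measure F)
    [μ.IsAddHaarMeasure] {v : ℝ} (hv : 0 < v) {ψ : F → ENNReal} (hψ : Measurable ψ) :
    ∫⁻ y, ψ y ∂μ = ENNReal.ofReal (v ^ Module.finrank ℝ F) * ∫⁻ z, ψ (v • z) ∂μ := by
  rw [← lintegral_map (g := fun z : F => v • z) hψ (by fun_prop),
    Measure.map_addHaar_smul μ hv.ne', lintegral_smul_measure, smul_eq_mul, ← mul_assoc,
    ← ENNReal.ofReal_mul (by positivity), abs_of_pos (by positivity),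
    mul_inv_cancel₀ (by positivity), ENNReal.ofReal_one, one_mul]

lemma rpow_half_sub_two_eq_div_sqrt_sq {x : ℝ} (hx : 0 < x) (d : ℕ) :
    x ^ (((d : ℝ) - 2) / 2) = √x ^ d / √x ^ 2 := by
  have hroot : 0 < √x := Real.sqrt_pos.2 hx
  have hsq : x = √x ^ (2 : ℝ) := by rw [Real.rpow_two, Real.sq_sqrt hx.le]
  nth_rw 1 [hsq]
  rw [← Real.rpow_natCast, ← Real.rpow_natCast, ← Real.rpow_mul hroot.le, ← Real.rpow_sub hroot]
  congr 1
  push_cast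
  ring

lemma lintegral_prod_eq_lintegral_latitude {F : Type*} [NormedAddCommGroup F]
    [NormedSpace ℝ F] [FiniteDimensional ℝ F] [Nontrivial F] [MeasurableSpace F]
    [BorelSpace F] (μ : Measure F) [μ.IsAddHaarMeasure] {φ : ℝ × F → ENNReal}
    (hφ : Measurable φ) :
    ∫⁻ z, φ z ∂(volume.prod μ) = ∫⁻ u in Set.Ioo (-1 : ℝ) 1,
      ENNReal.ofReal ((1 - u ^ 2) ^ (((Module.finrank ℝ F : ℝ) - 2) / 2)) *
        ∫⁻ z, ENNReal.ofReal ‖z‖ * φ (‖z‖ * u, √(1 - u ^ 2) • z) ∂μ := by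
  have substitute : ∀ᵐ y ∂μ, ∫⁻ t : ℝ, φ (t, y) = ∫⁻ u in Set.Ioo (-1 : ℝ) 1,
      ENNReal.ofReal (‖y‖ / √(1 - u ^ 2) ^ 3) * φ (‖y‖ * (u / √(1 - u ^ 2)), y) := by
    filter_upwards [Measure.ae_ne μ 0] with y hy
    exact (lintegral_comp_mul_div_sqrt_one_sub_sq (norm_pos_iff.2 hy) fun t => φ (t, y)).symm
  rw [lintegral_prod_symm _ hφ.aemeasurable, lintegral_congr_ae substitute,
    lintegral_lintegral_swap (by fun_prop)]
  refine setLIntegral_congr_fun measurableSet_Ioo fun u hu => ?_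
  have hu' := one_sub_sq_pos_of_mem_Ioo hu
  have hroot : 0 < √(1 - u ^ 2) := Real.sqrt_pos.2 hu'
  rw [lintegral_eq_mul_lintegral_comp_smul μ hroot (by fun_prop),
    rpow_half_sub_two_eq_div_sqrt_sq hu', div_eq_mul_inv (_ ^ _),
    ENNReal.ofReal_mul (by positivity), mul_assoc,
    ← lintegral_const_mul' (ENNReal.ofReal (√(1 - u ^ 2) ^ 2)⁻¹) _ ENNReal.ofReal_ne_top]
  congr 1
  refine lintegral_congr fun z => ?_
  rw [norm_smul, Real.norm_of_nonneg hroot.le, ← mul_assoc,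
    ← ENNReal.ofReal_mul (by positivity)]
  congr 3 <;> field_simp

lemma integrable_exp_neg_sq_norm_div_two (F : Type*) [NormedAddCommGroup F]
    [InnerProductSpace ℝ F] [FiniteDimensional ℝ F] [MeasurableSpace F] [BorelSpace F] :
    Integrable (fun z : F => Real.exp (-‖z‖ ^ 2 / 2)) := by
  refine (GaussianFourier.integrable_cexp_neg_mul_sq_norm_add (V := F) (b := 1 / 2) (by norm_num)
    0 0).norm.congr (ae_of_all _ fun z => ?_)
  simp only [Complex.norm_exp]
  congr 1
  simp [← Complex.ofReal_pow]
  ring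

lemma exists_withDensity_exp_eq_smul_stdGaussian (F : Type*) [NormedAddCommGroup F]
    [InnerProductSpace ℝ F] [FiniteDimensional ℝ F] [MeasurableSpace F] [BorelSpace F] :
    ∃ c : ENNReal, c ≠ 0 ∧ c ≠ ⊤ ∧ (volume : Measure F).withDensity
      (fun z => ENNReal.ofReal (Real.exp (-‖z‖ ^ 2 / 2))) = c • stdGaussian F := by
  set c : ℝ := (2 * Real.pi) ^ ((Module.finrank ℝ F : ℝ) / 2) with hc
  have hc0 : 0 < c := by positivity
  have : IsFiniteMeasure ((volume : Measure F).withDensity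
      (fun z => ENNReal.ofReal (Real.exp (-‖z‖ ^ 2 / 2)))) :=
    isFiniteMeasure_withDensity_ofReal (integrable_exp_neg_sq_norm_div_two F).2
  have : IsFiniteMeasure (ENNReal.ofReal c • stdGaussian F) :=
    Measure.smul_finite _ ENNReal.ofReal_ne_top
  refine ⟨ENNReal.ofReal c, by simpa using hc0, ENNReal.ofReal_ne_top,
    Measure.ext_of_charFun (funext fun t => ?_)⟩
  rw [charFun_apply, charFun_apply, MeasureTheory.integral_smul_measure,
    ← charFun_apply (μ := stdGaussian F), charFun_stdGaussian,
    integral_withDensity_eq_integral_toReal_smul (by fun_prop) (by simp)]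
  have hexponent : ∀ z : F, (ENNReal.ofReal (Real.exp (-‖z‖ ^ 2 / 2))).toReal •
      Complex.exp (⟪z, t⟫ * Complex.I) =
      Complex.exp (-(1 / 2) * ‖z‖ ^ 2 + Complex.I * ⟪t, z⟫) := fun z => by
    rw [ENNReal.toReal_ofReal (Real.exp_pos _).le, Complex.exp_add, Complex.real_smul,
      Complex.ofReal_exp, real_inner_comm, mul_comm Complex.I]
    congr 2
    push_cast
    ring
  simp only [hexponent]
  rw [GaussianFourier.integral_cexp_neg_mul_sq_norm_add (by norm_num),
    ENNReal.toReal_ofReal hc0.le, Complex.real_smul, hc, Complex.ofReal_cpow (by positivity),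
    Complex.I_sq]
  congr 2 <;> push_cast <;> ring

end SphericalCoordinates

section Latitude

variable {E : Type*} [NormedAddCommGroup E] [InnerProductSpace ℝ E]

/-- The point of the unit sphere with latitude `z.1` relative to the unit vector `θ`, and whose
component orthogonal to `θ` points in the direction of `z.2`. -/
noncomputable def latitudePoint (θ : E) (z : ℝ × (ℝ ∙ θ)ᗮ) : E :=
  z.1 • θ + √(1 - z.1 ^ 2) • (‖z.2‖⁻¹ • (z.2 : E))

lemma inner_coe_orthogonal_self (θ : E) (y : (ℝ ∙ θ)ᗮ) : ⟪(y : E), θ⟫ = 0 :=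
  Submodule.mem_orthogonal_singleton_iff_inner_left.1 y.2

lemma inner_latitudePoint_self {θ : E} (hθ : ‖θ‖ = 1) (z : ℝ × (ℝ ∙ θ)ᗮ) :
    ⟪latitudePoint θ z, θ⟫ = z.1 := by
  simp [latitudePoint, inner_add_left, inner_smul_left, inner_coe_orthogonal_self, hθ]

lemma norm_smul_add_smul_orthogonal {θ : E} (hθ : ‖θ‖ = 1) {u : ℝ} (hu : 0 ≤ 1 - u ^ 2)
    (z : (ℝ ∙ θ)ᗮ) : ‖(‖z‖ * u) • θ + √(1 - u ^ 2) • (z : E)‖ = ‖z‖ := by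
  refine (pow_left_inj₀ (norm_nonneg _) (norm_nonneg _) two_ne_zero).1 ?_
  rw [norm_add_sq_real, norm_smul, hθ, norm_smul, inner_smul_left, inner_smul_right,
    real_inner_comm, inner_coe_orthogonal_self]
  simp only [mul_one, mul_zero, add_zero, mul_pow, Real.norm_eq_abs, sq_abs, Real.sq_sqrt hu,
    Submodule.coe_norm]
  ring

lemma inv_norm_smul_eq_latitudePoint (θ : E) (u : ℝ) {z : (ℝ ∙ θ)ᗮ} (hz : z ≠ 0) :
    ‖z‖⁻¹ • ((‖z‖ * u) • θ + √(1 - u ^ 2) • (z : E)) = latitudePoint θ (u, z) := by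
  rw [latitudePoint, smul_add, smul_smul, inv_mul_cancel_left₀ (norm_ne_zero_iff.2 hz), smul_comm]

variable [MeasurableSpace E] [BorelSpace E] [FiniteDimensional ℝ E]

@[fun_prop]
lemma measurable_latitudePoint (θ : E) : Measurable (latitudePoint θ) := by
  unfold latitudePoint
  fun_prop

lemma exists_lintegral_eq_mul_lintegral_prod_orthogonal {θ : E} (hθ : θ ≠ 0) :
    ∃ c : ENNReal, c ≠ 0 ∧ c ≠ ⊤ ∧ ∀ φ : E → ENNReal, Measurable φ →
      ∫⁻ x, φ x = c * ∫⁻ z : ℝ × (ℝ ∙ θ)ᗮ, φ (z.1 • θ + z.2) ∂(volume.prod volume) := by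
  let e : (ℝ × (ℝ ∙ θ)ᗮ) ≃L[ℝ] E :=
    (((LinearEquiv.toSpanNonzeroSingleton ℝ E θ hθ).prodCongr (.refl ℝ (ℝ ∙ θ)ᗮ)).trans
      (Submodule.prodEquivOfIsCompl _ _ (Submodule.isCompl_orthogonal _))).toContinuousLinearEquiv
  have he : ∀ z, e z = z.1 • θ + z.2 := fun z => by
    simp [e, LinearEquiv.toSpanNonzeroSingleton_apply]
  have hadd : ((volume.prod volume).map e).IsAddHaarMeasure := e.isAddHaarMeasure_map _
  refine ⟨Measure.addHaarScalarFactor volume ((volume.prod volume).map e), ?_,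
    ENNReal.coe_ne_top, fun φ hφ => ?_⟩
  · exact ENNReal.coe_ne_zero.2 (Measure.addHaarScalarFactor_pos_of_isAddHaarMeasure _ _).ne'
  · conv_lhs =>
      rw [Measure.isAddLeftInvariant_eq_smul (volume : Measure E) ((volume.prod volume).map e)]
    rw [lintegral_smul_measure, lintegral_map hφ e.continuous.measurable, ENNReal.smul_def,
      smul_eq_mul]
    simp only [he]

lemma mul_lintegral_stdGaussian_eq {F : Type*} [NormedAddCommGroup F] [InnerProductSpace ℝ F]
    [FiniteDimensional ℝ F] [MeasurableSpace F] [BorelSpace F] {d : ENNReal}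
    (hd : (volume : Measure F).withDensity
      (fun z => ENNReal.ofReal (Real.exp (-‖z‖ ^ 2 / 2))) = d • stdGaussian F)
    {H : F → ENNReal} (hH : Measurable H) :
    d * ∫⁻ y, H y ∂(stdGaussian F) =
      ∫⁻ z, ENNReal.ofReal (Real.exp (-‖z‖ ^ 2 / 2)) * H z := by
  rw [← smul_eq_mul, ← lintegral_smul_measure, ← hd,
    lintegral_withDensity_eq_lintegral_mul _ (by fun_prop) hH]
  rfl

/-- Radially weighting by `exp (-r ^ 2 / 2) / r` turns the Lebesgue measure on `ℝ × (ℝ ∙ θ)ᗮ`,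
in the coordinates of `lintegral_prod_eq_lintegral_latitude`, into the Gaussian measure. -/
lemma exists_lintegral_toSphere_eq_lintegral_latitudePoint {θ : E} (hθ : ‖θ‖ = 1)
    [Nontrivial (ℝ ∙ θ)ᗮ] :
    ∃ C : ENNReal, ∀ H : E → ENNReal, Measurable H →
      C * ∫⁻ s : sphere (0 : E) 1, H s ∂(volume : Measure E).toSphere =
        ∫⁻ u in Set.Ioo (-1 : ℝ) 1,
          ENNReal.ofReal ((1 - u ^ 2) ^ (((Module.finrank ℝ (ℝ ∙ θ)ᗮ : ℝ) - 2) / 2)) *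
            ∫⁻ y, H (latitudePoint θ (u, y)) ∂(stdGaussian (ℝ ∙ θ)ᗮ) := by
  have hθ0 : θ ≠ 0 := norm_ne_zero_iff.1 (hθ ▸ one_ne_zero)
  have : Nontrivial E := ⟨θ, 0, hθ0⟩
  obtain ⟨C, hC⟩ := exists_lintegral_direction_mul_radial (volume : Measure E)
    (g := fun r => ENNReal.ofReal (Real.exp (-r ^ 2 / 2) / r)) (by fun_prop)
  obtain ⟨c, hc0, hc, hcφ⟩ := exists_lintegral_eq_mul_lintegral_prod_orthogonal hθ0
  obtain ⟨d, hd0, hd, hdγ⟩ := exists_withDensity_exp_eq_smul_stdGaussian (ℝ ∙ θ)ᗮ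
  refine ⟨(c * d)⁻¹ * C, fun H hH => ?_⟩
  suffices hscaled : C * ∫⁻ s : sphere (0 : E) 1, H s ∂(volume : Measure E).toSphere =
      (c * d) * ∫⁻ u in Set.Ioo (-1 : ℝ) 1,
        ENNReal.ofReal ((1 - u ^ 2) ^ (((Module.finrank ℝ (ℝ ∙ θ)ᗮ : ℝ) - 2) / 2)) *
          ∫⁻ y, H (latitudePoint θ (u, y)) ∂(stdGaussian (ℝ ∙ θ)ᗮ) by
    rw [mul_assoc, hscaled, ← mul_assoc, ENNReal.inv_mul_cancel (mul_ne_zero hc0 hd0)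
      (ENNReal.mul_ne_top hc hd), one_mul]
  rw [← hC H hH, hcφ _ (by fun_prop), lintegral_prod_eq_lintegral_latitude _ (by fun_prop),
    mul_assoc, ← lintegral_const_mul' d _ hd]
  congr 1
  refine setLIntegral_congr_fun measurableSet_Ioo fun u hu => ?_
  dsimp only
  rw [mul_left_comm d, mul_lintegral_stdGaussian_eq hdγ (by fun_prop)]
  congr 1
  refine lintegral_congr_ae ?_
  filter_upwards [Measure.ae_ne volume 0] with z hz
  have hz0 : 0 < ‖z‖ := norm_pos_iff.2 hz
  rw [Submodule.coe_smul, norm_smul_add_smul_orthogonal hθ (one_sub_sq_pos_of_mem_Ioo hu).le,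
    inv_norm_smul_eq_latitudePoint θ u hz, mul_left_comm, ← ENNReal.ofReal_mul hz0.le,
    mul_div_cancel₀ _ hz0.ne', mul_comm]

end Latitude

section FvML

/-- The law of the latitude `⟪X, θ⟫` when `X` follows `FvML_p(θ, κ)`. -/
noncomputable def fvmlLatitude (p : ℕ) (κ : ℝ) : Measure ℝ :=
  (volume.restrict (Set.Ioo (-1) 1)).withDensity
    fun u => ENNReal.ofReal (fvmlWeight p κ u / mInt p κ 0)

variable {p : ℕ}

lemma ae_fvmlLatitude_mem_Ioo (p : ℕ) (κ : ℝ) :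
    ∀ᵐ u ∂(fvmlLatitude p κ), u ∈ Set.Ioo (-1 : ℝ) 1 :=
  (withDensity_absolutelyContinuous _ _).ae_le (ae_restrict_mem measurableSet_Ioo)

lemma measurable_fvmlWeight (p : ℕ) (κ : ℝ) : Measurable (fvmlWeight p κ) := by
  unfold fvmlWeight
  fun_prop

lemma integral_fvmlLatitude (hp : 3 ≤ p) (κ : ℝ) (f : ℝ → ℝ) :
    ∫ u, f u ∂(fvmlLatitude p κ) =
      (∫ u in (-1 : ℝ)..1, f u * fvmlWeight p κ u) / mInt p κ 0 := by
  have hw := measurable_fvmlWeight p κ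
  rw [fvmlLatitude, integral_withDensity_eq_integral_toReal_smul (by fun_prop) (by simp),
    intervalIntegral.integral_of_le (by norm_num), integral_Ioc_eq_integral_Ioo,
    ← MeasureTheory.integral_div]
  congr 1 with u
  rw [ENNReal.toReal_ofReal
    (div_nonneg ((isLogConcaveWeight_fvmlWeight hp κ).nonneg u) (mInt_zero_pos hp κ).le),
    smul_eq_mul, div_mul_eq_mul_div, mul_comm]

lemma lintegral_fvmlLatitude (hp : 3 ≤ p) (κ : ℝ) {f : ℝ → ENNReal} (hf : Measurable f) :
    ENNReal.ofReal (mInt p κ 0) * ∫⁻ u, f u ∂(fvmlLatitude p κ) =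
      ∫⁻ u in Set.Ioo (-1 : ℝ) 1, ENNReal.ofReal (fvmlWeight p κ u) * f u := by
  have hw := measurable_fvmlWeight p κ
  have hm := mInt_zero_pos hp κ
  rw [fvmlLatitude, lintegral_withDensity_eq_lintegral_mul _ (by fun_prop) hf,
    ← lintegral_const_mul' _ _ ENNReal.ofReal_ne_top]
  congr 1 with u
  rw [Pi.mul_apply, ← mul_assoc, ← ENNReal.ofReal_mul hm.le, mul_div_cancel₀ _ hm.ne']

lemma isProbabilityMeasure_fvmlLatitude (hp : 3 ≤ p) (κ : ℝ) :
    IsProbabilityMeasure (fvmlLatitude p κ) := by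
  have hm := mInt_zero_pos hp κ
  have hw := isLogConcaveWeight_fvmlWeight hp κ
  have htotal := lintegral_fvmlLatitude hp κ (f := 1) measurable_one
  simp only [Pi.one_apply, mul_one, lintegral_one] at htotal
  rw [← ofReal_integral_eq_lintegral_ofReal
    ((intervalIntegrable_iff_integrableOn_Ioo_of_le (by norm_num)).1
      (hw.continuous.intervalIntegrable _ _)) (ae_of_all _ hw.nonneg),
    ← integral_Ioc_eq_integral_Ioo, ← intervalIntegral.integral_of_le (by norm_num),
    ← mInt_zero_eq] at htotal
  exact ⟨(ENNReal.mul_eq_left (by simpa using hm) ENNReal.ofReal_ne_top).1 htotal⟩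

lemma finrank_orthogonal_span_singleton_add_one {E : Type*} [NormedAddCommGroup E]
    [InnerProductSpace ℝ E] [FiniteDimensional ℝ E] {θ : E} (hθ : θ ≠ 0) :
    Module.finrank ℝ (ℝ ∙ θ)ᗮ + 1 = Module.finrank ℝ E := by
  rw [← (ℝ ∙ θ).finrank_add_finrank_orthogonal, finrank_span_singleton hθ, add_comm]

variable {θ : EuclideanSpace ℝ (Fin p)}

lemma exists_lintegral_exp_sphereSurface_eq_lintegral_latitudePoint (hp : 3 ≤ p) (hθ : ‖θ‖ = 1)
    (κ : ℝ) :
    ∃ C : ENNReal, ∀ H : EuclideanSpace ℝ (Fin p) → ENNReal, Measurable H →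
      C * ∫⁻ x, ENNReal.ofReal (Real.exp (κ * ⟪(x : EuclideanSpace ℝ (Fin p)), θ⟫)) * H x
          ∂(sphereSurface p) =
        ENNReal.ofReal (mInt p κ 0) *
          ∫⁻ z, H (latitudePoint θ z) ∂((fvmlLatitude p κ).prod (stdGaussian (ℝ ∙ θ)ᗮ)) := by
  have hdim := finrank_orthogonal_span_singleton_add_one (norm_ne_zero_iff.1 (hθ ▸ one_ne_zero))
  rw [finrank_euclideanSpace_fin] at hdim
  have : Nontrivial (ℝ ∙ θ)ᗮ := Module.nontrivial_of_finrank_pos (R := ℝ) (by omega)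
  obtain ⟨C, hC⟩ := exists_lintegral_toSphere_eq_lintegral_latitudePoint hθ
  refine ⟨C, fun H hH => ?_⟩
  rw [lintegral_prod _ (by fun_prop), lintegral_fvmlLatitude hp κ
    (Measurable.lintegral_prod_right' (f := fun z => H (latitudePoint θ z)) (by fun_prop))]
  refine (hC (fun x => ENNReal.ofReal (Real.exp (κ * ⟪x, θ⟫)) * H x) (by fun_prop)).trans ?_
  refine setLIntegral_congr_fun measurableSet_Ioo fun u hu => ?_
  have hu' := (one_sub_sq_pos_of_mem_Ioo hu).le
  have hexponent : ((Module.finrank ℝ (ℝ ∙ θ)ᗮ : ℝ) - 2) / 2 = ((p : ℝ) - 3) / 2 := by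
    have hdim' : (Module.finrank ℝ (ℝ ∙ θ)ᗮ : ℝ) + 1 = p := mod_cast hdim
    linarith
  simp only [inner_latitudePoint_self hθ]
  rw [lintegral_const_mul' _ _ ENNReal.ofReal_ne_top, ← mul_assoc,
    ← ENNReal.ofReal_mul (by positivity), hexponent,
    fvmlWeight_of_mem_Icc p κ (Set.Ioo_subset_Icc_self hu)]

lemma integral_exp_sphereSurface_pos (hp : 1 ≤ p) (θ : EuclideanSpace ℝ (Fin p)) (κ : ℝ) :
    Integrable (fun x : sphere (0 : EuclideanSpace ℝ (Fin p)) 1 =>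
        Real.exp (κ * ⟪(x : EuclideanSpace ℝ (Fin p)), θ⟫)) (sphereSurface p) ∧
      0 < ∫ x, Real.exp (κ * ⟪(x : EuclideanSpace ℝ (Fin p)), θ⟫) ∂(sphereSurface p) := by
  have : Nontrivial (EuclideanSpace ℝ (Fin p)) :=
    Module.nontrivial_of_finrank_pos (R := ℝ) (by simpa using (by lia : 0 < p))
  have : IsFiniteMeasure (sphereSurface p) := by
    unfold sphereSurface
    infer_instance
  have : NeZero (sphereSurface p) := ⟨Measure.toSphere_ne_zero _⟩
  have hint : Integrable (fun x : sphere (0 : EuclideanSpace ℝ (Fin p)) 1 =>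
      Real.exp (κ * ⟪(x : EuclideanSpace ℝ (Fin p)), θ⟫)) (sphereSurface p) :=
    Continuous.integrable_of_hasCompactSupport (by fun_prop) (HasCompactSupport.of_compactSpace _)
  exact ⟨hint, integral_exp_pos hint⟩

lemma isProbabilityMeasure_fvml (hp : 1 ≤ p) (θ : EuclideanSpace ℝ (Fin p)) (κ : ℝ) :
    IsProbabilityMeasure (fvml p θ κ) := by
  obtain ⟨hint, hpos⟩ := integral_exp_sphereSurface_pos hp θ κ
  refine ⟨?_⟩
  rw [fvml, withDensity_apply _ MeasurableSet.univ, Measure.restrict_univ,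
    ← ofReal_integral_eq_lintegral_ofReal (hint.div_const _)
      (ae_of_all _ fun x => (div_pos (Real.exp_pos _) hpos).le),
    MeasureTheory.integral_div, div_self hpos.ne', ENNReal.ofReal_one]

lemma mul_lintegral_fvml (hp : 1 ≤ p) (θ : EuclideanSpace ℝ (Fin p)) (κ : ℝ)
    {H : sphere (0 : EuclideanSpace ℝ (Fin p)) 1 → ENNReal} (hH : Measurable H) :
    ENNReal.ofReal (∫ x, Real.exp (κ * ⟪(x : EuclideanSpace ℝ (Fin p)), θ⟫) ∂(sphereSurface p)) *
        ∫⁻ x, H x ∂(fvml p θ κ) =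
      ∫⁻ x, ENNReal.ofReal (Real.exp (κ * ⟪(x : EuclideanSpace ℝ (Fin p)), θ⟫)) * H x
        ∂(sphereSurface p) := by
  have hpos := (integral_exp_sphereSurface_pos hp θ κ).2
  rw [fvml, lintegral_withDensity_eq_lintegral_mul _ (by fun_prop) hH,
    ← lintegral_const_mul' _ _ ENNReal.ofReal_ne_top]
  congr 1 with x
  rw [Pi.mul_apply, ← mul_assoc, ← ENNReal.ofReal_mul hpos.le, mul_div_cancel₀ _ hpos.ne']

lemma map_coe_fvml_eq_map_latitudePoint (hp : 3 ≤ p) (hθ : ‖θ‖ = 1) (κ : ℝ) :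
    (fvml p θ κ).map (↑) =
      ((fvmlLatitude p κ).prod (stdGaussian (ℝ ∙ θ)ᗮ)).map (latitudePoint θ) := by
  have := isProbabilityMeasure_fvml (by lia) θ κ
  have := isProbabilityMeasure_fvmlLatitude hp κ
  obtain ⟨C, hC⟩ := exists_lintegral_exp_sphereSurface_eq_lintegral_latitudePoint hp hθ κ
  set Z := ENNReal.ofReal
    (∫ x, Real.exp (κ * ⟪(x : EuclideanSpace ℝ (Fin p)), θ⟫) ∂(sphereSurface p))
  have hCH : ∀ H : EuclideanSpace ℝ (Fin p) → ENNReal, Measurable H →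
      C * Z * ∫⁻ x, H x ∂(fvml p θ κ) = ENNReal.ofReal (mInt p κ 0) *
        ∫⁻ z, H (latitudePoint θ z) ∂((fvmlLatitude p κ).prod (stdGaussian (ℝ ∙ θ)ᗮ)) :=
    fun H hH => by rw [← hC H hH, ← mul_lintegral_fvml (by lia) θ κ (by fun_prop), mul_assoc]
  have hCZ : C * Z = ENNReal.ofReal (mInt p κ 0) := by
    simpa using hCH (fun _ => 1) measurable_const
  have hm : ENNReal.ofReal (mInt p κ 0) ≠ 0 := by simpa using mInt_zero_pos hp κ
  refine Measure.ext_of_lintegral _ fun H hH => ?_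
  rw [lintegral_map hH (by fun_prop), lintegral_map hH (by fun_prop)]
  exact (ENNReal.mul_right_inj hm ENNReal.ofReal_ne_top).1 (hCZ ▸ hCH H hH)

end FvML

section TriangularCLT

lemma norm_exp_mul_I_sub_taylor_le (x : ℝ) :
    ‖Complex.exp (x * Complex.I) - (1 + x * Complex.I - x ^ 2 / 2)‖ ≤ 4 * |x| ^ 3 := by
  rcases le_or_gt |x| 1 with hx | hx
  · have hsum : ∑ m ∈ Finset.range 3, ((x : ℂ) * Complex.I) ^ m / (m.factorial : ℂ) =
        1 + x * Complex.I - x ^ 2 / 2 := by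
      simp [Finset.sum_range_succ, Nat.factorial, mul_pow]
      ring
    have hexp : Real.exp |x| ≤ 4 :=
      (Real.exp_le_exp.2 hx).trans (Real.exp_one_lt_d9.le.trans (by norm_num))
    have htaylor := Complex.norm_exp_sub_sum_le_norm_mul_exp (x * Complex.I) 3
    rw [hsum, norm_mul, Complex.norm_I, mul_one, Complex.norm_real, Real.norm_eq_abs] at htaylor
    nlinarith [mul_le_mul_of_nonneg_left hexp (pow_nonneg (abs_nonneg x) 3)]
  · have hquadratic : ‖(1 + x * Complex.I - x ^ 2 / 2 : ℂ)‖ ≤ 1 + |x| + |x| ^ 2 / 2 := by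
      refine (norm_sub_le _ _).trans (add_le_add ((norm_add_le _ _).trans (by simp)) ?_)
      simp
    refine (norm_sub_le _ _).trans ?_
    rw [Complex.norm_exp_ofReal_mul_I]
    have hsq : |x| ≤ |x| ^ 2 := by nlinarith
    have hcube : |x| ^ 2 ≤ |x| ^ 3 := by nlinarith [sq_nonneg |x|]
    linarith

lemma norm_pow_sub_pow_le_mul {z w : ℂ} (hz : ‖z‖ ≤ 1) (hw : ‖w‖ ≤ 1) (n : ℕ) :
    ‖z ^ n - w ^ n‖ ≤ n * ‖z - w‖ := by
  induction n with
  | zero => simp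
  | succ n ih =>
    calc ‖z ^ (n + 1) - w ^ (n + 1)‖ = ‖z ^ n * (z - w) + (z ^ n - w ^ n) * w‖ := by
          congr 1
          ring
      _ ≤ ‖z‖ ^ n * ‖z - w‖ + ‖z ^ n - w ^ n‖ * ‖w‖ :=
          (norm_add_le _ _).trans_eq (by rw [norm_mul, norm_mul, norm_pow])
      _ ≤ 1 * ‖z - w‖ + n * ‖z - w‖ * 1 := by
          gcongr
          exact pow_le_one₀ (norm_nonneg _) hz
      _ = (n + 1 : ℕ) * ‖z - w‖ := by
          push_cast
          ring

lemma abs_exp_neg_sub_one_add_le {x : ℝ} (hx : 0 ≤ x) : |Real.exp (-x) - 1 + x| ≤ x ^ 2 := by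
  rcases le_or_gt x 1 with h | h
  · have := Real.abs_exp_sub_one_sub_id_le (x := -x) (by rwa [abs_neg, abs_of_nonneg hx])
    rwa [sub_neg_eq_add, neg_sq] at this
  · have hlower := Real.add_one_le_exp (-x)
    have hupper : Real.exp (-x) ≤ 1 := Real.exp_le_one_iff.2 (by linarith)
    rw [abs_of_nonneg (by linarith)]
    nlinarith

variable {Ω : Type*} [MeasurableSpace Ω] {P : Measure Ω} [IsProbabilityMeasure P] {X : Ω → ℝ}

lemma integrable_of_integrable_sq (hX : AEMeasurable X P) (h2 : Integrable (fun ω => X ω ^ 2) P) :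
    Integrable X P :=
  ((memLp_two_iff_integrable_sq hX.aestronglyMeasurable).2 h2).integrable one_le_two

lemma integrable_sq_of_integrable_pow_four (hX : AEMeasurable X P)
    (h4 : Integrable (fun ω => X ω ^ 4) P) : Integrable (fun ω => X ω ^ 2) P :=
  integrable_of_integrable_sq (hX.pow_const 2) (by simpa only [← pow_mul] using h4)

lemma integrable_and_integral_taylor_two (hX : AEMeasurable X P)
    (h2 : Integrable (fun ω => X ω ^ 2) P) (hmean : ∫ ω, X ω ∂P = 0)
    (hvar : ∫ ω, X ω ^ 2 ∂P = 1) (s : ℝ) :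
    Integrable (fun ω => 1 + ((s * X ω : ℝ) : ℂ) * Complex.I - ((s * X ω : ℝ) : ℂ) ^ 2 / 2) P ∧
      ∫ ω, (1 + ((s * X ω : ℝ) : ℂ) * Complex.I - ((s * X ω : ℝ) : ℂ) ^ 2 / 2) ∂P =
        1 - (s : ℂ) ^ 2 / 2 := by
  have hconst : Integrable (fun _ : Ω => (1 : ℂ)) P := integrable_const _
  have hlinear : Integrable (fun ω => ((s * X ω : ℝ) : ℂ) * Complex.I) P :=
    ((integrable_of_integrable_sq hX h2).const_mul s).ofReal.mul_const _
  have hsq : ∀ ω, ((s * X ω : ℝ) : ℂ) ^ 2 / 2 = ((s ^ 2 / 2 * X ω ^ 2 : ℝ) : ℂ) := fun ω => by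
    push_cast
    ring
  have hquadratic : Integrable (fun ω => ((s ^ 2 / 2 * X ω ^ 2 : ℝ) : ℂ)) P :=
    (h2.const_mul _).ofReal
  have haffine : Integrable (fun ω => 1 + ((s * X ω : ℝ) : ℂ) * Complex.I) P :=
    hconst.add hlinear
  simp only [hsq]
  refine ⟨haffine.sub hquadratic, ?_⟩
  rw [MeasureTheory.integral_sub haffine hquadratic,
    MeasureTheory.integral_add hconst hlinear, MeasureTheory.integral_mul_const,
    integral_complex_ofReal, integral_complex_ofReal, MeasureTheory.integral_const_mul,
    MeasureTheory.integral_const_mul, hmean, hvar]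
  simp

lemma norm_charFun_map_sub_le (hX : AEMeasurable X P) (h4 : Integrable (fun ω => X ω ^ 4) P)
    (hmean : ∫ ω, X ω ∂P = 0) (hvar : ∫ ω, X ω ^ 2 ∂P = 1) (s : ℝ) :
    ‖charFun (P.map X) s - (1 - (s : ℂ) ^ 2 / 2)‖ ≤ 2 * (1 + ∫ ω, X ω ^ 4 ∂P) * |s| ^ 3 := by
  have h2 := integrable_sq_of_integrable_pow_four hX h4
  obtain ⟨htaylor, htaylor_eq⟩ := integrable_and_integral_taylor_two hX h2 hmean hvar s
  have hexp : Integrable (fun ω => Complex.exp ((s * X ω : ℝ) * Complex.I)) P :=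
    (integrable_const (1 : ℝ)).mono' (by fun_prop)
      (ae_of_all _ fun ω => (Complex.norm_exp_ofReal_mul_I _).le)
  have hchar : charFun (P.map X) s = ∫ ω, Complex.exp ((s * X ω : ℝ) * Complex.I) ∂P := by
    rw [charFun_apply_real, integral_map hX (by fun_prop)]
    simp
  rw [hchar, ← htaylor_eq, ← MeasureTheory.integral_sub hexp htaylor]
  have hpointwise : ∀ ω, ‖Complex.exp ((s * X ω : ℝ) * Complex.I) -
      (1 + (s * X ω : ℝ) * Complex.I - ((s * X ω : ℝ) : ℂ) ^ 2 / 2)‖ ≤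
      2 * |s| ^ 3 * (X ω ^ 2 + X ω ^ 4) := fun ω => by
    have hcube : 2 * |X ω| ^ 3 ≤ X ω ^ 2 + X ω ^ 4 := by
      rw [← sq_abs, ← Even.pow_abs (by decide : Even 4)]
      nlinarith [mul_nonneg (sq_nonneg |X ω|) (sq_nonneg (|X ω| - 1))]
    refine (norm_exp_mul_I_sub_taylor_le (s * X ω)).trans ?_
    rw [abs_mul, mul_pow]
    nlinarith [mul_le_mul_of_nonneg_left hcube (pow_nonneg (abs_nonneg s) 3)]
  refine (norm_integral_le_of_norm_le ((h2.add h4).const_mul _)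
    (ae_of_all _ hpointwise)).trans_eq ?_
  rw [MeasureTheory.integral_const_mul, integral_add' h2 h4, hvar]
  ring

lemma charFun_pi_map_inv_sqrt_mul_sum (hX : AEMeasurable X P) (n : ℕ) (t : ℝ) :
    charFun ((Measure.pi fun _ : Fin n => P).map fun ω => (√n)⁻¹ * ∑ i, X (ω i)) t =
      charFun (P.map X) ((√n)⁻¹ * t) ^ n := by
  have hind : iIndepFun (fun (i : Fin n) (ω : Fin n → Ω) => X (ω i)) (Measure.pi fun _ => P) :=
    iIndepFun_pi (X := fun _ => X) fun _ => hX
  have heval : ∀ i : Fin n, MeasurePreserving (Function.eval i) (Measure.pi fun _ => P) P :=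
    measurePreserving_eval _
  have hcoord : ∀ i : Fin n, AEMeasurable (fun ω : Fin n → Ω => X (ω i)) (Measure.pi fun _ => P) :=
    fun i => hX.comp_quasiMeasurePreserving (heval i).quasiMeasurePreserving
  have hmap : ∀ i : Fin n, (Measure.pi fun _ : Fin n => P).map (fun ω => X (ω i)) = P.map X :=
    fun i => by
      conv_rhs => rw [← (heval i).map_eq]
      exact (AEMeasurable.map_map_of_aemeasurable ((heval i).map_eq.symm ▸ hX)
        (heval i).aemeasurable).symm
  rw [charFun_map_mul_comp (Finset.aemeasurable_fun_sum _ fun i _ => hcoord i),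
    hind.charFun_map_fun_sum_eq_prod hcoord]
  simp [hmap]

lemma norm_charFun_map_sub_exp_le (hX : AEMeasurable X P) (h4 : Integrable (fun ω => X ω ^ 4) P)
    (hmean : ∫ ω, X ω ∂P = 0) (hvar : ∫ ω, X ω ^ 2 ∂P = 1) (s : ℝ) :
    ‖charFun (P.map X) s - charFun (gaussianReal 0 1) s‖ ≤
      2 * (1 + ∫ ω, X ω ^ 4 ∂P) * |s| ^ 3 + s ^ 4 := by
  have hsplit : charFun (P.map X) s - charFun (gaussianReal 0 1) s =
      (charFun (P.map X) s - (1 - (s : ℂ) ^ 2 / 2)) -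
        ((Real.exp (-(s ^ 2 / 2)) - 1 + s ^ 2 / 2 : ℝ) : ℂ) := by
    rw [charFun_gaussianReal]
    push_cast
    simp
    ring
  rw [hsplit]
  refine (norm_sub_le _ _).trans (add_le_add (norm_charFun_map_sub_le hX h4 hmean hvar s) ?_)
  rw [Complex.norm_real, Real.norm_eq_abs]
  refine (abs_exp_neg_sub_one_add_le (by positivity)).trans ?_
  nlinarith [sq_nonneg (s ^ 2)]

lemma charFun_gaussianReal_eq_pow {n : ℕ} (hn : 0 < n) (t : ℝ) :
    charFun (gaussianReal 0 1) t = charFun (gaussianReal 0 1) ((√n)⁻¹ * t) ^ n := by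
  have hn' : (n : ℂ) ≠ 0 := by exact_mod_cast hn.ne'
  have hroot : ((√n : ℝ) : ℂ) ^ 2 = n := by
    exact_mod_cast congrArg Complex.ofReal (Real.sq_sqrt (Nat.cast_nonneg n))
  rw [charFun_gaussianReal, charFun_gaussianReal, ← Complex.exp_nat_mul]
  congr 1
  push_cast
  rw [mul_pow, inv_pow, hroot]
  field_simp
  simp

lemma norm_charFun_pi_map_sub_le (hX : AEMeasurable X P) (h4 : Integrable (fun ω => X ω ^ 4) P)
    (hmean : ∫ ω, X ω ∂P = 0) (hvar : ∫ ω, X ω ^ 2 ∂P = 1) {n : ℕ} (hn : 0 < n) (t : ℝ) :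
    ‖charFun ((Measure.pi fun _ : Fin n => P).map fun ω => (√n)⁻¹ * ∑ i, X (ω i)) t -
        charFun (gaussianReal 0 1) t‖ ≤
      (2 * (1 + ∫ ω, X ω ^ 4 ∂P) * |t| ^ 3 + t ^ 4) / √n := by
  have hroot : 1 ≤ √(n : ℝ) := Real.one_le_sqrt.2 (by exact_mod_cast hn)
  have := Measure.isProbabilityMeasure_map hX
  rw [charFun_pi_map_inv_sqrt_mul_sum hX, charFun_gaussianReal_eq_pow hn]
  calc _ ≤ n * ‖charFun (P.map X) ((√n)⁻¹ * t) - charFun (gaussianReal 0 1) ((√n)⁻¹ * t)‖ :=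
        norm_pow_sub_pow_le_mul (norm_charFun_le_one _) (norm_charFun_le_one _) n
    _ ≤ n * (2 * (1 + ∫ ω, X ω ^ 4 ∂P) * |(√n)⁻¹ * t| ^ 3 + ((√n)⁻¹ * t) ^ 4) := by
        gcongr
        exact norm_charFun_map_sub_exp_le hX h4 hmean hvar _
    _ = (2 * (1 + ∫ ω, X ω ^ 4 ∂P) * |t| ^ 3 + t ^ 4 / √n) / √n := by
        rw [abs_mul, abs_of_nonneg (by positivity : 0 ≤ (√(n : ℝ))⁻¹)]
        nth_rw 1 [← Real.sq_sqrt (Nat.cast_nonneg n : (0 : ℝ) ≤ n)]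
        field_simp
    _ ≤ _ := by
        gcongr
        exact div_le_self (by positivity) hroot

theorem tendstoInDistribution_pi_inv_sqrt_mul_sum {Ω : ℕ → Type*} [∀ n, MeasurableSpace (Ω n)]
    {P : ∀ n, Measure (Ω n)} [∀ n, IsProbabilityMeasure (P n)] {X : ∀ n, Ω n → ℝ} {k : ℕ → ℕ}
    (hk : Tendsto k atTop atTop) (hX : ∀ n, Measurable (X n)) {K : ℝ}
    (h4 : ∀ n, Integrable (fun ω => X n ω ^ 4) (P n)) (hmean : ∀ n, ∫ ω, X n ω ∂(P n) = 0)
    (hvar : ∀ n, ∫ ω, X n ω ^ 2 ∂(P n) = 1) (hK : ∀ n, ∫ ω, X n ω ^ 4 ∂(P n) ≤ K) :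
    TendstoInDistribution (fun n (ω : Fin (k n) → Ω n) => (√(k n))⁻¹ * ∑ i, X n (ω i)) atTop id
      (fun n => Measure.pi fun _ => P n) (gaussianReal 0 1) := by
  have hmeas : ∀ n, Measurable fun ω : Fin (k n) → Ω n => (√(k n))⁻¹ * ∑ i, X n (ω i) := fun n =>
    (Finset.measurable_fun_sum _ fun i _ => (hX n).comp (measurable_pi_apply i)).const_mul _
  refine ⟨fun n => (hmeas n).aemeasurable, aemeasurable_id,
    ProbabilityMeasure.tendsto_of_tendsto_charFun fun t => ?_⟩
  simp only [ProbabilityMeasure.coe_mk, Measure.map_id]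
  rw [tendsto_iff_norm_sub_tendsto_zero]
  have hlim : Tendsto (fun n => (2 * (1 + K) * |t| ^ 3 + t ^ 4) / √(k n : ℝ)) atTop (nhds 0) :=
    tendsto_const_nhds.div_atTop
      (Real.tendsto_sqrt_atTop.comp (tendsto_natCast_atTop_atTop.comp hk))
  refine squeeze_zero' (Eventually.of_forall fun _ => norm_nonneg _) ?_ hlim
  filter_upwards [hk.eventually_gt_atTop 0] with n hn
  refine (norm_charFun_pi_map_sub_le (hX n).aemeasurable (h4 n) (hmean n) (hvar n) hn t).trans ?_
  gcongr
  exact hK n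

end TriangularCLT

section ChiSquare

lemma hasDerivAt_mul_exp_sq_div_two {q : ℝ → ℝ} {q' x : ℝ} (hq : HasDerivAt q q' x) :
    HasDerivAt (fun t => q t * Real.exp (t ^ 2 / 2)) ((q' + x * q x) * Real.exp (x ^ 2 / 2)) x := by
  have hsq : HasDerivAt (fun t : ℝ => t ^ 2 / 2) x x := by
    simpa using (hasDerivAt_pow 2 x).div_const 2
  exact (hq.fun_mul hsq.exp).congr_deriv (by ring)

lemma iteratedDeriv_four_mgf_gaussianReal :
    iteratedDeriv 4 (mgf id (gaussianReal 0 1)) = fun x =>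
      (3 + 6 * x ^ 2 + x ^ 4) * Real.exp (x ^ 2 / 2) := by
  have hderiv : ∀ {q q' : ℝ → ℝ}, (∀ x, HasDerivAt q (q' x) x) →
      deriv (fun x => q x * Real.exp (x ^ 2 / 2)) =
        fun x => (q' x + x * q x) * Real.exp (x ^ 2 / 2) := fun hq =>
    funext fun x => (hasDerivAt_mul_exp_sq_div_two (hq x)).deriv
  have hmgf : mgf id (gaussianReal 0 1) = fun x => (1 : ℝ) * Real.exp (x ^ 2 / 2) := by
    simp [mgf_id_gaussianReal]
  have hfirst := hderiv fun x => hasDerivAt_const x (1 : ℝ)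
  have hsecond := hderiv (q := fun x => 0 + x * 1) (q' := fun _ => 1) fun x => by
    simpa using hasDerivAt_id' x
  have hthird := hderiv (q := fun x => 1 + x * (0 + x * 1)) (q' := fun x => 2 * x) fun x => by
    simpa [pow_two] using (hasDerivAt_pow 2 x).const_add 1
  have hfourth := hderiv (q := fun x => 2 * x + x * (1 + x * (0 + x * 1)))
      (q' := fun x => 3 + 3 * x ^ 2) fun x => by
    refine (((hasDerivAt_id x).const_mul 3).add (hasDerivAt_pow 3 x)).congr_of_eventuallyEq
      (Eventually.of_forall fun y => ?_) |>.congr_deriv (by simp)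
    simp only [Pi.add_apply, id_eq]
    ring
  rw [iteratedDeriv_eq_iterate, hmgf]
  simp only [Function.iterate_succ, Function.iterate_zero, Function.comp_apply, id_eq]
  rw [hfirst, hsecond, hthird, hfourth]
  funext x
  ring

lemma integral_pow_four_gaussianReal : ∫ x, x ^ 4 ∂(gaussianReal 0 1) = 3 := by
  have hmoment := iteratedDeriv_mgf_zero (X := id) (μ := gaussianReal 0 1) (by simp) 4
  rw [iteratedDeriv_four_mgf_gaussianReal] at hmoment
  simpa using hmoment.symm

lemma integrable_pow_gaussianReal (k : ℕ) : Integrable (fun x => x ^ k) (gaussianReal 0 1) := by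
  have hnorm := (memLp_id_gaussianReal (μ := 0) (v := 1) (k : NNReal)).integrable_norm_pow'
  exact hnorm.mono' (by fun_prop) (ae_of_all _ fun x => by simp)

lemma integral_sq_gaussianReal : ∫ x, x ^ 2 ∂(gaussianReal 0 1) = 1 := by
  have hvar := variance_fun_id_gaussianReal (μ := 0) (v := 1)
  rw [variance_eq_integral (by fun_prop)] at hvar
  simpa using hvar

lemma memLp_sq_gaussianReal : MemLp (fun x : ℝ => x ^ 2) 2 (gaussianReal 0 1) := by
  rw [memLp_two_iff_integrable_sq (by fun_prop)]
  simpa [← pow_mul] using integrable_pow_gaussianReal 4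

lemma variance_sq_gaussianReal : Var[fun x => x ^ 2; gaussianReal 0 1] = 2 := by
  rw [variance_eq_sub memLp_sq_gaussianReal]
  simp only [Pi.pow_apply, ← pow_mul]
  norm_num [integral_pow_four_gaussianReal, integral_sq_gaussianReal]

lemma integrable_standardized_sq_pow_four_gaussianReal :
    Integrable (fun x : ℝ => ((x ^ 2 - 1) / √2) ^ 4) (gaussianReal 0 1) := by
  have hsqrt : √(2 : ℝ) ^ 4 = 4 := by
    rw [show 4 = 2 * 2 from rfl, pow_mul, Real.sq_sqrt (by norm_num)]
    norm_num
  have hexpand : ∀ x : ℝ, ((x ^ 2 - 1) / √2) ^ 4 =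
      (x ^ 8 - 4 * x ^ 6 + 6 * x ^ 4 - 4 * x ^ 2 + 1) / 4 := fun x => by
    rw [div_pow, hsqrt]
    ring
  have hpow := integrable_pow_gaussianReal
  simp_rw [hexpand]
  exact (((((hpow 8).sub ((hpow 6).const_mul 4)).add ((hpow 4).const_mul 6)).sub
    ((hpow 2).const_mul 4)).add (integrable_const 1)).div_const 4

lemma integral_standardized_sq_gaussianReal :
    ∫ x, (x ^ 2 - 1) / √2 ∂(gaussianReal 0 1) = 0 := by
  rw [MeasureTheory.integral_div,
    MeasureTheory.integral_sub (integrable_pow_gaussianReal 2) (integrable_const 1),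
    integral_sq_gaussianReal]
  simp

lemma integral_standardized_sq_sq_gaussianReal :
    ∫ x, ((x ^ 2 - 1) / √2) ^ 2 ∂(gaussianReal 0 1) = 1 := by
  have hvar := variance_sq_gaussianReal
  rw [variance_eq_integral (by fun_prop), integral_sq_gaussianReal] at hvar
  simp_rw [div_pow, Real.sq_sqrt (zero_le_two (α := ℝ))]
  rw [MeasureTheory.integral_div, hvar]
  norm_num

section Normed

variable {F : Type*} [NormedAddCommGroup F]

/-- The standardized squared norm of a vector `y`, the dimension of the ambient space being `m`:
under the standard Gaussian measure its law is the standardized `χ²_m` law. -/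
noncomputable def stdNormSq (m : ℝ) (y : F) : ℝ := (‖y‖ ^ 2 - m) / √(2 * m)

@[fun_prop]
lemma measurable_stdNormSq [MeasurableSpace F] [OpensMeasurableSpace F] (m : ℝ) :
    Measurable (stdNormSq m : F → ℝ) := by
  unfold stdNormSq
  fun_prop

lemma norm_inv_norm_smul_le_one [NormedSpace ℝ F] (y : F) : ‖‖y‖⁻¹ • y‖ ≤ 1 := by
  rw [norm_smul, norm_inv, norm_norm]
  exact inv_mul_le_one

end Normed

variable {F : Type*} [NormedAddCommGroup F] [InnerProductSpace ℝ F] [FiniteDimensional ℝ F]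
  [MeasurableSpace F] [BorelSpace F]

open Module (finrank)

lemma map_norm_sq_stdGaussian :
    (stdGaussian F).map (fun y => ‖y‖ ^ 2) =
      (Measure.pi fun _ : Fin (finrank ℝ F) => gaussianReal 0 1).map fun x => ∑ i, x i ^ 2 := by
  rw [stdGaussian, Measure.map_map (by fun_prop) (by fun_prop)]
  congr 1
  funext x
  rw [Function.comp_apply, (stdOrthonormalBasis ℝ F).sum_repr_symm (WithLp.toLp 2 x),
    LinearIsometryEquiv.norm_map]
  simp [EuclideanSpace.norm_sq_eq]

lemma memLp_norm_sq_stdGaussian : MemLp (fun y => ‖y‖ ^ 2) 2 (stdGaussian F) := by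
  rw [memLp_two_iff_integrable_sq (by fun_prop)]
  have hfour := (IsGaussian.memLp_id (stdGaussian F) 4 (by simp)).integrable_norm_pow (p := 4)
    (by norm_num)
  simpa [← pow_mul] using hfour

lemma integral_norm_sq_stdGaussian : ∫ y, ‖y‖ ^ 2 ∂(stdGaussian F) = finrank ℝ F := by
  have hcoord : ∀ i : Fin (finrank ℝ F),
      ∫ x : Fin (finrank ℝ F) → ℝ, x i ^ 2 ∂(Measure.pi fun _ => gaussianReal 0 1) = 1 := fun i =>
    (integral_comp_eval (μ := fun _ : Fin (finrank ℝ F) => gaussianReal 0 1)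
      (f := fun t : ℝ => t ^ 2) (by fun_prop)).trans integral_sq_gaussianReal
  have hmap : ∫ y, ‖y‖ ^ 2 ∂(stdGaussian F) =
      ∫ z, z ∂((stdGaussian F).map fun y => ‖y‖ ^ 2) := by
    rw [integral_map (by fun_prop) (by fun_prop)]
  rw [hmap, map_norm_sq_stdGaussian, integral_map (Measurable.aemeasurable (by fun_prop))
    (by fun_prop), integral_finsetSum _ fun i _ =>
      integrable_comp_eval (μ := fun _ : Fin (finrank ℝ F) => gaussianReal 0 1)
        (f := fun t : ℝ => t ^ 2) (integrable_pow_gaussianReal 2)]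
  simp [hcoord]

lemma variance_norm_sq_stdGaussian : Var[fun y => ‖y‖ ^ 2; stdGaussian F] = 2 * finrank ℝ F := by
  have hmap : Var[fun y => ‖y‖ ^ 2; stdGaussian F] =
      Var[id; (stdGaussian F).map fun y => ‖y‖ ^ 2] := by
    rw [variance_map (by fun_prop) (by fun_prop)]
    rfl
  have hsum := variance_sum_pi (μ := fun _ : Fin (finrank ℝ F) => gaussianReal 0 1)
    (X := fun _ x => x ^ 2) fun _ => memLp_sq_gaussianReal
  simp only [variance_sq_gaussianReal, Finset.sum_const, Finset.card_univ, Fintype.card_fin,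
    nsmul_eq_mul] at hsum
  rw [hmap, map_norm_sq_stdGaussian, variance_map (by fun_prop)
    (Measurable.aemeasurable (by fun_prop)), mul_comm, ← hsum]
  congr 1
  funext x
  simp

lemma integral_norm_pow_four_stdGaussian :
    ∫ y, ‖y‖ ^ 4 ∂(stdGaussian F) = finrank ℝ F * (finrank ℝ F + 2) := by
  have hvar := variance_norm_sq_stdGaussian (F := F)
  rw [variance_eq_sub memLp_norm_sq_stdGaussian, integral_norm_sq_stdGaussian] at hvar
  simp only [Pi.pow_apply, ← pow_mul] at hvar
  norm_num at hvar
  linarith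

lemma map_stdNormSq_stdGaussian :
    (stdGaussian F).map (stdNormSq (finrank ℝ F)) =
      (Measure.pi fun _ : Fin (finrank ℝ F) => gaussianReal 0 1).map fun x =>
        (√(finrank ℝ F : ℝ))⁻¹ * ∑ i, (x i ^ 2 - 1) / √2 := by
  have hcomp : (stdNormSq (finrank ℝ F) : F → ℝ) =
      (fun z : ℝ => (z - finrank ℝ F) / √(2 * finrank ℝ F)) ∘ fun y => ‖y‖ ^ 2 := rfl
  rw [hcomp, ← Measure.map_map (by fun_prop) (by fun_prop), map_norm_sq_stdGaussian,
    Measure.map_map (by fun_prop) (by fun_prop)]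
  congr 1
  funext x
  simp only [Function.comp_apply, ← Finset.sum_div, Finset.sum_sub_distrib, Finset.sum_const,
    Finset.card_univ, Fintype.card_fin, nsmul_eq_mul, mul_one]
  rw [Real.sqrt_mul zero_le_two]
  field_simp

theorem tendstoInDistribution_stdNormSq_stdGaussian {F : ℕ → Type*}
    [∀ n, NormedAddCommGroup (F n)] [∀ n, InnerProductSpace ℝ (F n)]
    [∀ n, FiniteDimensional ℝ (F n)] [∀ n, MeasurableSpace (F n)] [∀ n, BorelSpace (F n)]
    (hF : Tendsto (fun n => finrank ℝ (F n)) atTop atTop) :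
    TendstoInDistribution (fun n => (stdNormSq (finrank ℝ (F n)) : F n → ℝ)) atTop id
      (fun n => stdGaussian (F n)) (gaussianReal 0 1) := by
  have hclt := tendstoInDistribution_pi_inv_sqrt_mul_sum (P := fun _ => gaussianReal 0 1)
    (X := fun _ x => (x ^ 2 - 1) / √2) hF (fun _ => by fun_prop)
    (fun _ => integrable_standardized_sq_pow_four_gaussianReal)
    (fun _ => integral_standardized_sq_gaussianReal)
    (fun _ => integral_standardized_sq_sq_gaussianReal) (fun _ => le_rfl)
  refine ⟨fun n => by fun_prop, aemeasurable_id, hclt.tendsto.congr fun n => ?_⟩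
  exact Subtype.ext map_stdNormSq_stdGaussian.symm

/-- By rotation invariance of the Gaussian, all components of its direction are exchangeable. -/
lemma integral_inner_sq_mul_norm_stdGaussian_eq {φ : ℝ → ℝ} (hφ : Measurable φ) {d e : F}
    (hde : ‖d‖ = ‖e‖) :
    ∫ y, ⟪‖y‖⁻¹ • y, d⟫ ^ 2 * φ ‖y‖ ∂(stdGaussian F) =
      ∫ y, ⟪‖y‖⁻¹ • y, e⟫ ^ 2 * φ ‖y‖ ∂(stdGaussian F) := by
  let f := (ℝ ∙ (e - d))ᗮ.reflection
  have hf : f e = d := Submodule.reflection_sub hde.symm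
  conv_lhs => rw [← stdGaussian_map f]
  rw [integral_map f.continuous.aemeasurable (by fun_prop)]
  refine MeasureTheory.integral_congr_ae (ae_of_all _ fun y => ?_)
  simp only [f.norm_map]
  rw [← hf, ← map_smul, f.inner_map_map]

lemma integrable_inner_sq_mul_norm_stdGaussian {φ : ℝ → ℝ}
    (hint : Integrable (fun y => φ ‖y‖) (stdGaussian F)) (e : F) :
    Integrable (fun y => ⟪‖y‖⁻¹ • y, e⟫ ^ 2 * φ ‖y‖) (stdGaussian F) := by
  refine hint.bdd_mul (by fun_prop) (c := ‖e‖ ^ 2) (ae_of_all _ fun y => ?_)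
  rw [norm_pow, Real.norm_eq_abs]
  gcongr
  refine (abs_real_inner_le_norm _ _).trans ?_
  exact mul_le_of_le_one_left (norm_nonneg e) (norm_inv_norm_smul_le_one y)

lemma integral_inner_sq_mul_norm_stdGaussian_le {φ : ℝ → ℝ} (hφ : Measurable φ)
    (hφ_nonneg : ∀ r, 0 ≤ φ r) (hint : Integrable (fun y => φ ‖y‖) (stdGaussian F)) {e : F}
    (he : ‖e‖ = 1) :
    ∫ y, ⟪‖y‖⁻¹ • y, e⟫ ^ 2 * φ ‖y‖ ∂(stdGaussian F) ≤
      (∫ y, φ ‖y‖ ∂(stdGaussian F)) / finrank ℝ F := by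
  have : Nontrivial F := ⟨e, 0, fun h => by simp [h] at he⟩
  let b := stdOrthonormalBasis ℝ F
  have hint_comp := integrable_inner_sq_mul_norm_stdGaussian hint
  have hsum : ∑ i, ∫ y, ⟪‖y‖⁻¹ • y, b i⟫ ^ 2 * φ ‖y‖ ∂(stdGaussian F) ≤
      ∫ y, φ ‖y‖ ∂(stdGaussian F) := by
    rw [← integral_finsetSum _ fun i _ => hint_comp (b i)]
    refine MeasureTheory.integral_mono (integrable_finsetSum _ fun i _ => hint_comp (b i)) hint
      fun y => ?_
    simp only [← Finset.sum_mul]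
    rw [b.sum_sq_inner_left]
    exact mul_le_of_le_one_left (hφ_nonneg _)
      (pow_le_one₀ (norm_nonneg _) (norm_inv_norm_smul_le_one y))
  simp only [
    fun i => integral_inner_sq_mul_norm_stdGaussian_eq hφ ((b.norm_eq_one i).trans he.symm),
    Finset.sum_const, Finset.card_univ, Fintype.card_fin, nsmul_eq_mul] at hsum
  rw [le_div_iff₀ (by exact_mod_cast Module.finrank_pos), mul_comm]
  exact hsum

end ChiSquare

section OddKernel

lemma integral_eq_zero_of_comp_eq_neg {Ω : Type*} [MeasurableSpace Ω] {P : Measure Ω} {S : Ω → Ω}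
    (hS : MeasurePreserving S P P) {g : Ω → ℝ} (hg : AEStronglyMeasurable g P)
    (hodd : ∀ ω, g (S ω) = -g ω) : ∫ ω, g ω ∂P = 0 := by
  have hneg : ∫ ω, g ω ∂P = -∫ ω, g ω ∂P := by
    conv_lhs => rw [← hS.map_eq]
    rw [integral_map hS.aemeasurable (hS.map_eq.symm ▸ hg)]
    simp only [hodd, MeasureTheory.integral_neg]
  linarith

variable {ι Ω : Type*} [Fintype ι] [MeasurableSpace Ω] {P : Measure Ω} [IsProbabilityMeasure P]

lemma measurePreserving_pair_pi {i j : ι} (hij : i ≠ j) :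
    MeasurePreserving (fun ω : ι → Ω => (ω i, ω j)) (Measure.pi fun _ => P) (P.prod P) := by
  have hind : iIndepFun (fun (i : ι) (ω : ι → Ω) => ω i) (Measure.pi fun _ => P) :=
    iIndepFun_pi (X := fun _ => id) fun _ => aemeasurable_id
  have hpair := (indepFun_iff_map_prod_eq_prod_map_map (measurable_pi_apply i).aemeasurable
    (measurable_pi_apply j).aemeasurable).1 (hind.indepFun hij)
  refine ⟨by fun_prop, hpair.trans ?_⟩
  exact congrArg₂ Measure.prod (measurePreserving_eval (fun _ : ι => P) i).map_eq
    (measurePreserving_eval (fun _ : ι => P) j).map_eq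

/-- A symmetric square-integrable kernel on a probability space which changes sign when its first
argument is moved by some measure-preserving map. Sums of such a kernel over pairs of independent
points are degenerate U-statistics, whose terms are uncorrelated. -/
structure IsOddKernel (h : Ω → Ω → ℝ) (P : Measure Ω) : Prop where
  memLp_two : MemLp (fun z : Ω × Ω => h z.1 z.2) 2 (P.prod P)
  symm : ∀ x y, h x y = h y x
  exists_flip : ∃ T, MeasurePreserving T P P ∧ ∀ x y, h (T x) y = -h x y

variable {h : Ω → Ω → ℝ}

lemma IsOddKernel.memLp_two_pi (hh : IsOddKernel h P) {i j : ι} (hij : i ≠ j) :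
    MemLp (fun ω : ι → Ω => h (ω i) (ω j)) 2 (Measure.pi fun _ => P) :=
  hh.memLp_two.comp_measurePreserving (measurePreserving_pair_pi hij)

lemma IsOddKernel.memLp_two_mul_pi (hh : IsOddKernel h P) (v : ι → ℝ) {q : ι × ι}
    (hq : q.1 ≠ q.2) :
    MemLp (fun ω : ι → Ω => v q.1 * v q.2 * h (ω q.1) (ω q.2)) 2 (Measure.pi fun _ => P) :=
  (hh.memLp_two_pi hq).const_mul _

lemma measurePreserving_pi_ite [DecidableEq ι] {T : Ω → Ω} (hT : MeasurePreserving T P P) (a : ι) :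
    MeasurePreserving (fun (ω : ι → Ω) i => if i = a then T (ω i) else ω i)
      (Measure.pi fun _ => P) (Measure.pi fun _ => P) := by
  refine measurePreserving_pi (fun _ => P) (fun _ => P)
    (f := fun i y => if i = a then T y else y) fun i => ?_
  by_cases hi : i = a
  · simpa only [hi, if_true] using hT
  · simpa only [hi, if_false] using! MeasurePreserving.id P

lemma IsOddKernel.integral_mul_eq_zero (hh : IsOddKernel h P) {i j k l : ι} (hij : i ≠ j)
    (hkl : k ≠ l) (hne : ¬ (k = i ∧ l = j)) (hne_swap : ¬ (k = j ∧ l = i)) :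
    ∫ ω : ι → Ω, h (ω i) (ω j) * h (ω k) (ω l) ∂(Measure.pi fun _ => P) = 0 := by
  classical
  obtain ⟨T, hT, hflip⟩ := hh.exists_flip
  have hflip_right : ∀ x y, h x (T y) = -h x y := fun x y => by
    rw [hh.symm, hflip, hh.symm]
  have hmeas : AEStronglyMeasurable (fun ω : ι → Ω => h (ω i) (ω j) * h (ω k) (ω l))
      (Measure.pi fun _ => P) := (hh.memLp_two_pi hij).1.mul (hh.memLp_two_pi hkl).1
  -- One of the two indices `i`, `j` does not occur among `k`, `l`: flip the point it labels.
  by_cases hi : i = k ∨ i = l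
  · have hj : ¬ (j = k ∨ j = l) := by
      rintro (rfl | rfl) <;> rcases hi with rfl | rfl <;> simp_all
    push Not at hj
    refine integral_eq_zero_of_comp_eq_neg (measurePreserving_pi_ite hT j) hmeas fun ω => ?_
    simp [hij, hj.1.symm, hj.2.symm, hflip_right]
  · push Not at hi
    refine integral_eq_zero_of_comp_eq_neg (measurePreserving_pi_ite hT i) hmeas fun ω => ?_
    simp [hij.symm, hi.1.symm, hi.2.symm, hflip]

lemma IsOddKernel.sum_integral_mul_eq (hh : IsOddKernel h P) (v : ι → ℝ) {q : ι × ι}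
    (hq : q.1 ≠ q.2) :
    ∑ r ∈ (Finset.univ : Finset ι).offDiag, ∫ ω : ι → Ω, (v q.1 * v q.2 * h (ω q.1) (ω q.2)) *
        (v r.1 * v r.2 * h (ω r.1) (ω r.2)) ∂(Measure.pi fun _ => P) =
      2 * (v q.1 ^ 2 * v q.2 ^ 2) * ∫ z, h z.1 z.2 ^ 2 ∂(P.prod P) := by
  have hpull : ∀ r : ι × ι, ∫ ω : ι → Ω, (v q.1 * v q.2 * h (ω q.1) (ω q.2)) *
      (v r.1 * v r.2 * h (ω r.1) (ω r.2)) ∂(Measure.pi fun _ => P) =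
      v q.1 * v q.2 * (v r.1 * v r.2) *
        ∫ ω : ι → Ω, h (ω q.1) (ω q.2) * h (ω r.1) (ω r.2) ∂(Measure.pi fun _ => P) := fun r => by
    rw [← MeasureTheory.integral_const_mul]
    congr with ω
    ring
  have hself : ∫ ω : ι → Ω, h (ω q.1) (ω q.2) * h (ω q.1) (ω q.2) ∂(Measure.pi fun _ => P) =
      ∫ z, h z.1 z.2 ^ 2 ∂(P.prod P) := by
    have hpair := measurePreserving_pair_pi (P := P) hq
    simp_rw [← sq]
    rw [← hpair.map_eq, integral_map hpair.aemeasurable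
      (hpair.map_eq.symm ▸ hh.memLp_two.1.pow 2)]
  have hmem : q ∈ (Finset.univ : Finset ι).offDiag ∧ q.swap ∈ (Finset.univ : Finset ι).offDiag := by
    simpa [Finset.mem_offDiag] using ⟨hq, hq.symm⟩
  simp only [hpull]
  rw [Finset.sum_eq_add q q.swap (fun h => hq (congrArg Prod.fst h)) (fun r hr hne => ?_)
    (fun hq' => absurd hmem.1 hq') (fun hq' => absurd hmem.2 hq')]
  · simp only [Prod.fst_swap, Prod.snd_swap, fun ω : ι → Ω => hh.symm (ω q.2) (ω q.1), hself]
    ring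
  · rw [hh.integral_mul_eq_zero hq (Finset.mem_offDiag.1 hr).2.2
      (fun heq => hne.1 (Prod.ext heq.1 heq.2)) (fun heq => hne.2 (Prod.ext heq.1 heq.2)),
      mul_zero]

lemma IsOddKernel.integral_sum_offDiag_sq (hh : IsOddKernel h P) (v : ι → ℝ) :
    ∫ ω : ι → Ω, (∑ q ∈ (Finset.univ : Finset ι).offDiag,
        v q.1 * v q.2 * h (ω q.1) (ω q.2)) ^ 2 ∂(Measure.pi fun _ => P) =
      2 * (∑ q ∈ (Finset.univ : Finset ι).offDiag, v q.1 ^ 2 * v q.2 ^ 2) *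
        ∫ z, h z.1 z.2 ^ 2 ∂(P.prod P) := by
  have hint : ∀ q ∈ (Finset.univ : Finset ι).offDiag, ∀ r ∈ (Finset.univ : Finset ι).offDiag,
      Integrable (fun ω : ι → Ω => (v q.1 * v q.2 * h (ω q.1) (ω q.2)) *
        (v r.1 * v r.2 * h (ω r.1) (ω r.2))) (Measure.pi fun _ => P) := fun q hq r hr =>
    (hh.memLp_two_mul_pi v (Finset.mem_offDiag.1 hq).2.2).integrable_mul
      (hh.memLp_two_mul_pi v (Finset.mem_offDiag.1 hr).2.2)
  simp_rw [sq (Finset.sum _ _), Finset.sum_mul_sum]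
  rw [integral_finsetSum _ fun q hq => integrable_finsetSum _ fun r hr => hint q hq r hr,
    Finset.mul_sum, Finset.sum_mul]
  refine Finset.sum_congr rfl fun q hq => ?_
  rw [integral_finsetSum _ fun r hr => hint q hq r hr,
    hh.sum_integral_mul_eq v (Finset.mem_offDiag.1 hq).2.2]

lemma IsOddKernel.integral_sum_offDiag_sq_le (hh : IsOddKernel h P) (v : ι → ℝ) :
    ∫ ω : ι → Ω, (∑ q ∈ (Finset.univ : Finset ι).offDiag,
        v q.1 * v q.2 * h (ω q.1) (ω q.2)) ^ 2 ∂(Measure.pi fun _ => P) ≤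
      2 * (∑ i, v i ^ 2) ^ 2 * ∫ z, h z.1 z.2 ^ 2 ∂(P.prod P) := by
  rw [hh.integral_sum_offDiag_sq]
  gcongr
  rw [sq, Finset.sum_mul_sum, ← Finset.sum_product']
  exact Finset.sum_le_sum_of_subset_of_nonneg (fun q _ => by simp) fun _ _ _ => by positivity

end OddKernel

section DirectionGap

open Module (finrank)

variable {F : Type*} [NormedAddCommGroup F] [InnerProductSpace ℝ F]

/-- The error made in replacing the inner product of the directions of two vectors by the inner
product of the vectors, rescaled by the dimension. -/
noncomputable def dirGap (x y : F) : ℝ := ⟪‖x‖⁻¹ • x, ‖y‖⁻¹ • y⟫ - ⟪x, y⟫ / finrank ℝ F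

lemma dirGap_comm (x y : F) : dirGap x y = dirGap y x := by
  rw [dirGap, dirGap, real_inner_comm, real_inner_comm x y]

lemma dirGap_neg_left (x y : F) : dirGap (-x) y = -dirGap x y := by
  simp only [dirGap, norm_neg, smul_neg, inner_neg_left]
  ring

lemma dirGap_eq_inner_mul (x y : F) :
    dirGap x y = ⟪‖y‖⁻¹ • y, ‖x‖⁻¹ • x⟫ * (1 - ‖x‖ * ‖y‖ / finrank ℝ F) := by
  rcases eq_or_ne x 0 with rfl | hx
  · simp [dirGap]
  rcases eq_or_ne y 0 with rfl | hy
  · simp [dirGap]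
  have hx_norm := norm_ne_zero_iff.2 hx
  have hy_norm := norm_ne_zero_iff.2 hy
  rw [dirGap, real_inner_comm]
  simp only [inner_smul_left, inner_smul_right, RCLike.conj_to_real]
  rw [real_inner_comm x y]
  field_simp

lemma sq_inner_direction_le_one (x y : F) : ⟪‖y‖⁻¹ • y, ‖x‖⁻¹ • x⟫ ^ 2 ≤ 1 := by
  rw [← sq_abs]
  exact pow_le_one₀ (abs_nonneg _) ((abs_real_inner_le_norm _ _).trans
    (mul_le_one₀ (norm_inv_norm_smul_le_one y) (norm_nonneg _) (norm_inv_norm_smul_le_one x)))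

lemma dirGap_sq_le (x y : F) :
    dirGap x y ^ 2 ≤ ⟪‖y‖⁻¹ • y, ‖x‖⁻¹ • x⟫ ^ 2 *
      (1 - ‖x‖ ^ 2 / (finrank ℝ F : ℝ) ^ 2 * ‖y‖ ^ 2) ^ 2 := by
  have hratio : 0 ≤ ‖x‖ * ‖y‖ / finrank ℝ F := by positivity
  have hfactor : 1 - ‖x‖ ^ 2 / (finrank ℝ F : ℝ) ^ 2 * ‖y‖ ^ 2 =
      (1 - ‖x‖ * ‖y‖ / finrank ℝ F) * (1 + ‖x‖ * ‖y‖ / finrank ℝ F) := by ring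
  rw [dirGap_eq_inner_mul, hfactor, mul_pow, mul_pow]
  gcongr
  exact le_mul_of_one_le_right (sq_nonneg _) (one_le_pow₀ (by linarith))

lemma norm_sum_direction_sq_sub {ι : Type*} [Fintype ι] (v : ι → ℝ) (ω : ι → F) :
    ‖∑ i, v i • (‖ω i‖⁻¹ • ω i)‖ ^ 2 - ‖∑ i, v i • ω i‖ ^ 2 / finrank ℝ F =
      (∑ i, v i ^ 2 * dirGap (ω i) (ω i)) +
        ∑ q ∈ (Finset.univ : Finset ι).offDiag, v q.1 * v q.2 * dirGap (ω q.1) (ω q.2) := by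
  classical
  have hdouble : (∑ i, v i ^ 2 * dirGap (ω i) (ω i)) +
      ∑ q ∈ (Finset.univ : Finset ι).offDiag, v q.1 * v q.2 * dirGap (ω q.1) (ω q.2) =
      ∑ i, ∑ j, v i * v j * dirGap (ω i) (ω j) := by
    rw [← Finset.sum_product', ← Finset.diag_union_offDiag,
      Finset.sum_union (Finset.disjoint_diag_offDiag _), Finset.sum_diag]
    simp only [sq]
  rw [hdouble, ← real_inner_self_eq_norm_sq, ← real_inner_self_eq_norm_sq]
  simp only [sum_inner, inner_sum, Finset.sum_div, ← Finset.sum_sub_distrib, dirGap]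
  rw [Finset.sum_comm]
  refine Finset.sum_congr rfl fun i _ => Finset.sum_congr rfl fun j _ => ?_
  simp only [inner_smul_left, inner_smul_right, RCLike.conj_to_real]
  rw [real_inner_comm]
  ring

variable [FiniteDimensional ℝ F] [MeasurableSpace F] [BorelSpace F]

@[fun_prop]
lemma measurable_dirGap : Measurable fun z : F × F => dirGap z.1 z.2 := by
  unfold dirGap
  fun_prop

lemma integrable_norm_sq_stdGaussian : Integrable (fun y => ‖y‖ ^ 2) (stdGaussian F) :=
  memLp_norm_sq_stdGaussian.integrable one_le_two

lemma integrable_norm_pow_four_stdGaussian : Integrable (fun y => ‖y‖ ^ 4) (stdGaussian F) := by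
  simpa [← pow_mul] using memLp_norm_sq_stdGaussian.integrable_sq

lemma integrable_quadratic_norm_sq_stdGaussian (a b c : ℝ) :
    Integrable (fun y => a - b * ‖y‖ ^ 2 + c * ‖y‖ ^ 4) (stdGaussian F) :=
  ((integrable_const a).sub (integrable_norm_sq_stdGaussian.const_mul b)).add
    (integrable_norm_pow_four_stdGaussian.const_mul c)

lemma integral_quadratic_norm_sq_stdGaussian (a b c : ℝ) :
    ∫ y, (a - b * ‖y‖ ^ 2 + c * ‖y‖ ^ 4) ∂(stdGaussian F) =
      a - b * finrank ℝ F + c * (finrank ℝ F * (finrank ℝ F + 2)) := by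
  have hsq := (integrable_norm_sq_stdGaussian (F := F)).const_mul b
  have haffine : Integrable (fun y => a - b * ‖y‖ ^ 2) (stdGaussian F) :=
    (integrable_const a).sub hsq
  rw [MeasureTheory.integral_add haffine (integrable_norm_pow_four_stdGaussian.const_mul c),
    MeasureTheory.integral_sub (integrable_const a) hsq, MeasureTheory.integral_const_mul,
    MeasureTheory.integral_const_mul, integral_norm_sq_stdGaussian,
    integral_norm_pow_four_stdGaussian]
  simp

lemma integrable_dirGap_sq :
    Integrable (fun z => dirGap z.1 z.2 ^ 2) ((stdGaussian F).prod (stdGaussian F)) := by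
  have hsq := integrable_norm_sq_stdGaussian (F := F)
  have hfour := integrable_norm_pow_four_stdGaussian (F := F)
  have hbound := ((integrable_const (1 : ℝ)).sub
    ((hsq.mul_prod hsq).const_mul (2 / (finrank ℝ F : ℝ) ^ 2))).add
    ((hfour.mul_prod hfour).const_mul (1 / (finrank ℝ F : ℝ) ^ 4))
  refine hbound.mono' (measurable_dirGap.pow_const 2).aestronglyMeasurable
    (ae_of_all _ fun z => ?_)
  rw [Real.norm_of_nonneg (sq_nonneg _)]
  refine (dirGap_sq_le _ _).trans ((mul_le_of_le_one_left (sq_nonneg _)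
    (sq_inner_direction_le_one _ _)).trans_eq ?_)
  simp only [Pi.add_apply, Pi.sub_apply]
  ring

/-- Given the lengths, the direction of `y` is uniform, so that its squared component along `x`
contributes a factor `1 / finrank ℝ F`. -/
lemma integral_dirGap_sq_left_le (x : F) :
    ∫ y, dirGap x y ^ 2 ∂(stdGaussian F) ≤
      1 / finrank ℝ F - 2 / (finrank ℝ F : ℝ) ^ 2 * ‖x‖ ^ 2 +
        (finrank ℝ F + 2) / (finrank ℝ F : ℝ) ^ 4 * ‖x‖ ^ 4 := by
  rcases eq_or_ne x 0 with rfl | hx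
  · simp [dirGap]
  have : Nontrivial F := ⟨x, 0, hx⟩
  have hd : (finrank ℝ F : ℝ) ≠ 0 := by exact_mod_cast Module.finrank_pos.ne'
  have hexpand : ∀ r : ℝ, (1 - ‖x‖ ^ 2 / (finrank ℝ F : ℝ) ^ 2 * r ^ 2) ^ 2 =
      1 - 2 * (‖x‖ ^ 2 / (finrank ℝ F : ℝ) ^ 2) * r ^ 2 +
        ‖x‖ ^ 4 / (finrank ℝ F : ℝ) ^ 4 * r ^ 4 := fun r => by ring
  have hint : Integrable (fun y => (1 - ‖x‖ ^ 2 / (finrank ℝ F : ℝ) ^ 2 * ‖y‖ ^ 2) ^ 2)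
      (stdGaussian F) := by
    simp_rw [hexpand]
    exact integrable_quadratic_norm_sq_stdGaussian _ _ _
  calc ∫ y, dirGap x y ^ 2 ∂(stdGaussian F)
      ≤ ∫ y, ⟪‖y‖⁻¹ • y, ‖x‖⁻¹ • x⟫ ^ 2 *
          (1 - ‖x‖ ^ 2 / (finrank ℝ F : ℝ) ^ 2 * ‖y‖ ^ 2) ^ 2 ∂(stdGaussian F) :=
        integral_mono_of_nonneg (ae_of_all _ fun _ => sq_nonneg _)
          (integrable_inner_sq_mul_norm_stdGaussian
            (φ := fun r => (1 - ‖x‖ ^ 2 / (finrank ℝ F : ℝ) ^ 2 * r ^ 2) ^ 2) hint _)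
          (ae_of_all _ fun y => dirGap_sq_le x y)
    _ ≤ (∫ y, (1 - ‖x‖ ^ 2 / (finrank ℝ F : ℝ) ^ 2 * ‖y‖ ^ 2) ^ 2 ∂(stdGaussian F)) /
          finrank ℝ F :=
        integral_inner_sq_mul_norm_stdGaussian_le
          (φ := fun r => (1 - ‖x‖ ^ 2 / (finrank ℝ F : ℝ) ^ 2 * r ^ 2) ^ 2) (by fun_prop)
          (fun _ => sq_nonneg _) hint (norm_smul_inv_norm hx)
    _ = _ := by
        simp_rw [hexpand]
        rw [integral_quadratic_norm_sq_stdGaussian]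
        field_simp

lemma isOddKernel_dirGap : IsOddKernel (dirGap (F := F)) (stdGaussian F) where
  memLp_two := (memLp_two_iff_integrable_sq measurable_dirGap.aestronglyMeasurable).2
    integrable_dirGap_sq
  symm := dirGap_comm
  exists_flip := ⟨fun y => -y, ⟨measurable_neg, stdGaussian_map (LinearIsometryEquiv.neg ℝ)⟩,
    dirGap_neg_left⟩

variable [Nontrivial F]

lemma integral_dirGap_sq_le :
    ∫ z, dirGap z.1 z.2 ^ 2 ∂((stdGaussian F).prod (stdGaussian F)) ≤
      8 / (finrank ℝ F : ℝ) ^ 2 := by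
  rw [MeasureTheory.integral_prod _ integrable_dirGap_sq]
  refine (MeasureTheory.integral_mono integrable_dirGap_sq.integral_prod_left
    (integrable_quadratic_norm_sq_stdGaussian _ _ _) integral_dirGap_sq_left_le).trans ?_
  rw [integral_quadratic_norm_sq_stdGaussian, ← sub_nonneg]
  set d : ℝ := (finrank ℝ F : ℝ)
  have hd_one : 1 ≤ d := Nat.one_le_cast.2 Module.finrank_pos
  have hgap : 8 / d ^ 2 - (1 / d - 2 / d ^ 2 * d + (d + 2) / d ^ 4 * (d * (d + 2))) =
      4 * (d - 1) / d ^ 3 := by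
    field_simp
    ring
  rw [hgap]
  exact div_nonneg (by linarith) (by positivity)

lemma nullSingletonClass_stdGaussian : NullSingletonClass (stdGaussian F) := by
  refine IsGaussian.nullSingletonClass fun x hx => ?_
  have hvar := variance_norm_sq_stdGaussian (F := F)
  rw [hx, variance_dirac] at hvar
  have hd : (0 : ℝ) < finrank ℝ F := by exact_mod_cast Module.finrank_pos
  linarith

lemma dirGap_self_ae_eq :
    (fun y => dirGap y y) =ᵐ[stdGaussian F] fun y => 1 - ‖y‖ ^ 2 / finrank ℝ F := by
  have := nullSingletonClass_stdGaussian (F := F)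
  filter_upwards [Measure.ae_ne (stdGaussian F) 0] with y hy
  rw [dirGap, real_inner_self_eq_norm_sq, real_inner_self_eq_norm_sq, norm_smul, norm_inv,
    norm_norm, inv_mul_cancel₀ (norm_ne_zero_iff.2 hy), one_pow]

lemma memLp_dirGap_self : MemLp (fun y => dirGap y y) 2 (stdGaussian F) :=
  (memLp_congr_ae dirGap_self_ae_eq).2
    ((memLp_const (1 : ℝ)).sub (memLp_norm_sq_stdGaussian.mul_const (finrank ℝ F : ℝ)⁻¹))

lemma integral_dirGap_self : ∫ y, dirGap y y ∂(stdGaussian F) = 0 := by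
  have hd : (finrank ℝ F : ℝ) ≠ 0 := by exact_mod_cast Module.finrank_pos.ne'
  rw [MeasureTheory.integral_congr_ae dirGap_self_ae_eq,
    MeasureTheory.integral_sub (integrable_const _) (integrable_norm_sq_stdGaussian.div_const _),
    MeasureTheory.integral_div, integral_norm_sq_stdGaussian]
  simp [hd]

lemma variance_dirGap_self : Var[fun y => dirGap y y; stdGaussian F] = 2 / finrank ℝ F := by
  have hd : (finrank ℝ F : ℝ) ≠ 0 := by exact_mod_cast Module.finrank_pos.ne'
  rw [variance_congr dirGap_self_ae_eq, variance_const_sub (by fun_prop)]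
  simp only [div_eq_inv_mul _ (finrank ℝ F : ℝ)]
  rw [variance_const_mul, variance_norm_sq_stdGaussian]
  field_simp

variable {ι : Type*} [Fintype ι]

lemma memLp_sum_dirGap_self (w : ι → ℝ) :
    MemLp (fun ω : ι → F => ∑ i, w i * dirGap (ω i) (ω i)) 2
      (Measure.pi fun _ => stdGaussian F) :=
  memLp_finsetSum _ fun i _ => (memLp_dirGap_self.const_mul (w i)).comp_measurePreserving
    (measurePreserving_eval (fun _ => stdGaussian F) i)

lemma integral_sum_dirGap_self_sq (w : ι → ℝ) :
    ∫ ω : ι → F, (∑ i, w i * dirGap (ω i) (ω i)) ^ 2 ∂(Measure.pi fun _ => stdGaussian F) =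
      (∑ i, w i ^ 2) * (2 / finrank ℝ F) := by
  have hterm : ∀ i, MemLp (fun y : F => w i * dirGap y y) 2 (stdGaussian F) := fun i =>
    memLp_dirGap_self.const_mul (w i)
  have hmean : ∫ ω : ι → F, ∑ i, w i * dirGap (ω i) (ω i) ∂(Measure.pi fun _ => stdGaussian F) =
      0 := by
    rw [integral_finsetSum _ fun i _ =>
      integrable_comp_eval (μ := fun _ => stdGaussian F) ((hterm i).integrable one_le_two)]
    refine Finset.sum_eq_zero fun i _ => ?_
    rw [integral_comp_eval (μ := fun _ => stdGaussian F) (f := fun y => w i * dirGap y y)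
      (hterm i).1, MeasureTheory.integral_const_mul, integral_dirGap_self, mul_zero]
  have hvar := variance_sum_pi (μ := fun _ : ι => stdGaussian F)
    (X := fun i y => w i * dirGap y y) hterm
  rw [variance_of_integral_eq_zero (by
    simpa only [Finset.sum_fn] using (memLp_sum_dirGap_self w).aemeasurable)
    (by simpa only [Finset.sum_apply] using hmean)] at hvar
  simp only [Finset.sum_apply, variance_const_mul, variance_dirGap_self] at hvar
  rw [hvar, Finset.sum_mul]

lemma memLp_norm_sum_direction_sq_sub (v : ι → ℝ) :
    MemLp (fun ω : ι → F =>
      ‖∑ i, v i • (‖ω i‖⁻¹ • ω i)‖ ^ 2 - ‖∑ i, v i • ω i‖ ^ 2 / finrank ℝ F) 2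
      (Measure.pi fun _ => stdGaussian F) := by
  simp_rw [norm_sum_direction_sq_sub]
  exact (memLp_sum_dirGap_self fun i => v i ^ 2).add
    (memLp_finsetSum _ fun q hq =>
      isOddKernel_dirGap.memLp_two_mul_pi v (Finset.mem_offDiag.1 hq).2.2)

theorem integral_norm_sum_direction_sq_sub_sq_le (v : ι → ℝ) :
    ∫ ω : ι → F, (‖∑ i, v i • (‖ω i‖⁻¹ • ω i)‖ ^ 2 -
        ‖∑ i, v i • ω i‖ ^ 2 / finrank ℝ F) ^ 2 ∂(Measure.pi fun _ => stdGaussian F) ≤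
      4 * (∑ i, v i ^ 4) / finrank ℝ F +
        32 * (∑ i, v i ^ 2) ^ 2 / (finrank ℝ F : ℝ) ^ 2 := by
  have hdiag := (memLp_sum_dirGap_self (F := F) fun i => v i ^ 2).integrable_sq
  have hoffDiag := (memLp_finsetSum (p := 2) (μ := Measure.pi fun _ : ι => stdGaussian F)
    (Finset.univ : Finset ι).offDiag fun q hq =>
      isOddKernel_dirGap.memLp_two_mul_pi v (Finset.mem_offDiag.1 hq).2.2).integrable_sq
  have hle := MeasureTheory.integral_mono (memLp_norm_sum_direction_sq_sub v).integrable_sq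
    ((hdiag.const_mul 2).add (hoffDiag.const_mul 2)) fun ω => by
      simp only [norm_sum_direction_sq_sub, Pi.add_apply, ← mul_add]
      exact add_sq_le
  refine hle.trans ?_
  simp only [Pi.add_apply]
  rw [MeasureTheory.integral_add (hdiag.const_mul 2) (hoffDiag.const_mul 2),
    MeasureTheory.integral_const_mul, MeasureTheory.integral_const_mul,
    integral_sum_dirGap_self_sq]
  calc _ ≤ 2 * ((∑ i, (v i ^ 2) ^ 2) * (2 / finrank ℝ F)) +
        2 * (2 * (∑ i, v i ^ 2) ^ 2 * (8 / (finrank ℝ F : ℝ) ^ 2)) := by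
        gcongr
        refine (isOddKernel_dirGap.integral_sum_offDiag_sq_le v).trans ?_
        gcongr
        exact integral_dirGap_sq_le
    _ = _ := by
        simp only [← pow_mul]
        ring

end DirectionGap

section SelfNormalizedSquares

lemma sum_sq_div_sq_sum_le {ι : Type*} [Fintype ι] {a : ι → ℝ} (ha : ∀ i, 0 ≤ a i) {c : ℝ}
    (hc : 0 < c) :
    (∑ i, a i ^ 2) / (∑ i, a i) ^ 2 ≤ 4 / c ^ 2 * (∑ i, a i ^ 2 + (∑ i, a i - c) ^ 2) := by
  have hsum_sq : 0 ≤ ∑ i, a i ^ 2 := Finset.sum_nonneg fun i _ => sq_nonneg _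
  have hle_sq : ∑ i, a i ^ 2 ≤ (∑ i, a i) ^ 2 := Finset.sum_sq_le_sq_sum_of_nonneg fun i _ => ha i
  rcases le_or_gt (c / 2) (∑ i, a i) with hlarge | hsmall
  · calc (∑ i, a i ^ 2) / (∑ i, a i) ^ 2
        ≤ (∑ i, a i ^ 2) / (c / 2) ^ 2 := by gcongr
      _ = 4 / c ^ 2 * ∑ i, a i ^ 2 := by field
      _ ≤ _ := by gcongr; exact le_add_of_nonneg_right (sq_nonneg _)
  · have hfar : c ^ 2 / 4 ≤ (∑ i, a i - c) ^ 2 := by nlinarith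
    calc (∑ i, a i ^ 2) / (∑ i, a i) ^ 2 ≤ 1 := div_le_one_of_le₀ hle_sq (sq_nonneg _)
      _ = 4 / c ^ 2 * (c ^ 2 / 4) := by field
      _ ≤ _ := by gcongr; exact hfar.trans (le_add_of_nonneg_left hsum_sq)

variable {Ω : Type*} [MeasurableSpace Ω] {P : Measure Ω} [IsProbabilityMeasure P] {x : Ω → ℝ}
  {ι : Type*} [Fintype ι]

lemma integral_sum_pi (hx : Integrable x P) :
    ∫ ω : ι → Ω, ∑ i, x (ω i) ∂(Measure.pi fun _ => P) = Fintype.card ι * ∫ ω, x ω ∂P := by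
  rw [integral_finsetSum _ fun i _ => integrable_comp_eval (μ := fun _ => P) hx]
  simp [integral_comp_eval (μ := fun _ : ι => P) hx.1]

lemma memLp_sum_pi (hx : MemLp x 2 P) :
    MemLp (fun ω : ι → Ω => ∑ i, x (ω i)) 2 (Measure.pi fun _ => P) :=
  memLp_finsetSum _ fun i _ => hx.comp_measurePreserving (measurePreserving_eval (fun _ => P) i)

lemma integral_sum_sub_mean_sq_pi_le (hx : MemLp x 2 P) :
    ∫ ω : ι → Ω, (∑ i, x (ω i) - Fintype.card ι * ∫ ω, x ω ∂P) ^ 2 ∂(Measure.pi fun _ => P) ≤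
      Fintype.card ι * ∫ ω, x ω ^ 2 ∂P := by
  rw [← integral_sum_pi (hx.integrable one_le_two),
    ← variance_eq_integral (memLp_sum_pi hx).aemeasurable]
  have hvar := variance_sum_pi (μ := fun _ : ι => P) (X := fun _ => x) fun _ => hx
  simp only [Finset.sum_const, Finset.card_univ, nsmul_eq_mul, Finset.sum_fn] at hvar
  rw [hvar]
  gcongr
  exact variance_le_expectation_sq hx.1

lemma integral_sum_sq_div_sq_sum_le [Nonempty ι] (hx : MemLp x 2 P) (hx_nonneg : 0 ≤ x)
    (hmean : 0 < ∫ ω, x ω ∂P) {K : ℝ} (hK : ∫ ω, x ω ^ 2 ∂P ≤ K * (∫ ω, x ω ∂P) ^ 2) :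
    ∫ ω : ι → Ω, (∑ i, x (ω i) ^ 2) / (∑ i, x (ω i)) ^ 2 ∂(Measure.pi fun _ => P) ≤
      8 * K / Fintype.card ι := by
  set μ := ∫ ω, x ω ∂P
  have : (0 : ℝ) < Fintype.card ι := Nat.cast_pos.2 Fintype.card_pos
  have hsq : Integrable (fun ω : ι → Ω => ∑ i, x (ω i) ^ 2) (Measure.pi fun _ => P) :=
    integrable_finsetSum _ fun i _ =>
      integrable_comp_eval (μ := fun _ => P) (f := fun ω => x ω ^ 2) hx.integrable_sq
  have hdev : Integrable (fun ω : ι → Ω => (∑ i, x (ω i) - Fintype.card ι * μ) ^ 2)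
      (Measure.pi fun _ => P) := ((memLp_sum_pi hx).sub (memLp_const _)).integrable_sq
  calc _ ≤ ∫ ω : ι → Ω, 4 / (Fintype.card ι * μ) ^ 2 *
          (∑ i, x (ω i) ^ 2 + (∑ i, x (ω i) - Fintype.card ι * μ) ^ 2) ∂(Measure.pi fun _ => P) :=
        integral_mono_of_nonneg (ae_of_all _ fun ω => by positivity)
          ((hsq.add hdev).const_mul _)
          (ae_of_all _ fun ω => sum_sq_div_sq_sum_le (fun i => hx_nonneg _) (by positivity))
    _ = 4 / (Fintype.card ι * μ) ^ 2 * (Fintype.card ι * ∫ ω, x ω ^ 2 ∂P +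
          ∫ ω : ι → Ω, (∑ i, x (ω i) - Fintype.card ι * μ) ^ 2 ∂(Measure.pi fun _ => P)) := by
        rw [MeasureTheory.integral_const_mul, MeasureTheory.integral_add hsq hdev,
          integral_sum_pi hx.integrable_sq]
    _ ≤ 4 / (Fintype.card ι * μ) ^ 2 *
          (Fintype.card ι * (K * μ ^ 2) + Fintype.card ι * (K * μ ^ 2)) := by
        gcongr
        exact (integral_sum_sub_mean_sq_pi_le hx).trans (by gcongr)
    _ = 8 * K / Fintype.card ι := by
        field_simp
        ring

end SelfNormalizedSquares

section ConvergingTogether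

variable {ι E E' Ω₁ Ω₂ : Type*} {l : Filter ι} {Ω Ω' : ι → Type*}
  [∀ i, MeasurableSpace (Ω i)] [∀ i, MeasurableSpace (Ω' i)]
  {P : ∀ i, Measure (Ω i)} [∀ i, IsProbabilityMeasure (P i)]
  {P' : ∀ i, Measure (Ω' i)} [∀ i, IsProbabilityMeasure (P' i)]
  [MeasurableSpace Ω₁] {ν : Measure Ω₁} [IsProbabilityMeasure ν]
  [MeasurableSpace Ω₂] {ν' : Measure Ω₂} [IsProbabilityMeasure ν']

lemma integral_abs_le_sqrt_integral_sq {Ω : Type*} [MeasurableSpace Ω] {P : Measure Ω}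
    [IsProbabilityMeasure P] {X : Ω → ℝ} (hX : MemLp X 2 P) :
    ∫ ω, |X ω| ∂P ≤ √(∫ ω, X ω ^ 2 ∂P) := by
  have hvar := variance_nonneg |X| P
  rw [variance_eq_sub hX.abs] at hvar
  simp only [Pi.pow_apply, Pi.abs_apply, sq_abs] at hvar
  exact Real.le_sqrt_of_sq_le (by linarith)

lemma tendstoInDistribution_of_map_eq [TopologicalSpace E] [MeasurableSpace E]
    [OpensMeasurableSpace E] {X : ∀ i, Ω i → E} {X' : ∀ i, Ω' i → E} {Z : Ω₁ → E}
    (hX : TendstoInDistribution X l Z P ν) (hX' : ∀ i, AEMeasurable (X' i) (P' i))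
    (hmap : ∀ i, (P i).map (X i) = (P' i).map (X' i)) : TendstoInDistribution X' l Z P' ν where
  forall_aemeasurable := hX'
  aemeasurable_limit := hX.aemeasurable_limit
  tendsto := hX.tendsto.congr fun i => Subtype.ext (hmap i)

lemma tendstoInDistribution_comp_measurePreserving [TopologicalSpace E] [MeasurableSpace E]
    [OpensMeasurableSpace E] {X : ∀ i, Ω i → E} {φ : ∀ i, Ω' i → Ω i} {Z : Ω₁ → E}
    (hX : TendstoInDistribution X l Z P ν) (hφ : ∀ i, MeasurePreserving (φ i) (P' i) (P i)) :
    TendstoInDistribution (fun i => X i ∘ φ i) l Z P' ν :=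
  tendstoInDistribution_of_map_eq hX
    (fun i => (hX.forall_aemeasurable i).comp_quasiMeasurePreserving (hφ i).quasiMeasurePreserving)
    fun i => by
      rw [← AEMeasurable.map_map_of_aemeasurable (by
        simpa only [(hφ i).map_eq] using hX.forall_aemeasurable i) (hφ i).aemeasurable,
        (hφ i).map_eq]

lemma map_prodMap_prod {Ω Ω' : Type*} [MeasurableSpace Ω] [MeasurableSpace Ω'] {P : Measure Ω}
    {P' : Measure Ω'} [IsProbabilityMeasure P] [IsProbabilityMeasure P'] [MeasurableSpace E]
    [MeasurableSpace E'] {X : Ω → E} {X' : Ω' → E'} (hX : AEMeasurable X P)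
    (hX' : AEMeasurable X' P') :
    (P.prod P').map (Prod.map X X') = (P.map X).prod (P'.map X') := by
  have hfst := hX.comp_quasiMeasurePreserving
    (Measure.quasiMeasurePreserving_fst (μ := P) (ν := P'))
  have hsnd := hX'.comp_quasiMeasurePreserving
    (Measure.quasiMeasurePreserving_snd (μ := P) (ν := P'))
  have hlaw := (indepFun_iff_map_prod_eq_prod_map_map hfst hsnd).1 (indepFun_prod₀ hX hX')
  rwa [← AEMeasurable.map_map_of_aemeasurable (by simpa using hX) measurable_fst.aemeasurable,
    ← AEMeasurable.map_map_of_aemeasurable (by simpa using hX') measurable_snd.aemeasurable,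
    measurePreserving_fst.map_eq, measurePreserving_snd.map_eq] at hlaw

lemma tendstoInDistribution_prodMap [TopologicalSpace E] [MeasurableSpace E] [BorelSpace E]
    [SecondCountableTopology E] [TopologicalSpace.PseudoMetrizableSpace E]
    [TopologicalSpace E'] [MeasurableSpace E'] [BorelSpace E'] [SecondCountableTopology E']
    [TopologicalSpace.PseudoMetrizableSpace E']
    {X : ∀ i, Ω i → E} {X' : ∀ i, Ω' i → E'} {Z : Ω₁ → E} {Z' : Ω₂ → E'}
    (hX : TendstoInDistribution X l Z P ν) (hX' : TendstoInDistribution X' l Z' P' ν') :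
    TendstoInDistribution (fun i => Prod.map (X i) (X' i)) l (Prod.map Z Z')
      (fun i => (P i).prod (P' i)) (ν.prod ν') where
  forall_aemeasurable i :=
    ((hX.forall_aemeasurable i).comp_quasiMeasurePreserving
      Measure.quasiMeasurePreserving_fst).prodMk
      ((hX'.forall_aemeasurable i).comp_quasiMeasurePreserving Measure.quasiMeasurePreserving_snd)
  aemeasurable_limit :=
    (hX.aemeasurable_limit.comp_quasiMeasurePreserving Measure.quasiMeasurePreserving_fst).prodMk
      (hX'.aemeasurable_limit.comp_quasiMeasurePreserving Measure.quasiMeasurePreserving_snd)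
  tendsto := by
    have hprod := (ProbabilityMeasure.continuous_prod.tendsto _).comp
      (hX.tendsto.prodMk_nhds hX'.tendsto)
    refine (iff_of_eq (congrArg₂ (fun (μ : ι → ProbabilityMeasure (E × E')) f => Tendsto μ l f)
      (funext fun i => Subtype.ext ?_) (congrArg nhds (Subtype.ext ?_)))).2 hprod
    · exact map_prodMap_prod (hX.forall_aemeasurable i) (hX'.forall_aemeasurable i)
    · exact map_prodMap_prod hX.aemeasurable_limit hX'.aemeasurable_limit

lemma tendstoInDistribution_of_tendsto_integral_dist [PseudoMetricSpace E] [MeasurableSpace E]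
    [BorelSpace E] {X Y : ∀ i, Ω i → E} {Z : Ω₁ → E} [l.IsCountablyGenerated]
    (hX : TendstoInDistribution X l Z P ν) (hY : ∀ i, AEMeasurable (Y i) (P i))
    (hint : ∀ i, Integrable (fun ω => dist (Y i ω) (X i ω)) (P i))
    (hdist : Tendsto (fun i => ∫ ω, dist (Y i ω) (X i ω) ∂(P i)) l (nhds 0)) :
    TendstoInDistribution Y l Z P ν where
  forall_aemeasurable := hY
  aemeasurable_limit := hX.aemeasurable_limit
  tendsto := by
    refine tendsto_iff_forall_lipschitz_integral_tendsto.2 fun g hg_bdd ⟨L, hg⟩ => ?_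
    have hlim := tendsto_iff_forall_lipschitz_integral_tendsto.1 hX.tendsto g hg_bdd ⟨L, hg⟩
    obtain ⟨C, hC⟩ := hg_bdd
    refine tendsto_of_tendsto_of_dist hlim
      (squeeze_zero (fun _ => dist_nonneg) (fun i => ?_) (by simpa using hdist.const_mul (L : ℝ)))
    have hg_int : ∀ {W : Ω i → E}, AEMeasurable W (P i) → Integrable (fun ω => g (W ω)) (P i) :=
      fun hW => ((BoundedContinuousFunction.mkOfBound ⟨g, hg.continuous⟩ C hC).integrable
        ((P i).map _)).comp_aemeasurable hW
    simp only [ProbabilityMeasure.coe_mk]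
    rw [integral_map (hX.forall_aemeasurable i) hg.continuous.measurable.aestronglyMeasurable,
      integral_map (hY i) hg.continuous.measurable.aestronglyMeasurable,
      dist_comm, Real.dist_eq, ← MeasureTheory.integral_sub (hg_int (hY i))
        (hg_int (hX.forall_aemeasurable i)), ← MeasureTheory.integral_const_mul]
    exact abs_integral_le_integral_abs.trans (integral_mono_of_nonneg
      (ae_of_all _ fun _ => abs_nonneg _) ((hint i).const_mul L)
      (ae_of_all _ fun ω => hg.dist_le_mul _ _))

lemma tendsto_integral_of_tendstoInDistribution [TopologicalSpace E] [MeasurableSpace E]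
    [OpensMeasurableSpace E] {X : ∀ i, Ω i → E} {Z : Ω₁ → E} (hX : TendstoInDistribution X l Z P ν)
    (f : BoundedContinuousFunction E ℝ) :
    Tendsto (fun i => ∫ ω, f (X i ω) ∂(P i)) l (nhds (∫ ω, f (Z ω) ∂ν)) := by
  have h := ProbabilityMeasure.tendsto_iff_forall_integral_tendsto.1 hX.tendsto f
  simp only [ProbabilityMeasure.coe_mk] at h
  rw [integral_map hX.aemeasurable_limit f.continuous.aestronglyMeasurable] at h
  exact h.congr fun i =>
    integral_map (hX.forall_aemeasurable i) f.continuous.aestronglyMeasurable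

end ConvergingTogether

lemma integral_sq_pos_of_ae_ne_zero {Ω : Type*} [MeasurableSpace Ω] {P : Measure Ω} [NeZero P]
    {V : Ω → ℝ} (hV_sq : Integrable (fun x => V x ^ 2) P) (hV_ne : ∀ᵐ x ∂P, V x ≠ 0) :
    0 < ∫ x, V x ^ 2 ∂P := by
  refine (integral_nonneg fun x => sq_nonneg _).lt_of_ne' fun hzero => ?_
  have hV_zero := (integral_eq_zero_iff_of_nonneg (fun x => sq_nonneg _) hV_sq).1 hzero
  obtain ⟨x, hx_zero, hx_ne⟩ := (hV_zero.and hV_ne).exists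
  exact pow_ne_zero 2 hx_ne hx_zero

lemma memLp_two_prod_of_integral_sq_le {α β : Type*} [MeasurableSpace α] [MeasurableSpace β]
    {μ : Measure α} [IsFiniteMeasure μ] {ν : Measure β} [SFinite ν] {f : α × β → ℝ}
    (hf : Measurable f) (hf_sq : ∀ a, MemLp (fun b => f (a, b)) 2 ν) {C : ℝ}
    (hC : ∀ a, ∫ b, f (a, b) ^ 2 ∂ν ≤ C) : MemLp f 2 (μ.prod ν) := by
  have hf2 := hf.pow_const 2
  refine (memLp_two_iff_integrable_sq hf.aestronglyMeasurable).2
    ((integrable_prod_iff hf2.aestronglyMeasurable).2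
      ⟨ae_of_all _ fun a => (hf_sq a).integrable_sq, ?_⟩)
  refine Integrable.of_bound hf2.norm.aestronglyMeasurable.integral_prod_right' C
    (ae_of_all _ fun a => ?_)
  simp only [Real.norm_eq_abs, abs_sq]
  rw [abs_of_nonneg (integral_nonneg fun b => sq_nonneg _)]
  exact hC a

section TangentWatson

open Module (finrank)

variable {F : Type*} [NormedAddCommGroup F] [InnerProductSpace ℝ F] {ι : Type*}
  [Fintype ι]

/-- The linear combination of the vectors `ω i` with weights proportional to `v i` of unit
Euclidean norm. -/
noncomputable def normalizedSum (v : ι → ℝ) (ω : ι → F) : F :=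
  (√(∑ i, v i ^ 2))⁻¹ • ∑ i, v i • ω i

/-- The standardized Watson statistic of observations with tangential components
`v i • (‖ω i‖⁻¹ • ω i)`. -/
noncomputable def tangentWatson (v : ι → ℝ) (ω : ι → F) : ℝ :=
  (finrank ℝ F * ‖∑ i, v i • (‖ω i‖⁻¹ • ω i)‖ ^ 2 / (∑ i, v i ^ 2) - finrank ℝ F) /
    √(2 * finrank ℝ F)

lemma tangentWatson_sub_stdNormSq_normalizedSum [FiniteDimensional ℝ F] [Nontrivial F]
    (v : ι → ℝ) (ω : ι → F) :
    tangentWatson v ω - stdNormSq (finrank ℝ F) (normalizedSum v ω) =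
      finrank ℝ F / (√(2 * finrank ℝ F) * ∑ i, v i ^ 2) *
        (‖∑ i, v i • (‖ω i‖⁻¹ • ω i)‖ ^ 2 - ‖∑ i, v i • ω i‖ ^ 2 / finrank ℝ F) := by
  have hd : (finrank ℝ F : ℝ) ≠ 0 := Nat.cast_ne_zero.2 Module.finrank_pos.ne'
  have hs : 0 ≤ ∑ i, v i ^ 2 := Finset.sum_nonneg fun i _ => sq_nonneg _
  rw [tangentWatson, stdNormSq, normalizedSum, norm_smul, mul_pow, norm_inv, inv_pow,
    Real.norm_of_nonneg (Real.sqrt_nonneg _), Real.sq_sqrt hs]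
  field_simp
  ring

variable [FiniteDimensional ℝ F] [MeasurableSpace F] [BorelSpace F]

lemma map_sum_smul_stdGaussian {a : ι → ℝ} (ha : ∑ i, a i ^ 2 = 1) :
    (Measure.pi fun _ => stdGaussian F).map (fun ω : ι → F => ∑ i, a i • ω i) =
      stdGaussian F := by
  have := Measure.isProbabilityMeasure_map (μ := Measure.pi fun _ : ι => stdGaussian F)
    (f := fun ω => ∑ i, a i • ω i) (Measurable.aemeasurable (by fun_prop))
  have hind : iIndepFun (fun (i : ι) (ω : ι → F) => a i • ω i)
      (Measure.pi fun _ => stdGaussian F) :=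
    iIndepFun_pi (X := fun i y => a i • y) fun i => by fun_prop
  have hlaw (i : ι) : (Measure.pi fun _ => stdGaussian F).map (fun ω : ι → F => a i • ω i) =
      (stdGaussian F).map (a i • ·) := by
    conv_rhs => rw [← (measurePreserving_eval (fun _ : ι => stdGaussian F) i).map_eq,
      Measure.map_map (by fun_prop) (by fun_prop)]
    rfl
  refine Measure.ext_of_charFun (funext fun t => ?_)
  rw [hind.charFun_map_fun_sum_eq_prod fun i => Measurable.aemeasurable (by fun_prop),
    Finset.prod_apply]
  simp only [hlaw, charFun_map_smul, charFun_stdGaussian, ← Complex.exp_sum]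
  rw [← Finset.sum_div, Finset.sum_neg_distrib]
  simp only [norm_smul, mul_pow, Complex.ofReal_mul, ← Finset.sum_mul]
  norm_cast
  simp only [Real.norm_eq_abs, sq_abs, ha, one_mul]

lemma map_normalizedSum_stdGaussian {v : ι → ℝ} (hv : 0 < ∑ i, v i ^ 2) :
    (Measure.pi fun _ => stdGaussian F).map (normalizedSum v) = stdGaussian F := by
  have hnormalized (ω : ι → F) :
      normalizedSum v ω = ∑ i, ((√(∑ i, v i ^ 2))⁻¹ * v i) • ω i := by
    simp only [normalizedSum, Finset.smul_sum, smul_smul]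
  rw [funext hnormalized, map_sum_smul_stdGaussian]
  simp only [mul_pow, inv_pow, Real.sq_sqrt hv.le, ← Finset.mul_sum, inv_mul_cancel₀ hv.ne']

section Gap

variable [Nontrivial F]

lemma memLp_tangentWatson_sub (v : ι → ℝ) :
    MemLp (fun ω : ι → F => tangentWatson v ω - stdNormSq (finrank ℝ F) (normalizedSum v ω)) 2
      (Measure.pi fun _ => stdGaussian F) := by
  simp only [tangentWatson_sub_stdNormSq_normalizedSum]
  exact (memLp_norm_sum_direction_sq_sub v).const_mul _

lemma integral_tangentWatson_sub_sq_le (v : ι → ℝ) :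
    ∫ ω : ι → F, (tangentWatson v ω - stdNormSq (finrank ℝ F) (normalizedSum v ω)) ^ 2
        ∂(Measure.pi fun _ => stdGaussian F) ≤
      16 / finrank ℝ F + 2 * ((∑ i, v i ^ 4) / (∑ i, v i ^ 2) ^ 2) := by
  have hd : (0 : ℝ) < finrank ℝ F := Nat.cast_pos.2 Module.finrank_pos
  simp only [tangentWatson_sub_stdNormSq_normalizedSum, mul_pow]
  rw [MeasureTheory.integral_const_mul]
  refine (mul_le_mul_of_nonneg_left (integral_norm_sum_direction_sq_sub_sq_le v)
    (sq_nonneg _)).trans ?_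
  rw [div_pow, mul_pow, Real.sq_sqrt (by positivity)]
  rcases eq_or_ne (∑ i, v i ^ 2) 0 with hs | hs
  · simp only [hs, ne_eq, OfNat.ofNat_ne_zero, not_false_eq_true, zero_pow, mul_zero, div_zero,
      zero_mul, add_zero]
    positivity
  · refine le_of_eq ?_
    field_simp
    ring

end Gap

lemma sum_pow_four_div_sq_sum_sq_le_one (v : ι → ℝ) :
    (∑ i, v i ^ 4) / (∑ i, v i ^ 2) ^ 2 ≤ 1 := by
  refine div_le_one_of_le₀ ?_ (sq_nonneg _)
  simpa [← pow_mul] using Finset.sum_sq_le_sq_sum_of_nonneg (s := Finset.univ)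
    (f := fun i => v i ^ 2) fun i _ => sq_nonneg _

section RandomWeights

variable {Ω : Type*} [MeasurableSpace Ω] {P : Measure Ω} [IsProbabilityMeasure P] {V : Ω → ℝ}

lemma ae_sum_sq_pi_pos [Nonempty ι] (hV_ne : ∀ᵐ x ∂P, V x ≠ 0) :
    ∀ᵐ u ∂(Measure.pi fun _ : ι => P), 0 < ∑ i, (V ∘ u) i ^ 2 := by
  obtain ⟨j⟩ := ‹Nonempty ι›
  filter_upwards
    [(measurePreserving_eval (fun _ : ι => P) j).quasiMeasurePreserving.ae hV_ne] with u hu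
  exact Finset.sum_pos' (fun i _ => sq_nonneg _) ⟨j, Finset.mem_univ j, sq_pos_of_ne_zero hu⟩

lemma measurePreserving_prodMk_normalizedSum [Nonempty ι] (hV : Measurable V)
    (hV_ne : ∀ᵐ x ∂P, V x ≠ 0) :
    MeasurePreserving (fun z : (ι → Ω) × (ι → F) => (z.1, normalizedSum (V ∘ z.1) z.2))
      ((Measure.pi fun _ => P).prod (Measure.pi fun _ => stdGaussian F))
      ((Measure.pi fun _ => P).prod (stdGaussian F)) := by
  refine (MeasurePreserving.id _).skew_product ?_
    ((ae_sum_sq_pi_pos hV_ne).mono fun u hu => map_normalizedSum_stdGaussian hu)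
  unfold normalizedSum
  fun_prop

variable [Nontrivial F]

lemma memLp_tangentWatson_sub_prod (hV : Measurable V) :
    MemLp (fun z : (ι → Ω) × (ι → F) => tangentWatson (V ∘ z.1) z.2 -
        stdNormSq (finrank ℝ F) (normalizedSum (V ∘ z.1) z.2)) 2
      ((Measure.pi fun _ => P).prod (Measure.pi fun _ => stdGaussian F)) := by
  refine memLp_two_prod_of_integral_sq_le ?_ (fun u => memLp_tangentWatson_sub (V ∘ u))
    (C := 16 / finrank ℝ F + 2) fun u => ?_
  · unfold tangentWatson normalizedSum
    fun_prop
  · refine (integral_tangentWatson_sub_sq_le (V ∘ u)).trans ?_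
    linarith [sum_pow_four_div_sq_sum_sq_le_one (V ∘ u)]

lemma integral_tangentWatson_sub_sq_prod_le [Nonempty ι] (hV : Measurable V)
    (hV_sq : MemLp (fun x => V x ^ 2) 2 P) (hpos : 0 < ∫ x, V x ^ 2 ∂P) {K : ℝ}
    (hK : ∫ x, V x ^ 4 ∂P ≤ K * (∫ x, V x ^ 2 ∂P) ^ 2) :
    ∫ z : (ι → Ω) × (ι → F), (tangentWatson (V ∘ z.1) z.2 -
        stdNormSq (finrank ℝ F) (normalizedSum (V ∘ z.1) z.2)) ^ 2
        ∂((Measure.pi fun _ => P).prod (Measure.pi fun _ => stdGaussian F)) ≤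
      16 / finrank ℝ F + 16 * K / Fintype.card ι := by
  have hratio : Integrable (fun u : ι → Ω => (∑ i, V (u i) ^ 4) / (∑ i, V (u i) ^ 2) ^ 2)
      (Measure.pi fun _ => P) :=
    Integrable.of_bound (Measurable.aestronglyMeasurable (by fun_prop)) 1 (ae_of_all _ fun u => by
      rw [Real.norm_of_nonneg (by positivity)]
      exact sum_pow_four_div_sq_sum_sq_le_one (V ∘ u))
  have hsq := (memLp_tangentWatson_sub_prod (F := F) (ι := ι) (P := P) hV).integrable_sq
  rw [integral_prod _ hsq]
  calc _ ≤ ∫ u : ι → Ω, 16 / finrank ℝ F +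
        2 * ((∑ i, V (u i) ^ 4) / (∑ i, V (u i) ^ 2) ^ 2) ∂(Measure.pi fun _ => P) :=
        MeasureTheory.integral_mono hsq.integral_prod_left
          ((integrable_const _).add (hratio.const_mul 2))
          fun u => integral_tangentWatson_sub_sq_le (V ∘ u)
    _ = 16 / finrank ℝ F +
        2 * ∫ u : ι → Ω, (∑ i, V (u i) ^ 4) / (∑ i, V (u i) ^ 2) ^ 2 ∂(Measure.pi fun _ => P) := by
        rw [MeasureTheory.integral_add (integrable_const _) (hratio.const_mul 2),
          MeasureTheory.integral_const_mul]
        simp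
    _ ≤ 16 / finrank ℝ F + 2 * (8 * K / Fintype.card ι) := by
        have hle := integral_sum_sq_div_sq_sum_le (ι := ι) hV_sq (fun x => sq_nonneg _) hpos
          (K := K) (by simpa only [← pow_mul] using hK)
        simp only [← pow_mul] at hle
        gcongr
    _ = 16 / finrank ℝ F + 16 * K / Fintype.card ι := by ring

end RandomWeights

lemma tendsto_sqrt_const_div_add_const_div {a b : ℕ → ℕ} (ha : Tendsto a atTop atTop)
    (hb : Tendsto b atTop atTop) (s t : ℝ) :
    Tendsto (fun n => √(s / a n + t / b n)) atTop (nhds 0) := by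
  have h := (tendsto_const_nhds (x := s).div_atTop (tendsto_natCast_atTop_atTop.comp ha)).add
    (tendsto_const_nhds (x := t).div_atTop (tendsto_natCast_atTop_atTop.comp hb))
  simpa using h.sqrt

theorem tendstoInDistribution_tangentWatson_prod {F : ℕ → Type*} [∀ n, NormedAddCommGroup (F n)]
    [∀ n, InnerProductSpace ℝ (F n)] [∀ n, FiniteDimensional ℝ (F n)]
    [∀ n, MeasurableSpace (F n)] [∀ n, BorelSpace (F n)] [∀ n, Nontrivial (F n)]
    {ι : ℕ → Type*} [∀ n, Fintype (ι n)] [∀ n, Nonempty (ι n)] {Ω : ℕ → Type*}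
    [∀ n, MeasurableSpace (Ω n)] {P : ∀ n, Measure (Ω n)} [∀ n, IsProbabilityMeasure (P n)]
    {V : ∀ n, Ω n → ℝ} {E Ω' : Type*} [PseudoMetricSpace E] [SecondCountableTopology E]
    [MeasurableSpace E] [BorelSpace E] [MeasurableSpace Ω'] {ν : Measure Ω'}
    [IsProbabilityMeasure ν] {Z : ∀ n, (ι n → Ω n) → E} {Y : Ω' → E}
    (hF : Tendsto (fun n => finrank ℝ (F n)) atTop atTop)
    (hι : Tendsto (fun n => Fintype.card (ι n)) atTop atTop) (hV : ∀ n, Measurable (V n))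
    (hV_ne : ∀ n, ∀ᵐ x ∂(P n), V n x ≠ 0) (hV_sq : ∀ n, MemLp (fun x => V n x ^ 2) 2 (P n))
    {K : ℝ} (hK : ∀ n, ∫ x, V n x ^ 4 ∂(P n) ≤ K * (∫ x, V n x ^ 2 ∂(P n)) ^ 2)
    (hZ : TendstoInDistribution Z atTop Y (fun n => Measure.pi fun _ => P n) ν) :
    TendstoInDistribution
      (fun n (z : (ι n → Ω n) × (ι n → F n)) => (tangentWatson (V n ∘ z.1) z.2, Z n z.1)) atTop
      (Prod.map id Y)
      (fun n => (Measure.pi fun _ => P n).prod (Measure.pi fun _ => stdGaussian (F n)))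
      ((gaussianReal 0 1).prod ν) := by
  have hχ := tendstoInDistribution_prodMap (tendstoInDistribution_stdNormSq_stdGaussian hF) hZ
  have hlim := tendstoInDistribution_comp_measurePreserving hχ fun n =>
    Measure.measurePreserving_swap.comp
      (measurePreserving_prodMk_normalizedSum (ι := ι n) (F := F n) (hV n) (hV_ne n))
  have hgap (n : ℕ) := memLp_tangentWatson_sub_prod (F := F n) (ι := ι n) (P := P n) (hV n)
  have hdist (n : ℕ) (z : (ι n → Ω n) × (ι n → F n)) :
      dist (tangentWatson (V n ∘ z.1) z.2, Z n z.1)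
        (stdNormSq (finrank ℝ (F n)) (normalizedSum (V n ∘ z.1) z.2), Z n z.1) =
      |tangentWatson (V n ∘ z.1) z.2 -
        stdNormSq (finrank ℝ (F n)) (normalizedSum (V n ∘ z.1) z.2)| := by
    rw [Prod.dist_eq, dist_self, max_eq_left dist_nonneg, Real.dist_eq]
  have hbound (n : ℕ) := integral_tangentWatson_sub_sq_prod_le (F := F n) (ι := ι n) (hV n)
    (hV_sq n) (integral_sq_pos_of_ae_ne_zero ((hV_sq n).integrable one_le_two) (hV_ne n)) (hK n)
  refine tendstoInDistribution_of_tendsto_integral_dist hlim (fun n => ?_) (fun n => ?_) ?_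
  · refine AEMeasurable.prodMk ?_ ((hZ.forall_aemeasurable n).comp_quasiMeasurePreserving
      Measure.quasiMeasurePreserving_fst)
    unfold tangentWatson
    fun_prop
  · simpa only [← hdist] using! ((hgap n).integrable one_le_two).abs
  · refine squeeze_zero (fun n => integral_nonneg fun z => dist_nonneg) (fun n => ?_)
      (tendsto_sqrt_const_div_add_const_div hF hι 16 (16 * K))
    refine (integral_congr_ae (ae_of_all _ (hdist n))).trans_le ?_
    exact (integral_abs_le_sqrt_integral_sq (hgap n)).trans (Real.sqrt_le_sqrt (hbound n))

end TangentWatson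

section WatsonStatistic

open Module (finrank)

/-- The sample mean `X̄` of the observations `X i`. -/
noncomputable def sampleMean {E : Type*} [AddCommGroup E] [Module ℝ E] {n : ℕ} (X : Fin n → E) :
    E :=
  (n : ℝ)⁻¹ • ∑ i, X i

/-- The Watson statistic `W` for the location `θ`, centered and scaled by the mean `p - 1` and the
standard deviation `√(2 (p - 1))` of its chi-square limit in fixed dimension `p`. -/
noncomputable def standardizedWatson {p n : ℕ} (θ : EuclideanSpace ℝ (Fin p))
    (X : Fin n → EuclideanSpace ℝ (Fin p)) : ℝ :=
  (n * (p - 1) * ⟪sampleMean X, sampleMean X - ⟪θ, sampleMean X⟫ • θ⟫ /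
      (1 - (n : ℝ)⁻¹ * ∑ i, ⟪X i, θ⟫ ^ 2) - (p - 1)) / √(2 * (p - 1))

/-- The projection of the sample mean on `θ`, standardized by its mean and standard deviation
under `FvML_p(θ, κ)`. -/
noncomputable def standardizedProjection {p n : ℕ} (θ : EuclideanSpace ℝ (Fin p)) (κ : ℝ)
    (X : Fin n → EuclideanSpace ℝ (Fin p)) : ℝ :=
  √n * (⟪sampleMean X, θ⟫ - e1 p κ) / √(etilde2 p κ)

section Algebra

variable {E : Type*} [NormedAddCommGroup E] [InnerProductSpace ℝ E] {θ : E}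

lemma inner_sub_inner_smul_self_of_orthogonal (hθ : ‖θ‖ = 1) (a : ℝ) (y : (ℝ ∙ θ)ᗮ) :
    ⟪a • θ + (y : E), a • θ + (y : E) - ⟪θ, a • θ + (y : E)⟫ • θ⟫ = ‖y‖ ^ 2 := by
  have hθy : ⟪θ, (y : E)⟫ = 0 := by rw [real_inner_comm, inner_coe_orthogonal_self]
  rw [inner_add_right, inner_smul_right, hθy, real_inner_self_eq_norm_sq, hθ, one_pow, mul_one,
    add_zero, add_sub_cancel_left, inner_add_left, inner_smul_left, hθy, mul_zero, zero_add,
    real_inner_self_eq_norm_sq, Submodule.coe_norm]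

lemma sampleMean_latitudePoint {n : ℕ} (θ : E) (u : Fin n → ℝ) (ω : Fin n → (ℝ ∙ θ)ᗮ) :
    sampleMean (fun i => latitudePoint θ (u i, ω i)) = ((n : ℝ)⁻¹ * ∑ i, u i) • θ +
      (((n : ℝ)⁻¹ • ∑ i, √(1 - u i ^ 2) • (‖ω i‖⁻¹ • ω i) : (ℝ ∙ θ)ᗮ) : E) := by
  simp only [sampleMean, latitudePoint, Finset.sum_add_distrib, ← Finset.sum_smul, smul_add,
    smul_smul, Submodule.coe_smul, Submodule.coe_sum]

lemma one_sub_mean_sq_eq_mean_sqrt_sq {n : ℕ} [NeZero n] {u : Fin n → ℝ}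
    (hu : ∀ i, u i ∈ Set.Ioo (-1 : ℝ) 1) :
    1 - (n : ℝ)⁻¹ * ∑ i, u i ^ 2 = (n : ℝ)⁻¹ * ∑ i, √(1 - u i ^ 2) ^ 2 := by
  have hn : (n : ℝ) ≠ 0 := Nat.cast_ne_zero.2 (NeZero.ne n)
  simp only [fun i => Real.sq_sqrt (one_sub_sq_pos_of_mem_Ioo (hu i)).le, Finset.sum_sub_distrib,
    Finset.sum_const, Finset.card_univ, Fintype.card_fin, nsmul_eq_mul, mul_one, mul_sub,
    inv_mul_cancel₀ hn]

end Algebra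

section LatitudeRepresentation

variable {p n : ℕ} {θ : EuclideanSpace ℝ (Fin p)}

lemma finrank_orthogonal_euclideanSpace_add_one (hθ : ‖θ‖ = 1) :
    finrank ℝ (ℝ ∙ θ)ᗮ + 1 = p := by
  rw [finrank_orthogonal_span_singleton_add_one (norm_ne_zero_iff.1 (hθ ▸ one_ne_zero)),
    finrank_euclideanSpace_fin]

lemma standardizedWatson_latitudePoint [NeZero n] (hθ : ‖θ‖ = 1) {u : Fin n → ℝ}
    (hu : ∀ i, u i ∈ Set.Ioo (-1 : ℝ) 1) (ω : Fin n → (ℝ ∙ θ)ᗮ) :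
    standardizedWatson θ (fun i => latitudePoint θ (u i, ω i)) =
      tangentWatson (fun i => √(1 - u i ^ 2)) ω := by
  have hn : (n : ℝ) ≠ 0 := Nat.cast_ne_zero.2 (NeZero.ne n)
  have hd : (p : ℝ) - 1 = finrank ℝ (ℝ ∙ θ)ᗮ := by
    rw [sub_eq_iff_eq_add]
    exact_mod_cast (finrank_orthogonal_euclideanSpace_add_one hθ).symm
  simp only [standardizedWatson, inner_latitudePoint_self hθ, sampleMean_latitudePoint,
    inner_sub_inner_smul_self_of_orthogonal hθ, one_sub_mean_sq_eq_mean_sqrt_sq hu, hd, norm_smul,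
    mul_pow, norm_inv, RCLike.norm_natCast, tangentWatson]
  congr 2
  field_simp

lemma standardizedProjection_latitudePoint [NeZero n] (hθ : ‖θ‖ = 1) (κ : ℝ) (u : Fin n → ℝ)
    (ω : Fin n → (ℝ ∙ θ)ᗮ) :
    standardizedProjection θ κ (fun i => latitudePoint θ (u i, ω i)) =
      (√n)⁻¹ * ∑ i, (u i - e1 p κ) / √(etilde2 p κ) := by
  have hn : (n : ℝ) ≠ 0 := Nat.cast_ne_zero.2 (NeZero.ne n)
  have hmean : ⟪sampleMean (fun i => latitudePoint θ (u i, ω i)), θ⟫ = (n : ℝ)⁻¹ * ∑ i, u i := by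
    simp only [sampleMean, real_inner_smul_left, sum_inner, inner_latitudePoint_self hθ]
  rw [standardizedProjection, hmean, ← Finset.sum_div, Finset.sum_sub_distrib, Finset.sum_const,
    Finset.card_univ, Fintype.card_fin, nsmul_eq_mul, ← mul_div_assoc]
  congr 1
  rw [← Real.sqrt_div_self]
  field_simp

@[fun_prop]
lemma measurable_standardizedWatson (θ : EuclideanSpace ℝ (Fin p)) :
    Measurable (standardizedWatson (n := n) θ) := by
  unfold standardizedWatson sampleMean
  fun_prop

@[fun_prop]
lemma measurable_standardizedProjection (θ : EuclideanSpace ℝ (Fin p)) (κ : ℝ) :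
    Measurable (standardizedProjection (n := n) θ κ) := by
  unfold standardizedProjection sampleMean
  fun_prop

variable [Fact (3 ≤ p)]

instance (κ : ℝ) : IsProbabilityMeasure (fvmlLatitude p κ) :=
  isProbabilityMeasure_fvmlLatitude Fact.out κ

instance (θ : EuclideanSpace ℝ (Fin p)) (κ : ℝ) : IsProbabilityMeasure (fvml p θ κ) :=
  isProbabilityMeasure_fvml (Nat.one_le_of_lt (Fact.out : 3 ≤ p)) θ κ

lemma map_coe_pi_fvml (hθ : ‖θ‖ = 1) (κ : ℝ) (ι : Type*) [Fintype ι] :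
    (Measure.pi fun _ : ι => fvml p θ κ).map (fun x i => (x i : EuclideanSpace ℝ (Fin p))) =
      ((Measure.pi fun _ : ι => fvmlLatitude p κ).prod
        (Measure.pi fun _ : ι => stdGaussian (ℝ ∙ θ)ᗮ)).map
        fun z i => latitudePoint θ (z.1 i, z.2 i) := by
  have hmap := map_coe_fvml_eq_map_latitudePoint (Fact.out : 3 ≤ p) hθ κ
  have : IsProbabilityMeasure
      (((fvmlLatitude p κ).prod (stdGaussian (ℝ ∙ θ)ᗮ)).map (latitudePoint θ)) :=
    Measure.isProbabilityMeasure_map (by fun_prop)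
  have hsphere : MeasurePreserving (Subtype.val : sphere (0 : EuclideanSpace ℝ (Fin p)) 1 → _)
      (fvml p θ κ) (((fvmlLatitude p κ).prod (stdGaussian (ℝ ∙ θ)ᗮ)).map (latitudePoint θ)) :=
    ⟨measurable_subtype_coe, hmap⟩
  have hlatitude := (measurable_latitudePoint θ).measurePreserving
    ((fvmlLatitude p κ).prod (stdGaussian (ℝ ∙ θ)ᗮ))
  have harrow := measurePreserving_arrowProdEquivProdArrow ℝ (ℝ ∙ θ)ᗮ ι
    (fun _ => fvmlLatitude p κ) fun _ => stdGaussian (ℝ ∙ θ)ᗮ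
  rw [(measurePreserving_pi _ _ fun _ : ι => hsphere).map_eq,
    ← (measurePreserving_pi _ _ fun _ : ι => hlatitude).map_eq, ← harrow.map_eq,
    Measure.map_map (by fun_prop) (by fun_prop)]
  rfl

lemma map_pair_pi_fvml_eq_map_tangentWatson [NeZero n] (hθ : ‖θ‖ = 1) (κ : ℝ) :
    ((Measure.pi fun _ : Fin n => fvmlLatitude p κ).prod
        (Measure.pi fun _ : Fin n => stdGaussian (ℝ ∙ θ)ᗮ)).map
        (fun z => (tangentWatson ((fun u => √(1 - u ^ 2)) ∘ z.1) z.2,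
          (√n)⁻¹ * ∑ i, (z.1 i - e1 p κ) / √(etilde2 p κ))) =
      (Measure.pi fun _ : Fin n => fvml p θ κ).map
        fun x => (standardizedWatson θ (fun i => (x i : EuclideanSpace ℝ (Fin p))),
          standardizedProjection θ κ fun i => (x i : EuclideanSpace ℝ (Fin p))) := by
  have hmeas : Measurable fun X : Fin n → EuclideanSpace ℝ (Fin p) =>
      (standardizedWatson θ X, standardizedProjection θ κ X) := by fun_prop
  have hIoo (i : Fin n) : ∀ᵐ u ∂(Measure.pi fun _ : Fin n => fvmlLatitude p κ),
      u i ∈ Set.Ioo (-1 : ℝ) 1 :=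
    (measurePreserving_eval _ i).quasiMeasurePreserving.ae (ae_fvmlLatitude_mem_Ioo p κ)
  calc _ = ((Measure.pi fun _ : Fin n => fvmlLatitude p κ).prod
        (Measure.pi fun _ : Fin n => stdGaussian (ℝ ∙ θ)ᗮ)).map
        ((fun X : Fin n → EuclideanSpace ℝ (Fin p) =>
          (standardizedWatson θ X, standardizedProjection θ κ X)) ∘
          fun z i => latitudePoint θ (z.1 i, z.2 i)) := by
        refine Measure.map_congr ?_
        filter_upwards [Measure.quasiMeasurePreserving_fst.ae (ae_all_iff.2 hIoo)] with z hz
        exact (Prod.ext (standardizedWatson_latitudePoint hθ hz z.2)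
          (standardizedProjection_latitudePoint hθ κ z.1 z.2)).symm
    _ = _ := by
        rw [← Measure.map_map hmeas (by fun_prop), ← map_coe_pi_fvml hθ κ (Fin n),
          Measure.map_map hmeas (by fun_prop)]
        rfl

end LatitudeRepresentation

section LatitudeMoments

variable {p : ℕ} [Fact (3 ≤ p)] (κ : ℝ)

lemma integral_fvmlLatitude_standardized_pow (j : ℕ) :
    ∫ u, ((u - e1 p κ) / √(etilde2 p κ)) ^ j ∂(fvmlLatitude p κ) =
      (∫ u in (-1 : ℝ)..1, (u - e1 p κ) ^ j * fvmlWeight p κ u) /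
        (√(etilde2 p κ) ^ j * mInt p κ 0) := by
  simp only [integral_fvmlLatitude Fact.out, div_pow, div_mul_eq_mul_div,
    intervalIntegral.integral_div, div_div]

lemma integral_fvmlLatitude_standardized :
    ∫ u, (u - e1 p κ) / √(etilde2 p κ) ∂(fvmlLatitude p κ) = 0 := by
  simpa [integral_sub_e1_mul_fvmlWeight (p := p) Fact.out] using
    integral_fvmlLatitude_standardized_pow (p := p) κ 1

lemma integral_fvmlLatitude_standardized_sq :
    ∫ u, ((u - e1 p κ) / √(etilde2 p κ)) ^ 2 ∂(fvmlLatitude p κ) = 1 := by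
  have hvar := etilde2_pos (p := p) Fact.out κ
  have hm := mInt_zero_pos (p := p) Fact.out κ
  rw [integral_fvmlLatitude_standardized_pow, integral_sub_e1_sq_mul_fvmlWeight Fact.out,
    Real.sq_sqrt hvar.le, div_self (mul_pos hvar hm).ne']

lemma integral_fvmlLatitude_standardized_pow_four_le :
    ∫ u, ((u - e1 p κ) / √(etilde2 p κ)) ^ 4 ∂(fvmlLatitude p κ) ≤ 6944 := by
  have hvar := etilde2_pos (p := p) Fact.out κ
  have hm := mInt_zero_pos (p := p) Fact.out κ
  have hpow : √(etilde2 p κ) ^ 4 = etilde2 p κ ^ 2 := by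
    rw [show 4 = 2 * 2 from rfl, pow_mul, Real.sq_sqrt hvar.le]
  rw [integral_fvmlLatitude_standardized_pow, hpow, div_le_iff₀ (by positivity), ← mul_assoc]
  exact integral_sub_e1_pow_four_mul_fvmlWeight_le Fact.out κ

lemma integrable_fvmlLatitude_standardized_pow_four :
    Integrable (fun u => ((u - e1 p κ) / √(etilde2 p κ)) ^ 4) (fvmlLatitude p κ) := by
  refine Integrable.of_bound (by fun_prop) (((1 + |e1 p κ|) / √(etilde2 p κ)) ^ 4) ?_
  filter_upwards [ae_fvmlLatitude_mem_Ioo p κ] with u hu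
  rw [Real.norm_eq_abs, abs_pow, abs_div, abs_of_nonneg (Real.sqrt_nonneg _)]
  gcongr
  exact (abs_sub _ _).trans (by gcongr; exact abs_le.2 ⟨hu.1.le, hu.2.le⟩)

lemma memLp_sqrt_one_sub_sq_sq :
    MemLp (fun u => √(1 - u ^ 2) ^ 2) 2 (fvmlLatitude p κ) := by
  refine MemLp.of_bound (by fun_prop) 1 ?_
  filter_upwards [ae_fvmlLatitude_mem_Ioo p κ] with u hu
  rw [Real.sq_sqrt (one_sub_sq_pos_of_mem_Ioo hu).le,
    Real.norm_of_nonneg (one_sub_sq_pos_of_mem_Ioo hu).le]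
  exact sub_le_self _ (sq_nonneg u)

lemma integral_sqrt_one_sub_sq_pow_four_le :
    ∫ u, √(1 - u ^ 2) ^ 4 ∂(fvmlLatitude p κ) ≤
      3 * (∫ u, √(1 - u ^ 2) ^ 2 ∂(fvmlLatitude p κ)) ^ 2 := by
  have hm := mInt_zero_pos (p := p) Fact.out κ
  have hsq (j : ℕ) : ∫ u, √(1 - u ^ 2) ^ (2 * j) ∂(fvmlLatitude p κ) =
      (∫ u in (-1 : ℝ)..1, (1 - u ^ 2) ^ j * fvmlWeight p κ u) / mInt p κ 0 := by
    rw [← integral_fvmlLatitude Fact.out]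
    refine integral_congr_ae ((ae_fvmlLatitude_mem_Ioo p κ).mono fun u hu => ?_)
    simp only [pow_mul, Real.sq_sqrt (one_sub_sq_pos_of_mem_Ioo hu).le]
  have h2 := hsq 1
  simp only [mul_one, pow_one] at h2
  rw [hsq 2, h2, div_pow, ← mul_div_assoc, div_le_div_iff₀ hm (by positivity), sq (mInt p κ 0),
    ← mul_assoc]
  exact mul_le_mul_of_nonneg_right (integral_one_sub_sq_sq_mul_fvmlWeight_le Fact.out κ) hm.le

end LatitudeMoments

section Limit

variable {p N : ℕ → ℕ} {θ : ∀ n, EuclideanSpace ℝ (Fin (p n))}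

lemma tendstoInDistribution_inv_sqrt_mul_sum_fvmlLatitude [∀ n, Fact (3 ≤ p n)]
    (hN : Tendsto N atTop atTop) (κ : ℕ → ℝ) :
    TendstoInDistribution (fun n (u : Fin (N n) → ℝ) =>
        (√(N n))⁻¹ * ∑ i, (u i - e1 (p n) (κ n)) / √(etilde2 (p n) (κ n))) atTop id
      (fun n => Measure.pi fun _ => fvmlLatitude (p n) (κ n)) (gaussianReal 0 1) :=
  tendstoInDistribution_pi_inv_sqrt_mul_sum hN (fun n => by fun_prop)
    (fun n => integrable_fvmlLatitude_standardized_pow_four (κ n))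
    (fun n => integral_fvmlLatitude_standardized (κ n))
    (fun n => integral_fvmlLatitude_standardized_sq (κ n))
    fun n => integral_fvmlLatitude_standardized_pow_four_le (κ n)

theorem tendstoInDistribution_standardizedWatson_standardizedProjection [∀ n, Fact (3 ≤ p n)]
    [∀ n, NeZero (N n)] (hp : Tendsto p atTop atTop) (hN : Tendsto N atTop atTop)
    (κ : ℕ → ℝ) (hθ : ∀ n, ‖θ n‖ = 1) :
    TendstoInDistribution
      (fun n (x : Fin (N n) → sphere (0 : EuclideanSpace ℝ (Fin (p n))) 1) =>
        (standardizedWatson (θ n) (fun i => (x i : EuclideanSpace ℝ (Fin (p n)))),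
          standardizedProjection (θ n) (κ n) fun i => (x i : EuclideanSpace ℝ (Fin (p n)))))
      atTop id (fun n => Measure.pi fun _ => fvml (p n) (θ n) (κ n))
      ((gaussianReal 0 1).prod (gaussianReal 0 1)) := by
  have hdim (n : ℕ) := finrank_orthogonal_euclideanSpace_add_one (hθ n)
  have (n : ℕ) : Nontrivial (ℝ ∙ θ n)ᗮ :=
    Module.nontrivial_of_finrank_pos (R := ℝ) (by linarith [hdim n, (Fact.out : 3 ≤ p n)])
  have hF : Tendsto (fun n => finrank ℝ (ℝ ∙ θ n)ᗮ) atTop atTop :=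
    .atTop_of_add_const 1 (by simpa only [add_comm 1, hdim] using hp)
  have hlatitude := tendstoInDistribution_tangentWatson_prod hF
    (ι := fun n => Fin (N n)) (by simpa only [Fintype.card_fin] using hN)
    (P := fun n => fvmlLatitude (p n) (κ n)) (V := fun _ u => √(1 - u ^ 2)) (fun _ => by fun_prop)
    (fun n => (ae_fvmlLatitude_mem_Ioo _ _).mono fun u hu =>
      (Real.sqrt_pos.2 (one_sub_sq_pos_of_mem_Ioo hu)).ne')
    (fun n => memLp_sqrt_one_sub_sq_sq (κ n))
    (fun n => integral_sqrt_one_sub_sq_pow_four_le (κ n))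
    (tendstoInDistribution_inv_sqrt_mul_sum_fvmlLatitude hN κ)
  rw [Prod.map_id] at hlatitude
  exact tendstoInDistribution_of_map_eq hlatitude
    (fun n => Measurable.aemeasurable (by fun_prop))
    fun n => map_pair_pi_fvml_eq_map_tangentWatson (hθ n) (κ n)

end Limit

end WatsonStatistic

theorem watson_and_Zn_jointly_asymptotically_standard_normal_general {p N : ℕ → ℕ}
    (hp : Tendsto p atTop atTop) (hN : Tendsto N atTop atTop) (κ : ℕ → ℝ)
    {θ₀ : ∀ n, EuclideanSpace ℝ (Fin (p n))} (hθ₀ : ∀ n, ‖θ₀ n‖ = 1)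
    (f : BoundedContinuousFunction (ℝ × ℝ) ℝ) :
    Tendsto (fun n => ∫ x : Fin (N n) → sphere (0 : EuclideanSpace ℝ (Fin (p n))) 1,
        f (standardizedWatson (θ₀ n) (fun i => (x i : EuclideanSpace ℝ (Fin (p n)))),
          standardizedProjection (θ₀ n) (κ n) fun i => (x i : EuclideanSpace ℝ (Fin (p n))))
        ∂(Measure.pi fun _ => fvml (p n) (θ₀ n) (κ n))) atTop
      (nhds (∫ y, f y ∂((gaussianReal 0 1).prod (gaussianReal 0 1)))) := by
  obtain ⟨K, hK⟩ := eventually_atTop.1 ((hp.eventually_ge_atTop 3).and (hN.eventually_gt_atTop 0))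
  have (n : ℕ) : Fact (3 ≤ p (n + K)) := ⟨(hK _ (Nat.le_add_left K n)).1⟩
  have (n : ℕ) : NeZero (N (n + K)) := ⟨(hK _ (Nat.le_add_left K n)).2.ne'⟩
  have hshift : Tendsto (· + K) atTop atTop := tendsto_add_atTop_nat K
  exact (tendsto_add_atTop_iff_nat K).1 (tendsto_integral_of_tendstoInDistribution
    (tendstoInDistribution_standardizedWatson_standardizedProjection (p := fun n => p (n + K))
      (N := fun n => N (n + K)) (hp.comp hshift) (hN.comp hshift) (fun n => κ (n + K))
      fun n => hθ₀ (n + K)) f)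

theorem watson_and_Zn_jointly_asymptotically_standard_normal
    (p : ℕ → ℕ) (hp2 : ∀ n, 2 ≤ p n)
    (hp : Tendsto (fun n => (p n : ℝ)) atTop atTop)
    (κ : ℕ → ℝ) (hκ : ∀ n, 0 < κ n)
    (θ₀ : (n : ℕ) → EuclideanSpace ℝ (Fin (p n))) (hθ₀ : ∀ n, ‖θ₀ n‖ = 1) :
    ∀ f : BoundedContinuousFunction (ℝ × ℝ) ℝ,
      Tendsto
        (fun n : ℕ =>
          ∫ x : Fin n → sphere (0 : EuclideanSpace ℝ (Fin (p n))) 1,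
            (let Xbar : EuclideanSpace ℝ (Fin (p n)) :=
              (n : ℝ)⁻¹ • ∑ i, ((x i : EuclideanSpace ℝ (Fin (p n))));
            f
              (((n : ℝ) * ((p n : ℝ) - 1) * ⟪Xbar, Xbar - ⟪θ₀ n, Xbar⟫ • θ₀ n⟫ /
                    (1 - (n : ℝ)⁻¹ *
                      ∑ i, ⟪((x i : EuclideanSpace ℝ (Fin (p n)))), θ₀ n⟫ ^ 2) -
                  ((p n : ℝ) - 1)) / Real.sqrt (2 * ((p n : ℝ) - 1)),
                Real.sqrt n * (⟪Xbar, θ₀ n⟫ - e1 (p n) (κ n)) /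
                  Real.sqrt (etilde2 (p n) (κ n))))
            ∂(Measure.pi fun _ : Fin n => fvml (p n) (θ₀ n) (κ n)))
        atTop
        (nhds (∫ y, f y ∂((gaussianReal 0 1).prod (gaussianReal 0 1)))) :=
  watson_and_Zn_jointly_asymptotically_standard_normal_general (tendsto_natCast_atTop_iff.1 hp)
    tendsto_id κ hθ₀
end

section
/- Let (ν_n) be a sequence in (0,∞) diverging to ∞, and let (a_n), (b_n) be sequences in (0,∞) such that liminf_n a_n > 0, b_n/ν_n → ξ for some ξ ∈ [0,∞), and b_n⁶/(a_n⁴ ν_n⁵) → 0. Then for every K > 0, sup_{t ∈ [−K,K]} | a_n² log H_{ν_n}(b_n t/a_n) − ( b_n² t²/(4ν_n) − b_n⁴ t⁴/(32 ν_n³ a_n²) − ξ² t²/4 ) | → 0 as n → ∞. -/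
open MeasureTheory intervalIntegral Filter

/-- `H_ν(x) = (∫_{-1}^1 (1-t²)^{ν-1/2} e^{xt} dt) / (∫_{-1}^1 (1-t²)^{ν-1/2} dt)`. -/
noncomputable def Hfun (ν x : ℝ) : ℝ :=
  (∫ t in (-1 : ℝ)..1, (1 - t ^ 2) ^ (ν - 1 / 2) * Real.exp (x * t)) /
    (∫ t in (-1 : ℝ)..1, (1 - t ^ 2) ^ (ν - 1 / 2))

/-!
Integration by parts gives the relations `H_ν' = x / (2 (ν + 1)) * H_{ν+1}` and
`H_ν = H_{ν+1} + w H_{ν+2}` with `w = x² / (4 (ν + 1) (ν + 2))`. Since `H` is positive, iterating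
the second one traps the ratio `H_{ν+1} / H_ν` between `1 - w` and `1 - w + 2 w²`; integrating
`(log H_ν)' = x / (2 (ν + 1)) * (H_{ν+1} / H_ν)` then yields an expansion of `log H_ν` with an error
`O(x⁶ / ν⁵)` uniform in `x`. After rescaling by `x = b t / a`, this error is governed by
`b⁶ / (a⁴ ν⁵)`, and `ξ² t² / 4` is the limit of the difference between `b² t² / (4 ν)` and
`b² t² / (4 (ν + 1))`.
-/

theorem intervalIntegrable_one_sub_sq_rpow {p : ℝ} (hp : -1 < p) :
    IntervalIntegrable (fun t : ℝ => (1 - t ^ 2) ^ p) volume (-1) 1 := by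
  have right_half : IntervalIntegrable (fun t : ℝ => (1 - t ^ 2) ^ p) volume 0 1 := by
    have endpoint : IntervalIntegrable (fun t : ℝ => (1 - t) ^ p) volume 0 1 := by
      simpa using ((intervalIntegrable_rpow' hp (a := 0) (b := 1)).comp_sub_left 1).symm
    have regular : ContinuousOn (fun t : ℝ => (1 + t) ^ p) (Set.uIcc 0 1) := by
      refine ContinuousOn.rpow_const (by fun_prop) fun t ht => Or.inl ?_
      rw [Set.uIcc_of_le zero_le_one] at ht
      linarith [ht.1]
    refine (endpoint.mul_continuousOn regular).congr fun t ht => ?_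
    rw [Set.uIoc_of_le zero_le_one] at ht
    calc (1 - t) ^ p * (1 + t) ^ p = ((1 - t) * (1 + t)) ^ p :=
          (Real.mul_rpow (by linarith [ht.2]) (by linarith [ht.1])).symm
      _ = (1 - t ^ 2) ^ p := by ring_nf
  have left_half : IntervalIntegrable (fun t : ℝ => (1 - t ^ 2) ^ p) volume (-1) 0 := by
    simpa using (right_half.comp_sub_left 0).symm
  exact left_half.trans right_half

theorem hasDerivAt_integral_mul_exp {w : ℝ → ℝ} {a b : ℝ} (hw : IntervalIntegrable w volume a b)
    (x : ℝ) :
    HasDerivAt (fun y => ∫ t in a..b, w t * Real.exp (y * t))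
      (∫ t in a..b, t * w t * Real.exp (x * t)) x := by
  have htw : IntervalIntegrable (fun t => t * w t) volume a b := hw.continuousOn_mul (by fun_prop)
  have hint (y : ℝ) : IntervalIntegrable (fun t => w t * Real.exp (y * t)) volume a b :=
    hw.mul_continuousOn (by fun_prop)
  refine (intervalIntegral.hasDerivAt_integral_of_dominated_loc_of_deriv_le
    (F := fun y t => w t * Real.exp (y * t)) (F' := fun y t => t * w t * Real.exp (y * t))
    (bound := fun t => |t * w t| * Real.exp ((|x| + 1) * |t|))
    (Metric.ball_mem_nhds x one_pos) ?_ (hint x) ?_ ?_ ?_ ?_).2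
  · exact Eventually.of_forall fun y => (hint y).def'.aestronglyMeasurable
  · exact (htw.mul_continuousOn (g := fun t => Real.exp (x * t))
      (by fun_prop)).def'.aestronglyMeasurable
  · refine Eventually.of_forall fun t _ y hy => ?_
    have hy' : |y| ≤ |x| + 1 := by
      rw [Metric.mem_ball, Real.dist_eq] at hy
      linarith [abs_sub_abs_le_abs_sub y x]
    have hyt : y * t ≤ (|x| + 1) * |t| :=
      (le_abs_self _).trans ((abs_mul y t).le.trans (by gcongr))
    rw [norm_mul, Real.norm_eq_abs, Real.norm_eq_abs, Real.abs_exp]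
    gcongr
  · exact htw.abs.mul_continuousOn (by fun_prop)
  · refine Eventually.of_forall fun t _ y _ => ?_
    exact ((hasDerivAt_mul_const t).exp.const_mul (w t)).congr_deriv (by ring)

theorem integral_mul_one_sub_sq_rpow_mul {p : ℝ} (hp : -1 < p) {g g' : ℝ → ℝ}
    (hg : ContinuousOn g (Set.Icc (-1) 1)) (hgg' : ∀ t ∈ Set.Ioo (-1) 1, HasDerivAt g (g' t) t)
    (hg' : IntervalIntegrable g' volume (-1) 1) :
    2 * (p + 1) * ∫ t in (-1 : ℝ)..1, t * (1 - t ^ 2) ^ p * g t =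
      ∫ t in (-1 : ℝ)..1, (1 - t ^ 2) ^ (p + 1) * g' t := by
  have hp1 : 0 < p + 1 := by linarith
  have hderiv (t : ℝ) (ht : t ∈ Set.Ioo (-1 : ℝ) 1) :
      HasDerivAt (fun t : ℝ => (1 - t ^ 2) ^ (p + 1)) (-2 * (p + 1) * (t * (1 - t ^ 2) ^ p)) t := by
    have hne : 1 - t ^ 2 ≠ 0 := by nlinarith [ht.1, ht.2]
    refine (((hasDerivAt_pow 2 t).const_sub 1).rpow_const (Or.inl hne)).congr_deriv ?_
    rw [add_sub_cancel_right]
    push_cast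
    ring
  have hint : IntervalIntegrable (fun t : ℝ => t * (1 - t ^ 2) ^ p) volume (-1) 1 :=
    (intervalIntegrable_one_sub_sq_rpow hp).continuousOn_mul (by fun_prop)
  rw [integral_mul_deriv_eq_deriv_mul_of_hasDerivAt
    (Continuous.continuousOn (Continuous.rpow_const (by fun_prop) fun _ => Or.inr hp1.le))
    (by simpa using hg) (u' := fun t => -2 * (p + 1) * (t * (1 - t ^ 2) ^ p))
    (by simpa using hderiv) (by simpa using hgg') (hint.const_mul _) hg',
    ← intervalIntegral.integral_const_mul]
  simp only [one_pow, neg_sq, sub_self, Real.zero_rpow hp1.ne', zero_mul, zero_sub,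
    ← intervalIntegral.integral_neg]
  congr 1 with t
  ring

/-- Poisson's integral for the modified Bessel function `I_ν`, without its prefactor: the numerator
of `Hfun`. -/
noncomputable def besselIntegral (ν x : ℝ) : ℝ :=
  ∫ t in (-1 : ℝ)..1, (1 - t ^ 2) ^ (ν - 1 / 2) * Real.exp (x * t)

section

variable {ν : ℝ}

theorem intervalIntegrable_besselIntegrand (hν : -1 / 2 < ν) (x : ℝ) :
    IntervalIntegrable (fun t : ℝ => (1 - t ^ 2) ^ (ν - 1 / 2) * Real.exp (x * t))
      volume (-1) 1 :=
  (intervalIntegrable_one_sub_sq_rpow (by linarith)).mul_continuousOn (by fun_prop)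

theorem besselIntegral_pos (hν : -1 / 2 < ν) (x : ℝ) : 0 < besselIntegral ν x := by
  refine intervalIntegral_pos_of_pos_on (intervalIntegrable_besselIntegrand hν x)
    (fun t ht => ?_) (by norm_num)
  have : 0 < 1 - t ^ 2 := by nlinarith [ht.1, ht.2]
  positivity

theorem integral_mul_one_sub_sq_rpow_mul_exp_s8 (hν : -1 / 2 < ν) (x : ℝ) :
    ∫ t in (-1 : ℝ)..1, t * (1 - t ^ 2) ^ (ν - 1 / 2) * Real.exp (x * t) =
      x / (2 * ν + 1) * besselIntegral (ν + 1) x := by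
  have h := integral_mul_one_sub_sq_rpow_mul (p := ν - 1 / 2) (by linarith)
    (g := fun t => Real.exp (x * t)) (g' := fun t => x * Real.exp (x * t)) (by fun_prop)
    (fun t _ => ((hasDerivAt_id t).const_mul x).exp.congr_deriv (by simp [mul_comm]))
    (Continuous.intervalIntegrable (by fun_prop) _ _)
  simp only [mul_left_comm _ x, intervalIntegral.integral_const_mul] at h
  rw [← add_sub_right_comm, ← besselIntegral] at h
  have : 0 < 2 * ν + 1 := by linarith
  rw [div_mul_eq_mul_div, eq_div_iff this.ne']
  linear_combination h

theorem hasDerivAt_besselIntegral (hν : -1 / 2 < ν) (x : ℝ) :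
    HasDerivAt (besselIntegral ν) (x / (2 * ν + 1) * besselIntegral (ν + 1) x) x :=
  integral_mul_one_sub_sq_rpow_mul_exp_s8 hν x ▸
    hasDerivAt_integral_mul_exp (intervalIntegrable_one_sub_sq_rpow (by linarith)) x

theorem besselIntegral_sub_besselIntegral_add_one (hν : -1 / 2 < ν) (x : ℝ) :
    besselIntegral ν x - besselIntegral (ν + 1) x =
      ∫ t in (-1 : ℝ)..1, t * (1 - t ^ 2) ^ (ν - 1 / 2) * (t * Real.exp (x * t)) := by
  rw [besselIntegral, besselIntegral, ← intervalIntegral.integral_sub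
    (intervalIntegrable_besselIntegrand hν x)
    (intervalIntegrable_besselIntegrand (by linarith) x)]
  refine intervalIntegral.integral_congr fun t ht => ?_
  rw [Set.uIcc_of_le (by norm_num)] at ht
  have hnonneg : 0 ≤ 1 - t ^ 2 := by nlinarith [ht.1, ht.2]
  have hpow : (1 - t ^ 2) ^ (ν + 1 - 1 / 2) = (1 - t ^ 2) ^ (ν - 1 / 2) * (1 - t ^ 2) := by
    rw [add_sub_right_comm, Real.rpow_add_one' hnonneg (by linarith)]
  simp only [hpow]
  ring

theorem besselIntegral_recurrence (hν : -1 / 2 < ν) (x : ℝ) :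
    (2 * ν + 1) * besselIntegral ν x =
      2 * (ν + 1) * besselIntegral (ν + 1) x +
        x ^ 2 / (2 * ν + 3) * besselIntegral (ν + 2) x := by
  have hν1 : -1 / 2 < ν + 1 := by linarith
  have hparts := integral_mul_one_sub_sq_rpow_mul (p := ν - 1 / 2) (by linarith)
    (g := fun t => t * Real.exp (x * t))
    (g' := fun t => Real.exp (x * t) + x * (t * Real.exp (x * t))) (by fun_prop)
    (fun t _ => ((hasDerivAt_id t).mul ((hasDerivAt_id t).const_mul x).exp).congr_deriv
      (by simp only [id, one_mul]; ring))
    (Continuous.intervalIntegrable (by fun_prop) _ _)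
  have hmoment : IntervalIntegrable
      (fun t : ℝ => t * (1 - t ^ 2) ^ (ν + 1 - 1 / 2) * Real.exp (x * t)) volume (-1) 1 :=
    ((intervalIntegrable_one_sub_sq_rpow (by linarith)).continuousOn_mul
      (by fun_prop)).mul_continuousOn (by fun_prop)
  have hright : ∫ t in (-1 : ℝ)..1, (1 - t ^ 2) ^ (ν - 1 / 2 + 1) *
        (Real.exp (x * t) + x * (t * Real.exp (x * t))) =
      besselIntegral (ν + 1) x + x * (x / (2 * (ν + 1) + 1) * besselIntegral (ν + 1 + 1) x) := by
    rw [← integral_mul_one_sub_sq_rpow_mul_exp_s8 hν1, besselIntegral,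
      ← intervalIntegral.integral_const_mul, ← intervalIntegral.integral_add
      (intervalIntegrable_besselIntegrand hν1 x) (hmoment.const_mul x), ← add_sub_right_comm]
    congr 1 with t
    ring
  rw [← besselIntegral_sub_besselIntegral_add_one hν, hright,
    show 2 * (ν + 1) + 1 = 2 * ν + 3 by ring, show ν + 1 + 1 = ν + 2 by ring] at hparts
  linear_combination hparts

theorem besselIntegral_add_one_zero (hν : -1 / 2 < ν) :
    besselIntegral (ν + 1) 0 = (2 * ν + 1) / (2 * (ν + 1)) * besselIntegral ν 0 := by
  have h := besselIntegral_recurrence hν 0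
  have : ν + 1 ≠ 0 := by linarith
  field_simp
  linear_combination -h

theorem Hfun_eq_besselIntegral_div (ν x : ℝ) :
    Hfun ν x = besselIntegral ν x / besselIntegral ν 0 := by
  simp [Hfun, besselIntegral]

theorem Hfun_pos (hν : -1 / 2 < ν) (x : ℝ) : 0 < Hfun ν x := by
  rw [Hfun_eq_besselIntegral_div]
  exact div_pos (besselIntegral_pos hν x) (besselIntegral_pos hν 0)

theorem Hfun_zero (hν : -1 / 2 < ν) : Hfun ν 0 = 1 := by
  rw [Hfun_eq_besselIntegral_div, div_self (besselIntegral_pos hν 0).ne']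

theorem hasDerivAt_Hfun (hν : -1 / 2 < ν) (x : ℝ) :
    HasDerivAt (Hfun ν) (x / (2 * (ν + 1)) * Hfun (ν + 1) x) x := by
  have h := (hasDerivAt_besselIntegral hν x).div_const (besselIntegral ν 0)
  simp only [← Hfun_eq_besselIntegral_div] at h
  refine h.congr_deriv ?_
  rw [Hfun_eq_besselIntegral_div, besselIntegral_add_one_zero hν]
  have : 0 < 2 * ν + 1 := by linarith
  have : 0 < ν + 1 := by linarith
  have := besselIntegral_pos hν 0
  field_simp

theorem Hfun_recurrence (hν : -1 / 2 < ν) (x : ℝ) :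
    Hfun ν x = Hfun (ν + 1) x + x ^ 2 / (4 * (ν + 1) * (ν + 2)) * Hfun (ν + 2) x := by
  have h := besselIntegral_recurrence hν x
  have hν1 : -1 / 2 < ν + 1 := by linarith
  have h2 : besselIntegral (ν + 2) 0 =
      (2 * (ν + 1) + 1) / (2 * (ν + 1 + 1)) *
        ((2 * ν + 1) / (2 * (ν + 1)) * besselIntegral ν 0) := by
    rw [show ν + 2 = ν + 1 + 1 by ring, besselIntegral_add_one_zero hν1,
      besselIntegral_add_one_zero hν]
  simp only [Hfun_eq_besselIntegral_div, h2, besselIntegral_add_one_zero hν]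
  have : 0 < 2 * ν + 1 := by linarith
  have : 0 < 2 * ν + 3 := by linarith
  have : 0 < ν + 1 := by linarith
  have : 0 < ν + 2 := by linarith
  have := besselIntegral_pos hν 0
  rw [show 2 * (ν + 1) + 1 = 2 * ν + 3 by ring, show ν + 1 + 1 = ν + 2 by ring]
  field_simp at h ⊢
  linear_combination 4 * h

theorem Hfun_add_one_le (hν : -1 / 2 < ν) (x : ℝ) : Hfun (ν + 1) x ≤ Hfun ν x := by
  have : 0 < ν + 1 := by linarith
  have : 0 < ν + 2 := by linarith
  have := Hfun_pos (show -1 / 2 < ν + 2 by linarith) x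
  rw [Hfun_recurrence hν x]
  exact le_add_of_nonneg_right (by positivity)

theorem one_sub_mul_Hfun_le (hν : -1 / 2 < ν) (x : ℝ) :
    (1 - x ^ 2 / (4 * (ν + 1) * (ν + 2))) * Hfun ν x ≤ Hfun (ν + 1) x := by
  have hν1 : 0 < ν + 1 := by linarith
  have hν2 : 0 < ν + 2 := by linarith
  have hle : Hfun (ν + 2) x ≤ Hfun ν x := by
    rw [show ν + 2 = ν + 1 + 1 by ring]
    exact (Hfun_add_one_le (by linarith) x).trans (Hfun_add_one_le hν x)
  have hw : 0 ≤ x ^ 2 / (4 * (ν + 1) * (ν + 2)) := by positivity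
  linarith [Hfun_recurrence hν x, mul_le_mul_of_nonneg_left hle hw]

theorem Hfun_add_one_le_mul (hν : -1 / 2 < ν) (x : ℝ) :
    Hfun (ν + 1) x ≤
      (1 - x ^ 2 / (4 * (ν + 1) * (ν + 2)) + 2 * (x ^ 2 / (4 * (ν + 1) * (ν + 2))) ^ 2) *
        Hfun ν x := by
  have hν1 : 0 < ν + 1 := by linarith
  have hν2 : 0 < ν + 2 := by linarith
  set w := x ^ 2 / (4 * (ν + 1) * (ν + 2)) with hw
  have hw0 : 0 ≤ w := by positivity
  have hwle : x ^ 2 / (4 * (ν + 1 + 1) * (ν + 1 + 2)) ≤ w := by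
    rw [hw]
    gcongr <;> linarith
  have hlower := one_sub_mul_Hfun_le (show -1 / 2 < ν + 1 by linarith) x
  rw [show ν + 1 + 1 = ν + 2 by ring] at hlower hwle
  have hpos := Hfun_pos (show -1 / 2 < ν + 1 by linarith) x
  have hle := mul_le_mul_of_nonneg_left (Hfun_add_one_le hν x) hw0
  have htwo : (1 - 2 * w) * Hfun ν x ≤ Hfun (ν + 2) x := by
    linarith [mul_le_mul_of_nonneg_right hwle hpos.le, one_sub_mul_Hfun_le hν x]
  linarith [Hfun_recurrence hν x, mul_le_mul_of_nonneg_left htwo hw0]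

theorem abs_Hfun_add_one_div_sub_le (hν : -1 / 2 < ν) (x : ℝ) :
    |Hfun (ν + 1) x / Hfun ν x - (1 - x ^ 2 / (4 * (ν + 1) * (ν + 2)))| ≤
      2 * (x ^ 2 / (4 * (ν + 1) * (ν + 2))) ^ 2 := by
  have hpos := Hfun_pos hν x
  have hlower := (le_div_iff₀ hpos).2 (one_sub_mul_Hfun_le hν x)
  have hupper := (div_le_iff₀ hpos).2 (Hfun_add_one_le_mul hν x)
  rw [abs_of_nonneg (sub_nonneg.2 hlower)]
  linarith

theorem abs_log_Hfun_sub_le (hν : -1 / 2 < ν) (x : ℝ) :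
    |Real.log (Hfun ν x) -
        (x ^ 2 / (4 * (ν + 1)) - x ^ 4 / (32 * (ν + 1) ^ 2 * (ν + 2)))| ≤
      x ^ 6 / (16 * (ν + 1) ^ 3 * (ν + 2) ^ 2) := by
  have hν1 : 0 < ν + 1 := by linarith
  have hν2 : 0 < ν + 2 := by linarith
  let remainder (y : ℝ) : ℝ :=
    Real.log (Hfun ν y) - (y ^ 2 / (4 * (ν + 1)) - y ^ 4 / (32 * (ν + 1) ^ 2 * (ν + 2)))
  have hderiv (y : ℝ) : HasDerivAt remainder (y / (2 * (ν + 1)) *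
      (Hfun (ν + 1) y / Hfun ν y - (1 - y ^ 2 / (4 * (ν + 1) * (ν + 2))))) y := by
    have hpos := Hfun_pos hν y
    refine (((hasDerivAt_Hfun hν y).log hpos.ne').sub
      (((hasDerivAt_pow 2 y).div_const _).sub ((hasDerivAt_pow 4 y).div_const _))).congr_deriv ?_
    push_cast
    field_simp
    ring
  have hbound (y : ℝ) (hy : y ∈ Set.Icc (-|x|) |x|) :
      ‖y / (2 * (ν + 1)) *
          (Hfun (ν + 1) y / Hfun ν y - (1 - y ^ 2 / (4 * (ν + 1) * (ν + 2))))‖ ≤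
        |x| / (2 * (ν + 1)) * (2 * (|x| ^ 2 / (4 * (ν + 1) * (ν + 2))) ^ 2) := by
    have hyx : |y| ≤ |x| := abs_le.2 hy
    rw [norm_mul, Real.norm_eq_abs, Real.norm_eq_abs, abs_div,
      abs_of_pos (by positivity : 0 < 2 * (ν + 1))]
    refine mul_le_mul (by gcongr) ((abs_Hfun_add_one_div_sub_le hν y).trans ?_) (abs_nonneg _)
      (by positivity)
    rw [← sq_abs y]
    gcongr
  have hmean := (convex_Icc (-|x|) |x|).norm_image_sub_le_of_norm_hasDerivWithin_le
    (fun y _ => (hderiv y).hasDerivWithinAt) hbound (x := 0) (y := x) (by simp)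
    ⟨neg_abs_le x, le_abs_self x⟩
  have hzero : remainder 0 = 0 := by simp [remainder, Hfun_zero hν]
  rw [hzero, sub_zero, sub_zero, Real.norm_eq_abs] at hmean
  refine hmean.trans_eq ?_
  rw [Real.norm_eq_abs, ← Even.pow_abs (n := 6) (by decide) x]
  field_simp
  norm_num

theorem abs_inv_pow_three_sub_le (hν : 0 < ν) :
    |1 / ν ^ 3 - 1 / ((ν + 1) ^ 2 * (ν + 2))| ≤ 4 / ν ^ 4 := by
  have hdiff : 1 / ν ^ 3 - 1 / ((ν + 1) ^ 2 * (ν + 2)) =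
      (4 * ν ^ 2 + 5 * ν + 2) / (ν ^ 3 * ((ν + 1) ^ 2 * (ν + 2))) := by
    field_simp
    ring
  rw [hdiff, abs_of_pos (by positivity), div_le_div_iff₀ (by positivity) (by positivity)]
  linarith [show 0 ≤ ν ^ 3 * (11 * ν ^ 2 + 18 * ν + 8) by positivity]

theorem abs_log_Hfun_sub_le_of_pos (hν : 0 < ν) (x : ℝ) :
    |Real.log (Hfun ν x) - (x ^ 2 / (4 * (ν + 1)) - x ^ 4 / (32 * ν ^ 3))| ≤
      x ^ 6 / ν ^ 5 + x ^ 4 / (8 * ν ^ 4) := by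
  have hsextic : x ^ 6 / (16 * (ν + 1) ^ 3 * (ν + 2) ^ 2) ≤ x ^ 6 / ν ^ 5 := by
    gcongr
    calc ν ^ 5 = 1 * ν ^ 3 * ν ^ 2 := by ring
      _ ≤ 16 * (ν + 1) ^ 3 * (ν + 2) ^ 2 := by gcongr <;> linarith
  have hquartic : |x ^ 4 / 32 * (1 / ν ^ 3 - 1 / ((ν + 1) ^ 2 * (ν + 2)))| ≤
      x ^ 4 / (8 * ν ^ 4) := by
    rw [abs_mul, abs_of_nonneg (by positivity)]
    calc x ^ 4 / 32 * |1 / ν ^ 3 - 1 / ((ν + 1) ^ 2 * (ν + 2))| ≤ x ^ 4 / 32 * (4 / ν ^ 4) := by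
          gcongr
          exact abs_inv_pow_three_sub_le hν
      _ = x ^ 4 / (8 * ν ^ 4) := by ring
  calc |Real.log (Hfun ν x) - (x ^ 2 / (4 * (ν + 1)) - x ^ 4 / (32 * ν ^ 3))|
      = |(Real.log (Hfun ν x) -
            (x ^ 2 / (4 * (ν + 1)) - x ^ 4 / (32 * (ν + 1) ^ 2 * (ν + 2)))) +
          x ^ 4 / 32 * (1 / ν ^ 3 - 1 / ((ν + 1) ^ 2 * (ν + 2)))| := by
        congr 1
        field_simp
        ring
    _ ≤ x ^ 6 / ν ^ 5 + x ^ 4 / (8 * ν ^ 4) :=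
      (abs_add_le _ _).trans
        (add_le_add ((abs_log_Hfun_sub_le (by linarith) x).trans hsextic) hquartic)

theorem abs_rescaled_log_Hfun_sub_le {a b ξ t K : ℝ} (hν : 0 < ν) (ha : a ≠ 0) (ht : |t| ≤ K) :
    |a ^ 2 * Real.log (Hfun ν (b * t / a)) -
        (b ^ 2 * t ^ 2 / (4 * ν) - b ^ 4 * t ^ 4 / (32 * ν ^ 3 * a ^ 2) - ξ ^ 2 * t ^ 2 / 4)| ≤
      K ^ 6 * (b ^ 6 / (a ^ 4 * ν ^ 5)) + K ^ 4 / 8 * (b ^ 4 / (a ^ 2 * ν ^ 4)) +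
        K ^ 2 / 4 * |ξ ^ 2 - b ^ 2 / (ν * (ν + 1))| := by
  have ht6 : t ^ 6 ≤ K ^ 6 := by rw [← Even.pow_abs (n := 6) (by decide)]; gcongr
  have ht4 : t ^ 4 ≤ K ^ 4 := by rw [← Even.pow_abs (n := 4) (by decide)]; gcongr
  have ht2 : t ^ 2 ≤ K ^ 2 := by rw [← sq_abs]; gcongr
  set x := b * t / a with hx
  calc |a ^ 2 * Real.log (Hfun ν x) -
        (b ^ 2 * t ^ 2 / (4 * ν) - b ^ 4 * t ^ 4 / (32 * ν ^ 3 * a ^ 2) - ξ ^ 2 * t ^ 2 / 4)|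
      = |a ^ 2 * (Real.log (Hfun ν x) - (x ^ 2 / (4 * (ν + 1)) - x ^ 4 / (32 * ν ^ 3))) +
          t ^ 2 / 4 * (ξ ^ 2 - b ^ 2 / (ν * (ν + 1)))| := by
        congr 1
        rw [hx]
        field_simp
        ring
    _ ≤ a ^ 2 * (x ^ 6 / ν ^ 5 + x ^ 4 / (8 * ν ^ 4)) +
          t ^ 2 / 4 * |ξ ^ 2 - b ^ 2 / (ν * (ν + 1))| := by
        refine (abs_add_le _ _).trans (add_le_add ?_ ?_)
        · rw [abs_mul, abs_of_nonneg (sq_nonneg a)]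
          gcongr
          exact abs_log_Hfun_sub_le_of_pos hν x
        · rw [abs_mul, abs_of_nonneg (by positivity)]
    _ = t ^ 6 * (b ^ 6 / (a ^ 4 * ν ^ 5)) + t ^ 4 / 8 * (b ^ 4 / (a ^ 2 * ν ^ 4)) +
          t ^ 2 / 4 * |ξ ^ 2 - b ^ 2 / (ν * (ν + 1))| := by
        rw [hx]
        field_simp
    _ ≤ K ^ 6 * (b ^ 6 / (a ^ 4 * ν ^ 5)) + K ^ 4 / 8 * (b ^ 4 / (a ^ 2 * ν ^ 4)) +
          K ^ 2 / 4 * |ξ ^ 2 - b ^ 2 / (ν * (ν + 1))| := by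
        gcongr

end

section

variable {ι : Type*} {l : Filter ι} {ν a b : ι → ℝ} {ξ : ℝ}

theorem tendsto_sq_div_mul_add_one (hν : Tendsto ν l atTop)
    (hbν : Tendsto (fun n => b n / ν n) l (nhds ξ)) :
    Tendsto (fun n => b n ^ 2 / (ν n * (ν n + 1))) l (nhds (ξ ^ 2)) := by
  have h := (hbν.pow 2).div ((tendsto_inv_atTop_zero.comp hν).const_add 1) (by norm_num)
  rw [add_zero, div_one] at h
  refine h.congr' ?_
  filter_upwards [hν.eventually_gt_atTop 0] with n hn
  simp only [Pi.div_apply, Function.comp_apply]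
  field_simp

theorem tendsto_pow_four_div_zero (hν : Tendsto ν l atTop)
    (hbν : Tendsto (fun n => b n / ν n) l (nhds ξ))
    (hsmall : Tendsto (fun n => b n ^ 6 / (a n ^ 4 * ν n ^ 5)) l (nhds 0)) :
    Tendsto (fun n => b n ^ 4 / (a n ^ 2 * ν n ^ 4)) l (nhds 0) := by
  have hsquare : Tendsto (fun n => (b n ^ 4 / (a n ^ 2 * ν n ^ 4)) ^ 2) l (nhds 0) := by
    have h := hsmall.mul ((hbν.pow 2).mul (tendsto_inv_atTop_zero.comp hν))
    rw [zero_mul] at h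
    refine h.congr fun n => ?_
    simp only [Function.comp_apply]
    ring
  exact (tendsto_zero_iff_abs_tendsto_zero _).2
    (by simpa [Real.sqrt_sq_eq_abs, Function.comp_def] using hsquare.sqrt)

theorem log_Hfun_expansion_general (hν : Tendsto ν l atTop) (ha : ∀ᶠ n in l, a n ≠ 0)
    (hbν : Tendsto (fun n => b n / ν n) l (nhds ξ))
    (hsmall : Tendsto (fun n => b n ^ 6 / (a n ^ 4 * ν n ^ 5)) l (nhds 0)) (K : ℝ) :
    ∀ ε > (0 : ℝ), ∀ᶠ n in l, ∀ t ∈ Set.Icc (-K) K,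
      |a n ^ 2 * Real.log (Hfun (ν n) (b n * t / a n)) -
          (b n ^ 2 * t ^ 2 / (4 * ν n) - b n ^ 4 * t ^ 4 / (32 * ν n ^ 3 * a n ^ 2) -
            ξ ^ 2 * t ^ 2 / 4)| < ε := by
  intro ε hε
  have hcorrection : Tendsto (fun n => |ξ ^ 2 - b n ^ 2 / (ν n * (ν n + 1))|) l (nhds 0) := by
    have h := ((tendsto_sq_div_mul_add_one hν hbν).const_sub (ξ ^ 2)).abs
    rwa [sub_self, abs_zero] at h
  have herror : Tendsto (fun n => K ^ 6 * (b n ^ 6 / (a n ^ 4 * ν n ^ 5)) +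
      K ^ 4 / 8 * (b n ^ 4 / (a n ^ 2 * ν n ^ 4)) +
      K ^ 2 / 4 * |ξ ^ 2 - b n ^ 2 / (ν n * (ν n + 1))|) l (nhds 0) := by
    simpa using ((hsmall.const_mul (K ^ 6)).add
      ((tendsto_pow_four_div_zero hν hbν hsmall).const_mul (K ^ 4 / 8))).add
      (hcorrection.const_mul (K ^ 2 / 4))
  filter_upwards [herror.eventually_lt_const hε, hν.eventually_gt_atTop 0, ha]
    with n herror_lt hν_pos ha_ne t ht
  exact (abs_rescaled_log_Hfun_sub_le hν_pos ha_ne (abs_le.2 ht)).trans_lt herror_lt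

end

theorem log_Hfun_expansion (ν a b : ℕ → ℝ)
    (hν0 : ∀ n, 0 < ν n) (hν : Tendsto ν atTop atTop)
    (ha0 : ∀ n, 0 < a n) (hb0 : ∀ n, 0 < b n)
    (hliminf : ∃ δ : ℝ, 0 < δ ∧ ∀ᶠ n in atTop, δ ≤ a n)
    (ξ : ℝ) (hξ : 0 ≤ ξ) (hbν : Tendsto (fun n => b n / ν n) atTop (nhds ξ))
    (hsmall : Tendsto (fun n => (b n) ^ 6 / ((a n) ^ 4 * (ν n) ^ 5)) atTop (nhds 0)) :
    ∀ K > (0 : ℝ), ∀ ε > (0 : ℝ), ∀ᶠ n in atTop, ∀ t ∈ Set.Icc (-K) K,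
      |(a n) ^ 2 * Real.log (Hfun (ν n) (b n * t / a n)) -
          ((b n) ^ 2 * t ^ 2 / (4 * ν n) -
            (b n) ^ 4 * t ^ 4 / (32 * (ν n) ^ 3 * (a n) ^ 2) -
            ξ ^ 2 * t ^ 2 / 4)| < ε :=
  fun K _ => log_Hfun_expansion_general hν (.of_forall fun n => (ha0 n).ne') hbν hsmall K
end
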